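/- Let μ, k, c be nonzero real numbers and b ∈ ℝ with c² < −4(k² + b k); set κ = √(−(k²+bk) − c²/4). Then there exist functions s^h, β^h, s^v, β^v : (0,∞) → ℝ, each smooth, with lim_{a→0⁺} s^h(a) = lim_{a→0⁺} s^v(a) = 0, with s^h and s^v not identically zero, and with s^h(a) = O(a^κ) and s^v(a) = O(a^κ) as a → 0⁺, such that the pair (u, φ) defined as follows is a weak solution of the Ishimori system on ℝ × ℝ²: for |x| ≠ |y| set a = √|x² − y²| and α = (1/2) log(|x+y|/|x−y|), let (s,β) = (s^h, β^h) if |x| > |y| and (s,β) = (s^v, β^v) if |x| < |y|, and define u(t,x,y) = ( cos s(a), sin s(a) cos(β(a) + kα + μt), sin s(a) sin(β(a) + kα + μt) ) and φ(t,x,y) = cα + b log a − ∫₀^a (2k/a′)(1 − cos s(a′)) da′; and set u(t,x,y) = (1,0,0) when |x| = |y|. Moreover u is continuous on ℝ × ℝ² with |u(t,x,y) − (1,0,0)| = O(|x² − y²|^{κ/2}) locally uniformly as (x,y) approaches the cross {|x| = |y|}, and u and φ are smooth on ℝ × {(x,y) : |x| ≠ |y|} and satisfy the Ishimori system pointwise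 there. -/

import Mathlib

open Set Filter MeasureTheory Asymptotics

/-- Euclidean dot product on `ℝ³`. -/
noncomputable def dot3 (v w : Fin 3 → ℝ) : ℝ := v 0 * w 0 + v 1 * w 1 + v 2 * w 2

/-- Cross product on `ℝ³`. -/
noncomputable def cross3 (v w : Fin 3 → ℝ) : Fin 3 → ℝ :=
  ![v 1 * w 2 - v 2 * w 1, v 2 * w 0 - v 0 * w 2, v 0 * w 1 - v 1 * w 0]

/-- The north pole `e₀ = (1,0,0)`. -/
noncomputable def e0 : Fin 3 → ℝ := ![1, 0, 0]

/-- Directional (partial) derivative of a vector-valued map on `ℝ×ℝ²`. -/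
noncomputable def pdV (v : ℝ × ℝ × ℝ) (f : ℝ × ℝ × ℝ → Fin 3 → ℝ)
    (p : ℝ × ℝ × ℝ) : Fin 3 → ℝ := fderiv ℝ f p v

/-- Directional (partial) derivative of a scalar map on `ℝ×ℝ²`. -/
noncomputable def pdR (v : ℝ × ℝ × ℝ) (f : ℝ × ℝ × ℝ → ℝ) (p : ℝ × ℝ × ℝ) : ℝ :=
  fderiv ℝ f p v

/-- The coordinate directions `∂ₜ, ∂ₓ, ∂_y` on `ℝ×ℝ²`. -/
def et : ℝ × ℝ × ℝ := (1, 0, 0)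
def ex : ℝ × ℝ × ℝ := (0, 1, 0)
def ey : ℝ × ℝ × ℝ := (0, 0, 1)

/-- `(u,φ)` is a weak solution of the hyperbolic-hyperbolic Ishimori system on
`I × ℝ²`: the local integrability requirements together with the two integral
identities against all test functions supported in time in `I`. -/
def IsWeakIshimori (I : Set ℝ) (u : ℝ × ℝ × ℝ → Fin 3 → ℝ) (φ : ℝ × ℝ × ℝ → ℝ) : Prop :=
  LocallyIntegrableOn u {p : ℝ × ℝ × ℝ | p.1 ∈ I} volume ∧
  LocallyIntegrableOn (pdV ex u) {p : ℝ × ℝ × ℝ | p.1 ∈ I} volume ∧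
  LocallyIntegrableOn (pdV ey u) {p : ℝ × ℝ × ℝ | p.1 ∈ I} volume ∧
  LocallyIntegrableOn φ {p : ℝ × ℝ × ℝ | p.1 ∈ I} volume ∧
  LocallyIntegrableOn (fun p => φ p • pdV ex u p) {p : ℝ × ℝ × ℝ | p.1 ∈ I} volume ∧
  LocallyIntegrableOn (fun p => φ p • pdV ey u p) {p : ℝ × ℝ × ℝ | p.1 ∈ I} volume ∧
  LocallyIntegrableOn (fun p => dot3 (u p) (cross3 (pdV ex u p) (pdV ey u p)))
    {p : ℝ × ℝ × ℝ | p.1 ∈ I} volume ∧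
  (∀ ψ : ℝ × ℝ × ℝ → Fin 3 → ℝ, ContDiff ℝ (⊤ : ℕ∞) ψ → HasCompactSupport ψ →
    (∀ p : ℝ × ℝ × ℝ, p.1 ∉ I → ψ p = 0) →
    ∫ p : ℝ × ℝ × ℝ,
      (dot3 (cross3 (u p) (pdV ey u p)) (pdV ey ψ p)
        - dot3 (cross3 (u p) (pdV ex u p)) (pdV ex ψ p)
        + dot3 (u p) (pdV et ψ p)
        - φ p * (dot3 (pdV ey u p) (pdV ex ψ p) - dot3 (pdV ex u p) (pdV ey ψ p))) = 0) ∧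
  (∀ ρ : ℝ × ℝ × ℝ → ℝ, ContDiff ℝ (⊤ : ℕ∞) ρ → HasCompactSupport ρ →
    (∀ p : ℝ × ℝ × ℝ, p.1 ∉ I → ρ p = 0) →
    ∫ p : ℝ × ℝ × ℝ,
      ((pdR ex (pdR ex ρ) p - pdR ey (pdR ey ρ) p) * φ p
        + 2 * ρ p * dot3 (u p) (cross3 (pdV ex u p) (pdV ey u p))) = 0)

/-- The hyperbolic radial coordinate `a = √|x² − y²|`. -/
noncomputable def aOf (x y : ℝ) : ℝ := Real.sqrt |x ^ 2 - y ^ 2|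

/-- The hyperbolic angular coordinate `α = (1/2) log(|x+y|/|x−y|)`. -/
noncomputable def alphaOf (x y : ℝ) : ℝ := 1 / 2 * Real.log (|x + y| / |x - y|)

/-- The equivariant spin in terms of radial profiles `(s,β)` in the horizontal
(`|x| > |y|`) and vertical (`|x| < |y|`) cones; the rotation center `(1,0,0)` on the
cross `|x| = |y|`. -/
noncomputable def uDef (μ k : ℝ) (sh βh sv βv : ℝ → ℝ) (p : ℝ × ℝ × ℝ) : Fin 3 → ℝ :=
  if |p.2.1| > |p.2.2| then
    ![Real.cos (sh (aOf p.2.1 p.2.2)),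
      Real.sin (sh (aOf p.2.1 p.2.2)) *
        Real.cos (βh (aOf p.2.1 p.2.2) + k * alphaOf p.2.1 p.2.2 + μ * p.1),
      Real.sin (sh (aOf p.2.1 p.2.2)) *
        Real.sin (βh (aOf p.2.1 p.2.2) + k * alphaOf p.2.1 p.2.2 + μ * p.1)]
  else if |p.2.1| < |p.2.2| then
    ![Real.cos (sv (aOf p.2.1 p.2.2)),
      Real.sin (sv (aOf p.2.1 p.2.2)) *
        Real.cos (βv (aOf p.2.1 p.2.2) + k * alphaOf p.2.1 p.2.2 + μ * p.1),
      Real.sin (sv (aOf p.2.1 p.2.2)) *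
        Real.sin (βv (aOf p.2.1 p.2.2) + k * alphaOf p.2.1 p.2.2 + μ * p.1)]
  else ![1, 0, 0]

/-- The equivariant field `φ = cα + b log a − ∫₀^a (2k/a′)(1 − cos s(a′)) da′`. -/
noncomputable def φDef (k c b : ℝ) (sh sv : ℝ → ℝ) (p : ℝ × ℝ × ℝ) : ℝ :=
  if |p.2.1| > |p.2.2| then
    c * alphaOf p.2.1 p.2.2 + b * Real.log (aOf p.2.1 p.2.2)
      - ∫ a' in (0:ℝ)..aOf p.2.1 p.2.2, 2 * k / a' * (1 - Real.cos (sh a'))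
  else if |p.2.1| < |p.2.2| then
    c * alphaOf p.2.1 p.2.2 + b * Real.log (aOf p.2.1 p.2.2)
      - ∫ a' in (0:ℝ)..aOf p.2.1 p.2.2, 2 * k / a' * (1 - Real.cos (sv a'))
  else 0

/-!
In the coordinates `τ = log a` and `α` of each of the two cones, an equivariant spin
`(cos S, sin S cos (β + kα + μt), sin S sin (β + kα + μt))` solves the Ishimori system as soon as
`β' = -c / (1 + cos S)`, an integrated form of the tangential part of the equation, and
`S'' = (ω(S) + ν e^{2τ}) sin S` with `ν = ±μ`. At `S = 0` the linearisation of the right-hand side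
as `τ → -∞` is `κ² S`, with `κ² = -(k² + bk) - c²/4 > 0`. Duhamel's formula from `-∞` and a
contraction give a solution asymptotic to a multiple of `e^{κτ} = a^κ` as `τ → -∞`; it is global
because the centrifugal term `c² / (1 + cos S)` keeps `S` away from `±π`.

Since `a² = |ξ₁ ξ₋₁|` with `ξ_σ = x + σy`, both `u - e₀` and the bounded part of `φ` are
`O(|ξ₁ ξ₋₁|^{κ/2})` at the cross, and every derivative along a null direction costs one power of
the corresponding null coordinate only. The products that occur in the weak formulation are thus
locally integrable, and integrating by parts along null directions produces no boundary terms on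
the cross, so that the pointwise equations off the cross imply the weak ones. The linear part
`cα + b log a` of `φ` is a sum of functions of one null coordinate each, and solves the wave
equation across the cross.
-/

section Duhamel

variable {γ δ K T τ : ℝ} {g : ℝ → ℝ}

/-- Duhamel's formula from `-∞`: the solution of `W' = -γ W + g` which vanishes at `-∞`,
for a source `g` decaying exponentially there. -/
noncomputable def duhamel (γ : ℝ) (g : ℝ → ℝ) (τ : ℝ) : ℝ :=
  ∫ ρ in Iic τ, Real.exp (γ * (ρ - τ)) * g ρ

theorem duhamel_eq_exp_mul (γ : ℝ) (g : ℝ → ℝ) (τ : ℝ) :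
    duhamel γ g τ = Real.exp (-γ * τ) * ∫ ρ in Iic τ, Real.exp (γ * ρ) * g ρ := by
  rw [duhamel, ← integral_const_mul]
  congr 1 with ρ
  rw [← mul_assoc, ← Real.exp_add]
  ring_nf

theorem integrableOn_exp_mul_of_abs_le (hγ : 0 < γ + δ) (hg : Continuous g)
    (hK : ∀ ρ ≤ T, |g ρ| ≤ K * Real.exp (δ * ρ)) (τ : ℝ) :
    IntegrableOn (fun ρ => Real.exp (γ * ρ) * g ρ) (Iic τ) := by
  have hcont : Continuous fun ρ => Real.exp (γ * ρ) * g ρ := by fun_prop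
  have htail : IntegrableOn (fun ρ => Real.exp (γ * ρ) * g ρ) (Iic T) := by
    refine ((integrableOn_exp_mul_Iic hγ T).const_mul K).mono' hcont.aestronglyMeasurable ?_
    filter_upwards [ae_restrict_mem measurableSet_Iic] with ρ hρ
    calc ‖Real.exp (γ * ρ) * g ρ‖ = Real.exp (γ * ρ) * |g ρ| := by
          rw [norm_mul, Real.norm_eq_abs, Real.norm_eq_abs, Real.abs_exp]
      _ ≤ Real.exp (γ * ρ) * (K * Real.exp (δ * ρ)) := by gcongr; exact hK ρ hρ
      _ = K * Real.exp ((γ + δ) * ρ) := by rw [add_mul, Real.exp_add]; ring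
  refine (htail.union (hcont.continuousOn.integrableOn_compact
    (isCompact_Icc (a := T) (b := τ)))).mono_set fun ρ hρ => ?_
  exact (le_total ρ T).imp id fun h => ⟨h, hρ⟩

theorem hasDerivAt_duhamel (hγ : 0 < γ + δ) (hg : Continuous g)
    (hK : ∀ ρ ≤ T, |g ρ| ≤ K * Real.exp (δ * ρ)) (τ : ℝ) :
    HasDerivAt (duhamel γ g) (-γ * duhamel γ g τ + g τ) τ := by
  have hint := integrableOn_exp_mul_of_abs_le hγ hg hK
  have hprim : HasDerivAt (fun σ => ∫ ρ in Iic σ, Real.exp (γ * ρ) * g ρ)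
      (Real.exp (γ * τ) * g τ) τ := by
    have hsplit : (fun σ => ∫ ρ in Iic σ, Real.exp (γ * ρ) * g ρ) = fun σ =>
        (∫ ρ in Iic 0, Real.exp (γ * ρ) * g ρ) + ∫ ρ in (0 : ℝ)..σ, Real.exp (γ * ρ) * g ρ := by
      ext σ
      rw [← intervalIntegral.integral_Iic_sub_Iic (hint 0) (hint σ), add_sub_cancel]
    rw [hsplit]
    have hcont : Continuous fun ρ => Real.exp (γ * ρ) * g ρ := by fun_prop
    exact (hcont.integral_hasStrictDerivAt 0 τ).hasDerivAt.const_add _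
  have hexp : HasDerivAt (fun σ => Real.exp (-γ * σ)) (Real.exp (-γ * τ) * (-γ)) τ := by
    simpa using ((hasDerivAt_id τ).const_mul (-γ)).exp
  rw [funext (duhamel_eq_exp_mul γ g)]
  refine (hexp.mul hprim).congr_deriv ?_
  have hcancel : Real.exp (-γ * τ) * Real.exp (γ * τ) = 1 := by rw [← Real.exp_add]; simp
  linear_combination g τ * hcancel

theorem continuous_duhamel (hγ : 0 < γ + δ) (hg : Continuous g)
    (hK : ∀ ρ ≤ T, |g ρ| ≤ K * Real.exp (δ * ρ)) : Continuous (duhamel γ g) :=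
  continuous_iff_continuousAt.2 fun τ => (hasDerivAt_duhamel hγ hg hK τ).continuousAt

theorem abs_duhamel_le (hγ : 0 < γ + δ) (hK : ∀ ρ ≤ T, |g ρ| ≤ K * Real.exp (δ * ρ))
    (hτ : τ ≤ T) : |duhamel γ g τ| ≤ K / (γ + δ) * Real.exp (δ * τ) := by
  have hbound : ∀ᵐ ρ ∂volume.restrict (Iic τ), ‖Real.exp (γ * (ρ - τ)) * g ρ‖ ≤
      K * Real.exp (-γ * τ) * Real.exp ((γ + δ) * ρ) := by
    filter_upwards [ae_restrict_mem measurableSet_Iic] with ρ hρ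
    calc ‖Real.exp (γ * (ρ - τ)) * g ρ‖ = Real.exp (γ * (ρ - τ)) * |g ρ| := by
          rw [norm_mul, Real.norm_eq_abs, Real.norm_eq_abs, Real.abs_exp]
      _ ≤ Real.exp (γ * (ρ - τ)) * (K * Real.exp (δ * ρ)) := by
          gcongr; exact hK ρ (le_trans hρ hτ)
      _ = K * (Real.exp (γ * (ρ - τ)) * Real.exp (δ * ρ)) := by ring
      _ = K * Real.exp (-γ * τ) * Real.exp ((γ + δ) * ρ) := by
          rw [mul_assoc, ← Real.exp_add, ← Real.exp_add]; ring_nf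
  refine (norm_integral_le_of_norm_le ((integrableOn_exp_mul_Iic hγ τ).const_mul _)
    hbound).trans_eq ?_
  rw [integral_const_mul, integral_exp_mul_Iic hγ]
  have hexp : Real.exp (δ * τ) = Real.exp (-γ * τ) * Real.exp ((γ + δ) * τ) := by
    rw [← Real.exp_add]; ring_nf
  rw [hexp]
  ring

theorem duhamel_sub {δ' K' T' : ℝ} {g' : ℝ → ℝ} (hγ : 0 < γ + δ) (hg : Continuous g)
    (hK : ∀ ρ ≤ T, |g ρ| ≤ K * Real.exp (δ * ρ)) (hγ' : 0 < γ + δ') (hg' : Continuous g')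
    (hK' : ∀ ρ ≤ T', |g' ρ| ≤ K' * Real.exp (δ' * ρ)) (τ : ℝ) :
    duhamel γ (fun ρ => g ρ - g' ρ) τ = duhamel γ g τ - duhamel γ g' τ := by
  simp only [duhamel_eq_exp_mul, mul_sub]
  rw [integral_sub (integrableOn_exp_mul_of_abs_le hγ hg hK τ)
    (integrableOn_exp_mul_of_abs_le hγ' hg' hK' τ), mul_sub]

/-- The integral equation `v = 1 + ∫_{-∞} w`, `w' = -γ w + h(·, v)`, cut off at time `T`. -/
noncomputable def asymptoticPicard (γ T : ℝ) (h : ℝ → ℝ → ℝ) (v : ℝ → ℝ) (τ : ℝ) : ℝ :=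
  1 + duhamel 0 (duhamel γ fun ρ => h ρ (v ρ)) (min τ T)

variable {C : ℝ} {h : ℝ → ℝ → ℝ} {v w : ℝ → ℝ}

theorem abs_duhamel_duhamel_le (hγ : 0 ≤ γ) (hδ : 0 < δ) (hC : 0 ≤ K) {T' : ℝ}
    (hK : ∀ ρ ≤ T, |g ρ| ≤ K * Real.exp (δ * ρ)) (hT : T' ≤ T) (τ : ℝ) :
    |duhamel 0 (duhamel γ g) (min τ T')| ≤ K / (γ + δ) / δ * Real.exp (δ * T') := by
  have hmin : min τ T' ≤ T := (min_le_right _ _).trans hT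
  have hγδ : 0 < γ + δ := by linarith
  have hle := abs_duhamel_le (γ := 0) (δ := δ) (by linarith)
    (fun ρ (hρ : ρ ≤ T) => abs_duhamel_le hγδ hK hρ) hmin
  rw [zero_add] at hle
  refine hle.trans ?_
  gcongr
  exact min_le_right _ _

theorem abs_asymptoticPicard_sub_one_le (hγ : 0 ≤ γ) (hδ : 0 < δ) (hC : 0 ≤ C)
    (hb : ∀ ρ ≤ 0, ∀ x, |h ρ x| ≤ C * Real.exp (δ * ρ)) (hT : T ≤ 0) (v : ℝ → ℝ) (τ : ℝ) :
    |asymptoticPicard γ T h v τ - 1| ≤ C / (γ + δ) / δ * Real.exp (δ * T) := by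
  rw [asymptoticPicard, add_sub_cancel_left]
  exact abs_duhamel_duhamel_le hγ hδ hC (fun ρ hρ => hb ρ hρ (v ρ)) hT τ

theorem continuous_asymptoticPicard (hγ : 0 ≤ γ) (hδ : 0 < δ)
    (hh : Continuous (Function.uncurry h)) (hb : ∀ ρ ≤ 0, ∀ x, |h ρ x| ≤ C * Real.exp (δ * ρ))
    (hv : Continuous v) : Continuous (asymptoticPicard γ T h v) := by
  have hcont : Continuous fun ρ => h ρ (v ρ) := hh.comp (continuous_id.prodMk hv)
  have hb' : ∀ ρ ≤ 0, |h ρ (v ρ)| ≤ C * Real.exp (δ * ρ) := fun ρ hρ => hb ρ hρ _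
  have hγδ : 0 < γ + δ := by linarith
  exact continuous_const.add ((continuous_duhamel (δ := δ) (by linarith)
    (continuous_duhamel hγδ hcont hb') (fun ρ hρ => abs_duhamel_le hγδ hb' hρ)).comp
    (continuous_id.min continuous_const))

theorem abs_asymptoticPicard_sub_le (hγ : 0 ≤ γ) (hδ : 0 < δ) (hC : 0 ≤ C)
    (hh : Continuous (Function.uncurry h)) (hb : ∀ ρ ≤ 0, ∀ x, |h ρ x| ≤ C * Real.exp (δ * ρ))
    (hl : ∀ ρ ≤ 0, ∀ x y, |h ρ x - h ρ y| ≤ C * Real.exp (δ * ρ) * |x - y|) (hT : T ≤ 0)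
    (hv : Continuous v) (hw : Continuous w) {d : ℝ} (hd : ∀ ρ, |v ρ - w ρ| ≤ d) (τ : ℝ) :
    |asymptoticPicard γ T h v τ - asymptoticPicard γ T h w τ| ≤
      C / (γ + δ) / δ * Real.exp (δ * T) * d := by
  have hd0 : 0 ≤ d := (abs_nonneg _).trans (hd 0)
  have hγδ : 0 < γ + δ := by linarith
  have hcont : ∀ {u : ℝ → ℝ}, Continuous u → Continuous fun ρ => h ρ (u ρ) := fun hu =>
    hh.comp (continuous_id.prodMk hu)
  have hbound : ∀ u : ℝ → ℝ, ∀ ρ ≤ 0, |h ρ (u ρ)| ≤ C * Real.exp (δ * ρ) := fun u ρ hρ =>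
    hb ρ hρ _
  have hsource : ∀ ρ ≤ 0, |h ρ (v ρ) - h ρ (w ρ)| ≤ C * d * Real.exp (δ * ρ) := fun ρ hρ =>
    calc |h ρ (v ρ) - h ρ (w ρ)| ≤ C * Real.exp (δ * ρ) * |v ρ - w ρ| := hl ρ hρ _ _
      _ ≤ C * Real.exp (δ * ρ) * d := by gcongr; exact hd ρ
      _ = C * d * Real.exp (δ * ρ) := by ring
  have hlin : duhamel 0 (duhamel γ fun ρ => h ρ (v ρ) - h ρ (w ρ)) (min τ T) =
      asymptoticPicard γ T h v τ - asymptoticPicard γ T h w τ := by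
    rw [asymptoticPicard, asymptoticPicard, add_sub_add_left_eq_sub,
      ← duhamel_sub (δ := δ) (δ' := δ) (by linarith) (continuous_duhamel hγδ (hcont hv) (hbound v))
        (fun ρ hρ => abs_duhamel_le hγδ (hbound v) hρ) (by linarith)
        (continuous_duhamel hγδ (hcont hw) (hbound w))
        (fun ρ hρ => abs_duhamel_le hγδ (hbound w) hρ)]
    congr 1 with ρ
    exact duhamel_sub hγδ (hcont hv) (hbound v) hγδ (hcont hw) (hbound w) ρ
  rw [← hlin]
  exact (abs_duhamel_duhamel_le hγ hδ (by positivity) hsource hT τ).trans_eq (by ring)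

theorem exists_eq_asymptoticPicard (hγ : 0 ≤ γ) (hδ : 0 < δ) (hC : 0 ≤ C)
    (hh : Continuous (Function.uncurry h)) (hb : ∀ ρ ≤ 0, ∀ x, |h ρ x| ≤ C * Real.exp (δ * ρ))
    (hl : ∀ ρ ≤ 0, ∀ x y, |h ρ x - h ρ y| ≤ C * Real.exp (δ * ρ) * |x - y|) (hT : T ≤ 0)
    (hsmall : C / (γ + δ) / δ * Real.exp (δ * T) ≤ 1 / 2) :
    ∃ v : ℝ → ℝ, Continuous v ∧ asymptoticPicard γ T h v = v := by
  let A : BoundedContinuousFunction ℝ ℝ → BoundedContinuousFunction ℝ ℝ := fun v =>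
    BoundedContinuousFunction.ofNormedAddCommGroup (asymptoticPicard γ T h v)
      (continuous_asymptoticPicard hγ hδ hh hb v.continuous) (1 / 2 + 1) fun τ => by
        have hone := (abs_asymptoticPicard_sub_one_le hγ hδ hC hb hT v τ).trans hsmall
        have htri := norm_le_norm_sub_add (asymptoticPicard γ T h v τ) 1
        rw [Real.norm_eq_abs (_ - _), norm_one] at htri
        linarith
  have hA : ContractingWith (1 / 2) A := by
    refine ⟨by rw [← NNReal.coe_lt_coe]; norm_num, LipschitzWith.of_dist_le_mul fun v w => ?_⟩
    rw [BoundedContinuousFunction.dist_le (by positivity)]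
    intro τ
    refine (abs_asymptoticPicard_sub_le hγ hδ hC hh hb hl hT v.continuous w.continuous
      (d := dist v w) (fun ρ => v.dist_coe_le_dist ρ) τ).trans ?_
    have hhalf : ((1 / 2 : NNReal) : ℝ) = 1 / 2 := by norm_num
    rw [hhalf]
    gcongr
  obtain ⟨v, hv⟩ : ∃ v, A v = v := ⟨_, hA.fixedPoint_isFixedPt⟩
  exact ⟨v, v.continuous, congrArg DFunLike.coe hv⟩

theorem exists_solution_near_atBot (hγ : 0 ≤ γ) (hδ : 0 < δ) (hC : 0 ≤ C)
    (hh : Continuous (Function.uncurry h)) (hb : ∀ ρ ≤ 0, ∀ x, |h ρ x| ≤ C * Real.exp (δ * ρ))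
    (hl : ∀ ρ ≤ 0, ∀ x y, |h ρ x - h ρ y| ≤ C * Real.exp (δ * ρ) * |x - y|) :
    ∃ T ≤ 0, ∃ v w : ℝ → ℝ, ∀ τ < T, HasDerivAt v (w τ) τ ∧
      HasDerivAt w (-γ * w τ + h τ (v τ)) τ ∧ |v τ - 1| ≤ 1 / 2 ∧ |w τ| ≤ C / (γ + δ) := by
  obtain ⟨T, hsmall, hT⟩ : ∃ T, C / (γ + δ) / δ * Real.exp (δ * T) ≤ 1 / 2 ∧ T ≤ 0 := by
    have hlim : Tendsto (fun T => C / (γ + δ) / δ * Real.exp (δ * T)) atBot (nhds 0) := by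
      simpa using (Real.tendsto_exp_atBot.comp (tendsto_id.const_mul_atBot hδ)).const_mul
        (C / (γ + δ) / δ)
    exact ((hlim.eventually_le_const one_half_pos).and (eventually_le_atBot 0)).exists
  obtain ⟨v, hv, hfix⟩ := exists_eq_asymptoticPicard hγ hδ hC hh hb hl hT hsmall
  have hγδ : 0 < γ + δ := by linarith
  have hcont : Continuous fun ρ => h ρ (v ρ) := hh.comp (continuous_id.prodMk hv)
  have hb' : ∀ ρ ≤ 0, |h ρ (v ρ)| ≤ C * Real.exp (δ * ρ) := fun ρ hρ => hb ρ hρ _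
  have hw_bound : ∀ ρ ≤ 0, |duhamel γ (fun ρ => h ρ (v ρ)) ρ| ≤ _ := fun ρ hρ =>
    abs_duhamel_le hγδ hb' hρ
  refine ⟨T, hT, v, duhamel γ fun ρ => h ρ (v ρ), fun τ hτ =>
    ⟨?_, hasDerivAt_duhamel hγδ hcont hb' τ, ?_, ?_⟩⟩
  · have hv' := (hasDerivAt_duhamel (γ := 0) (δ := δ) (by linarith)
      (continuous_duhamel hγδ hcont hb') hw_bound τ).const_add 1
    rw [neg_zero, zero_mul, zero_add] at hv'
    refine hv'.congr_of_eventuallyEq ?_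
    filter_upwards [Iio_mem_nhds hτ] with σ hσ
    rw [← congrFun hfix σ, asymptoticPicard, min_eq_left (le_of_lt hσ)]
  · have hone := abs_asymptoticPicard_sub_one_le hγ hδ hC hb hT v τ
    rw [hfix] at hone
    exact hone.trans hsmall
  · refine (hw_bound τ (hτ.le.trans hT)).trans (mul_le_of_le_one_right (by positivity) ?_)
    exact Real.exp_le_one_iff.2 (mul_nonpos_of_nonneg_of_nonpos hδ.le (hτ.le.trans hT))

end Duhamel

section IntegralCurve

variable {E : Type*} [NormedAddCommGroup E] [NormedSpace ℝ E] {v : E → E} {x : E}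

open scoped Manifold in
theorem exists_forall_hasDerivAt_of_forall_Ioo (hv : ContDiff ℝ 1 v)
    (h : ∀ a, ∃ γ : ℝ → E, γ 0 = x ∧ ∀ t ∈ Ioo (-a) a, HasDerivAt γ (v (γ t)) t) :
    ∃ γ : ℝ → E, γ 0 = x ∧ ∀ t, HasDerivAt γ (v (γ t)) t := by
  have hv' : ContMDiff 𝓘(ℝ, E) 𝓘(ℝ, E).tangent 1 fun y => (⟨y, v y⟩ : TangentBundle 𝓘(ℝ, E) E) :=
    contMDiff_vectorSpace_iff_contDiff.2 hv
  obtain ⟨γ, hγ, hcurve⟩ := (exists_isMIntegralCurve_iff_exists_isMIntegralCurveOn_Ioo hv' x).2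
    fun a => (h a).imp fun γ hγ => ⟨hγ.1, fun t ht =>
      (hasMFDerivAt_iff_hasFDerivAt.2 (hγ.2 t ht).hasFDerivAt).hasMFDerivWithinAt⟩
  exact ⟨γ, hγ, fun t =>
    hasDerivAt_iff_hasFDerivAt.2 (hasMFDerivAt_iff_hasFDerivAt.1 (hcurve t))⟩

theorem exists_forall_hasDerivAt_of_hasCompactSupport [CompleteSpace E] (hv : ContDiff ℝ 1 v)
    (hsupp : HasCompactSupport v) (x : E) :
    ∃ γ : ℝ → E, γ 0 = x ∧ ∀ t, HasDerivAt γ (v (γ t)) t := by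
  obtain ⟨K, hK⟩ := hv.lipschitzWith_of_hasCompactSupport hsupp one_ne_zero
  obtain ⟨L, hL⟩ := hsupp.exists_bound_of_continuous hv.continuous
  refine exists_forall_hasDerivAt_of_forall_Ioo hv fun a => ?_
  rcases le_or_gt a 0 with ha | ha
  · exact ⟨fun _ => x, rfl, fun t ht => absurd (ht.1.trans ht.2) (by linarith)⟩
  have hpl : IsPicardLindelof (fun _ => v) (⟨0, by simp [ha.le]⟩ : Icc (-a) a) x
      (L.toNNReal * a.toNNReal) 0 L.toNNReal K :=
    .of_time_independent (fun y _ => (hL y).trans (Real.le_coe_toNNReal L)) hK.lipschitzOnWith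
      (by simp [ha.le])
  obtain ⟨γ, hγ, hderiv⟩ := hpl.exists_eq_forall_mem_Icc_hasDerivWithinAt₀
  exact ⟨γ, hγ, fun t ht => (hderiv t (Ioo_subset_Icc_self ht)).hasDerivAt (Icc_mem_nhds ht.1 ht.2)⟩

theorem le_mul_exp_of_abs_deriv_le {f f' : ℝ → ℝ} {K : ℝ} (hf : ∀ t, HasDerivAt f (f' t) t)
    (hf' : ∀ t, |f' t| ≤ K * f t) (t : ℝ) : f t ≤ f 0 * Real.exp (K * |t|) := by
  have hexp (a s : ℝ) : HasDerivAt (fun s => f s * Real.exp (a * s))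
      ((f' s + a * f s) * Real.exp (a * s)) s :=
    ((hf s).mul (((hasDerivAt_id s).const_mul a).exp)).congr_deriv (by simp; ring)
  rcases le_total 0 t with ht | ht
  · have hanti : Antitone fun s => f s * Real.exp (-K * s) :=
      antitone_of_hasDerivAt_nonpos (hexp (-K)) fun s =>
        mul_nonpos_of_nonpos_of_nonneg (by linarith [(abs_le.1 (hf' s)).2]) (Real.exp_pos _).le
    have := mul_le_mul_of_nonneg_right (hanti ht) (Real.exp_pos (K * t)).le
    simpa [mul_assoc, ← Real.exp_add, abs_of_nonneg ht] using this
  · have hmono : Monotone fun s => f s * Real.exp (K * s) :=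
      monotone_of_hasDerivAt_nonneg (hexp K) fun s =>
        mul_nonneg (by linarith [(abs_le.1 (hf' s)).1]) (Real.exp_pos _).le
    have := mul_le_mul_of_nonneg_right (hmono ht) (Real.exp_pos (-(K * t))).le
    simpa [mul_assoc, ← Real.exp_add, abs_of_nonpos ht] using this

theorem exists_forall_hasDerivAt_of_abs_fderiv_le [FiniteDimensional ℝ E] (hv : ContDiff ℝ 1 v)
    {V : E → ℝ} {K : ℝ} (hV : ContDiff ℝ 1 V) (hpos : ∀ y, 0 ≤ V y) (hK : 0 ≤ K)
    (hsub : ∀ M, Bornology.IsBounded {y | V y ≤ M}) (hgrowth : ∀ y, |fderiv ℝ V y (v y)| ≤ K * V y)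
    (x : E) : ∃ γ : ℝ → E, γ 0 = x ∧ ∀ t, HasDerivAt γ (v (γ t)) t := by
  refine exists_forall_hasDerivAt_of_forall_Ioo hv fun a => ?_
  let r := V x * Real.exp (K * a) + 1
  have hr : 0 < r := by have := hpos x; positivity
  let χ : ContDiffBump (0 : ℝ) := ⟨r, r + 1, hr, lt_add_one r⟩
  have hsupp : HasCompactSupport fun y => χ (V y) • v y := by
    refine .intro (Metric.isCompact_of_isClosed_isBounded
      (isClosed_le hV.continuous continuous_const) (hsub (r + 1))) fun y hy => ?_
    have : r + 1 ≤ dist (V y) 0 := by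
      rw [Real.dist_0_eq_abs, abs_of_nonneg (hpos y)]; exact (not_le.1 hy).le
    rw [χ.zero_of_le_dist this, zero_smul]
  obtain ⟨γ, hγ, hcurve⟩ := exists_forall_hasDerivAt_of_hasCompactSupport
    (((χ.contDiff).comp hV).smul hv) hsupp x
  refine ⟨γ, hγ, fun t ht => (hcurve t).congr_deriv ?_⟩
  have hVγ (s : ℝ) : HasDerivAt (V ∘ γ) (χ (V (γ s)) * fderiv ℝ V (γ s) (v (γ s))) s :=
    (((hV.differentiable one_ne_zero) (γ s)).hasFDerivAt.comp_hasDerivAt s (hcurve s)).congr_deriv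
      (by simp)
  have hle := le_mul_exp_of_abs_deriv_le hVγ (K := K) (fun s => by
    rw [abs_mul, abs_of_nonneg χ.nonneg]
    exact (mul_le_of_le_one_left (abs_nonneg _) χ.le_one).trans (hgrowth (γ s))) t
  have hball : V (γ t) ∈ Metric.closedBall (0 : ℝ) χ.rIn := by
    rw [Metric.mem_closedBall, Real.dist_0_eq_abs, abs_of_nonneg (hpos _)]
    have hta : |t| ≤ a := abs_le.2 ⟨ht.1.le, ht.2.le⟩
    calc V (γ t) ≤ V x * Real.exp (K * |t|) := by simpa [hγ] using hle
      _ ≤ V x * Real.exp (K * a) := by have := hpos x; gcongr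
      _ ≤ χ.rIn := (lt_add_one _).le
  change χ (V (γ t)) • v (γ t) = v (γ t)
  rw [χ.one_of_mem_closedBall hball, one_smul]

theorem contDiff_infty_of_forall_hasDerivAt {γ : ℝ → E} (hv : ContDiff ℝ (⊤ : ℕ∞) v)
    (hγ : ∀ t, HasDerivAt γ (v (γ t)) t) : ContDiff ℝ (⊤ : ℕ∞) γ := by
  refine contDiff_infty.2 fun n => ?_
  induction n with
  | zero => exact contDiff_zero.2 (continuous_iff_continuousAt.2 fun t => (hγ t).continuousAt)
  | succ n ih =>
    refine (contDiff_succ_iff_deriv (n := (n : WithTop ℕ∞))).2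
      ⟨fun t => (hγ t).differentiableAt, by simp, ?_⟩
    rw [funext fun t => (hγ t).deriv]
    exact (contDiff_infty.1 hv n).comp ih

open scoped Manifold in
theorem eqOn_Iio_of_hasDerivAt (hv : ContDiff ℝ 1 v) {γ η : ℝ → E} {T t₀ : ℝ}
    (hγ : ∀ t < T, HasDerivAt γ (v (γ t)) t) (hη : ∀ t < T, HasDerivAt η (v (η t)) t) (ht₀ : t₀ < T)
    (h : γ t₀ = η t₀) : EqOn γ η (Iio T) := by
  intro t ht
  have hcurve {ζ : ℝ → E} (hζ : ∀ t < T, HasDerivAt ζ (v (ζ t)) t) :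
      IsMIntegralCurveOn (I := 𝓘(ℝ, E)) ζ v (Ioo (min t t₀ - 1) T) := fun s hs =>
    (hasMFDerivAt_iff_hasFDerivAt.2 (hζ s hs.2).hasFDerivAt).hasMFDerivWithinAt
  exact isMIntegralCurveOn_Ioo_eqOn_of_contMDiff_boundaryless (I := 𝓘(ℝ, E))
    ⟨by linarith [min_le_right t t₀], ht₀⟩ (contMDiff_vectorSpace_iff_contDiff.2 hv)
    (hcurve hγ) (hcurve hη) h ⟨by linarith [min_le_left t t₀], ht⟩

theorem exists_forall_hasDerivAt_eqOn_Iio (hv : ContDiff ℝ 1 v)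
    (hcomplete : ∀ x, ∃ γ : ℝ → E, γ 0 = x ∧ ∀ t, HasDerivAt γ (v (γ t)) t) {η : ℝ → E} {T : ℝ}
    (hη : ∀ t < T, HasDerivAt η (v (η t)) t) :
    ∃ γ : ℝ → E, (∀ t, HasDerivAt γ (v (γ t)) t) ∧ EqOn γ η (Iio T) := by
  obtain ⟨γ, hγ, hderiv⟩ := hcomplete (η (T - 1))
  have hshift (t : ℝ) := (hderiv (t - (T - 1))).comp_sub_const t (T - 1)
  exact ⟨fun t => γ (t - (T - 1)), hshift, eqOn_Iio_of_hasDerivAt hv (fun t _ => hshift t) hη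
    (sub_one_lt T) (by simp only [sub_self, hγ])⟩

end IntegralCurve

section LocalProfile

theorem exists_abs_sub_le_max_mul {f : ℝ → ℝ} {U : Set ℝ} {r : ℝ} (hU : IsOpen U)
    (hrU : Icc 0 r ⊆ U) (hf : ContDiffOn ℝ 2 f U) (h0 : deriv f 0 = 0) :
    ∃ C, 0 ≤ C ∧ ∀ x ∈ Icc 0 r, ∀ y ∈ Icc 0 r, |f x - f y| ≤ C * max x y * |x - y| := by
  have hderiv : ContDiffOn ℝ 1 (deriv f) (Icc 0 r) :=
    (hf.deriv_of_isOpen hU (by norm_num)).mono hrU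
  obtain ⟨L, hL⟩ := hderiv.exists_lipschitzOnWith one_ne_zero (convex_Icc 0 r) isCompact_Icc
  refine ⟨L, L.2, fun x hx y hy => ?_⟩
  have hbound : ∀ z ∈ Icc 0 (max x y), ‖deriv f z‖ ≤ L * max x y := fun z hz => by
    have hzr : z ∈ Icc 0 r := ⟨hz.1, hz.2.trans (max_le hx.2 hy.2)⟩
    have := hL.dist_le_mul z hzr 0 ⟨le_rfl, hz.1.trans hzr.2⟩
    rw [h0, dist_zero_right, dist_zero_right, Real.norm_of_nonneg hz.1] at this
    exact this.trans (mul_le_mul_of_nonneg_left hz.2 L.2)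
  have hdiff : ∀ z ∈ Icc 0 (max x y), DifferentiableAt ℝ f z := fun z hz =>
    (hf.differentiableOn two_ne_zero).differentiableAt
      (hU.mem_nhds (hrU ⟨hz.1, hz.2.trans (max_le hx.2 hy.2)⟩))
  exact (convex_Icc 0 (max x y)).norm_image_sub_le_of_norm_deriv_le hdiff hbound
    ⟨hy.1, le_max_right _ _⟩ ⟨hx.1, le_max_left _ _⟩

variable {κ ν δ C : ℝ} {G : ℝ → ℝ}

/-- The coefficient `h` for which `S = e^{κτ} v` solves `S'' = G(S) + ν e^{2τ} sin S` exactly when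
`v'' = -2κ v' + h(τ, v)`. Outside `τ ≤ 0`, `v ∈ [0, 2]` it is continued constantly. -/
noncomputable def scaledRemainder (κ ν : ℝ) (G : ℝ → ℝ) (τ v : ℝ) : ℝ :=
  let s := Real.exp (κ * min τ 0) * projIcc 0 2 zero_le_two v
  Real.exp (-(κ * min τ 0)) *
    (G s - κ ^ 2 * s + ν * Real.exp (2 * min τ 0) * Real.sin s)

theorem exp_mul_projIcc_mem_Icc (hκ : 0 ≤ κ) {ρ : ℝ} (hρ : ρ ≤ 0) (v : ℝ) :
    Real.exp (κ * ρ) * projIcc (0 : ℝ) 2 zero_le_two v ∈ Icc (0 : ℝ) 2 := by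
  have hv := (projIcc (0 : ℝ) 2 zero_le_two v).2
  have hexp := Real.exp_le_one_iff.2 (mul_nonpos_of_nonneg_of_nonpos hκ hρ)
  exact ⟨mul_nonneg (Real.exp_pos _).le hv.1, (mul_le_of_le_one_left hv.1 hexp).trans hv.2⟩

theorem continuous_scaledRemainder (hκ : 0 ≤ κ) (hG : ContinuousOn G (Icc 0 2)) :
    Continuous (Function.uncurry (scaledRemainder κ ν G)) := by
  have hs : Continuous fun q : ℝ × ℝ =>
      Real.exp (κ * min q.1 0) * (projIcc (0 : ℝ) 2 zero_le_two q.2 : ℝ) :=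
    (by fun_prop : Continuous fun q : ℝ × ℝ => Real.exp (κ * min q.1 0)).mul
      (continuous_subtype_val.comp (continuous_projIcc.comp continuous_snd))
  have hG' := hG.comp_continuous hs fun q => exp_mul_projIcc_mem_Icc hκ (min_le_right q.1 0) q.2
  exact (by fun_prop : Continuous fun q : ℝ × ℝ => Real.exp (-(κ * min q.1 0))).mul
    ((hG'.sub (hs.const_mul _)).add
      ((by fun_prop : Continuous fun q : ℝ × ℝ => ν * Real.exp (2 * min q.1 0)).mul
        (Real.continuous_sin.comp hs)))

theorem exp_mul_scaledRemainder {τ v : ℝ} (hτ : τ ≤ 0) (hv : v ∈ Icc 0 2) :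
    Real.exp (κ * τ) * scaledRemainder κ ν G τ v = G (Real.exp (κ * τ) * v)
      - κ ^ 2 * (Real.exp (κ * τ) * v)
      + ν * Real.exp (2 * τ) * Real.sin (Real.exp (κ * τ) * v) := by
  simp only [scaledRemainder, min_eq_left hτ, projIcc_of_mem zero_le_two hv]
  rw [← mul_assoc, ← Real.exp_add, add_neg_cancel, Real.exp_zero, one_mul]

theorem abs_scaledRemainder_sub_le (hκ : 0 ≤ κ) (hδκ : δ ≤ κ) (hδ2 : δ ≤ 2)
    (hC : 0 ≤ C) (hG : ∀ x ∈ Icc (0 : ℝ) 2, ∀ y ∈ Icc (0 : ℝ) 2,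
      |G x - κ ^ 2 * x - (G y - κ ^ 2 * y)| ≤ C * max x y * |x - y|)
    {ρ : ℝ} (hρ : ρ ≤ 0) (v w : ℝ) :
    |scaledRemainder κ ν G ρ v - scaledRemainder κ ν G ρ w| ≤ (2 * C + |ν|) * Real.exp (δ * ρ) *
      |(projIcc (0 : ℝ) 2 zero_le_two v : ℝ) - projIcc (0 : ℝ) 2 zero_le_two w| := by
  simp only [scaledRemainder, min_eq_left hρ, ← mul_sub]
  set x := projIcc (0 : ℝ) 2 zero_le_two v
  set y := projIcc (0 : ℝ) 2 zero_le_two w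
  set e := Real.exp (κ * ρ)
  have hpos : 0 < e := Real.exp_pos _
  have hN : |G (e * x) - κ ^ 2 * (e * x) - (G (e * y) - κ ^ 2 * (e * y))|
      ≤ C * (2 * e) * (e * |(x : ℝ) - y|) := by
    refine (hG _ (exp_mul_projIcc_mem_Icc hκ hρ v) _ (exp_mul_projIcc_mem_Icc hκ hρ w)).trans ?_
    rw [← mul_max_of_nonneg _ _ hpos.le, ← mul_sub, abs_mul, abs_of_pos hpos, mul_comm 2 e]
    gcongr
    exact max_le x.2.2 y.2.2
  have hsin : |Real.sin (e * x) - Real.sin (e * y)| ≤ e * |(x : ℝ) - y| := by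
    refine (Real.abs_sin_sub_sin_le _ _).trans_eq ?_
    rw [← mul_sub, abs_mul, abs_of_pos hpos]
  have hexpκ : e ≤ Real.exp (δ * ρ) := Real.exp_le_exp.2 (mul_le_mul_of_nonpos_right hδκ hρ)
  have hexp2 : Real.exp (2 * ρ) ≤ Real.exp (δ * ρ) :=
    Real.exp_le_exp.2 (mul_le_mul_of_nonpos_right hδ2 hρ)
  rw [abs_mul, Real.abs_exp, Real.exp_neg, inv_mul_le_iff₀ hpos]
  calc _ = |(G (e * x) - κ ^ 2 * (e * x) - (G (e * y) - κ ^ 2 * (e * y)))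
        + ν * Real.exp (2 * ρ) * (Real.sin (e * x) - Real.sin (e * y))| := by congr 1; ring
    _ ≤ C * (2 * e) * (e * |(x : ℝ) - y|) + |ν| * Real.exp (2 * ρ) * (e * |(x : ℝ) - y|) := by
      refine (abs_add_le _ _).trans (add_le_add hN ?_)
      rw [abs_mul, abs_mul, Real.abs_exp]
      gcongr
    _ ≤ C * (2 * Real.exp (δ * ρ)) * (e * |(x : ℝ) - y|)
        + |ν| * Real.exp (δ * ρ) * (e * |(x : ℝ) - y|) := by gcongr
    _ = _ := by ring

theorem abs_scaledRemainder_le (hκ : 0 ≤ κ) (hδκ : δ ≤ κ) (hδ2 : δ ≤ 2)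
    (hC : 0 ≤ C) (hG0 : G 0 = 0) (hG : ∀ x ∈ Icc (0 : ℝ) 2, ∀ y ∈ Icc (0 : ℝ) 2,
      |G x - κ ^ 2 * x - (G y - κ ^ 2 * y)| ≤ C * max x y * |x - y|)
    {ρ : ℝ} (hρ : ρ ≤ 0) (v : ℝ) :
    |scaledRemainder κ ν G ρ v| ≤ (2 * C + |ν|) * 2 * Real.exp (δ * ρ) := by
  have h := abs_scaledRemainder_sub_le (ν := ν) hκ hδκ hδ2 hC hG hρ v 0
  have h0 : scaledRemainder κ ν G ρ 0 = 0 := by simp [scaledRemainder, projIcc_left, hG0]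
  rw [h0, projIcc_left, sub_zero, sub_zero] at h
  refine h.trans ((mul_le_mul_of_nonneg_left ?_ (by positivity)).trans_eq (mul_right_comm _ _ _))
  exact abs_le.2 ⟨by linarith [(projIcc (0 : ℝ) 2 zero_le_two v).2.1], (projIcc _ _ _ v).2.2⟩

theorem exists_decaying_solution_near_atBot {U : Set ℝ} (hκ : 0 < κ) (hU : IsOpen U)
    (hU2 : Icc 0 2 ⊆ U) (hG : ContDiffOn ℝ 2 G U) (hG0 : G 0 = 0) (hG0' : deriv G 0 = κ ^ 2)
    (ν : ℝ) :
    ∃ T ≤ 0, ∃ C, ∃ S P : ℝ → ℝ, ∀ τ < T, HasDerivAt S (P τ) τ ∧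
      HasDerivAt P (G (S τ) + ν * Real.exp (2 * τ) * Real.sin (S τ)) τ ∧
      0 < S τ ∧ S τ ≤ 2 * Real.exp (κ * τ) ∧ |P τ| ≤ C * Real.exp (κ * τ) := by
  have hderiv : deriv (fun s => G s - κ ^ 2 * s) 0 = 0 := by
    have hG' : HasDerivAt G (κ ^ 2) 0 := hG0' ▸ ((hG.differentiableOn two_ne_zero).differentiableAt
      (hU.mem_nhds (hU2 ⟨le_rfl, zero_le_two⟩))).hasDerivAt
    exact (hG'.fun_sub ((hasDerivAt_id' (0 : ℝ)).const_mul (κ ^ 2))).deriv.trans (by ring)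
  obtain ⟨C, hC, hCG⟩ := exists_abs_sub_le_max_mul hU hU2
    (hG.sub (contDiff_const.mul contDiff_fun_id).contDiffOn) hderiv
  obtain ⟨T, hT, v, w, hvw⟩ := exists_solution_near_atBot (γ := 2 * κ) (δ := min κ 2)
    (C := (2 * C + |ν|) * 2) (by positivity) (by positivity) (by positivity)
    (continuous_scaledRemainder hκ.le (hG.continuousOn.mono hU2))
    (fun ρ hρ => abs_scaledRemainder_le hκ.le (min_le_left κ 2) (min_le_right κ 2) hC hG0 hCG hρ)
    fun ρ hρ x y => (abs_scaledRemainder_sub_le hκ.le (min_le_left κ 2) (min_le_right κ 2) hC hCG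
      hρ x y).trans (by
        have := abs_projIcc_sub_projIcc (c := x) (d := y) (zero_le_two (α := ℝ))
        have := le_mul_of_one_le_right (a := 2 * C + |ν|) (by positivity) one_le_two
        gcongr)
  refine ⟨T, hT, 2 * κ + (2 * C + |ν|) * 2 / (2 * κ + min κ 2), fun τ => Real.exp (κ * τ) * v τ,
    fun τ => Real.exp (κ * τ) * (κ * v τ + w τ), fun τ hτ => ?_⟩
  obtain ⟨hv, hw, hv1, hwC⟩ := hvw τ hτ
  have hvI : v τ ∈ Icc (1 / 2 : ℝ) (3 / 2) := by
    obtain ⟨h₁, h₂⟩ := abs_le.1 hv1; exact ⟨by linarith, by linarith⟩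
  have hexp : HasDerivAt (fun τ => Real.exp (κ * τ)) (Real.exp (κ * τ) * κ) τ := by
    simpa using ((hasDerivAt_id τ).const_mul κ).exp
  refine ⟨(hexp.mul hv).congr_deriv (by ring), ?_,
    mul_pos (Real.exp_pos _) (by linarith [hvI.1]), ?_, ?_⟩
  · refine (hexp.fun_mul ((hv.const_mul κ).fun_add hw)).congr_deriv ?_
    have hscaled := exp_mul_scaledRemainder (κ := κ) (ν := ν) (G := G) (hτ.le.trans hT)
      (Icc_subset_Icc (by norm_num) (by norm_num) hvI)
    linear_combination hscaled
  · rw [mul_comm 2]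
    exact mul_le_mul_of_nonneg_left (by linarith [hvI.2]) (Real.exp_pos _).le
  · rw [abs_mul, Real.abs_exp, mul_comm]
    gcongr
    refine (abs_add_le _ _).trans (add_le_add ?_ hwC)
    rw [abs_mul, abs_of_pos hκ, abs_of_pos (by linarith [hvI.1]), mul_comm]
    gcongr
    linarith [hvI.2]

end LocalProfile

section Profile

/-- The radial coefficient `ω` of the profile equation `S'' = (ω(S) + ν e^{2τ}) sin S` in the
variable `τ = log a`. -/
noncomputable def radialCoeff (k b c s : ℝ) : ℝ :=
  -(c ^ 2 / (1 + Real.cos s) ^ 2) - k * b + 2 * k ^ 2 - 3 * k ^ 2 * Real.cos s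

/-- `S` is the polar angle, as a function of `τ = log a`, of an equivariant standing wave in one of
the two cones; `ν = ±μ` distinguishes the cones, and `κ` is the rate of decay at the cross. -/
structure IsProfile (k b c ν κ : ℝ) (S : ℝ → ℝ) : Prop where
  contDiff : ContDiff ℝ (⊤ : ℕ∞) S
  one_add_cos_pos : ∀ τ, 0 < 1 + Real.cos (S τ)
  deriv_deriv : ∀ τ,
    deriv (deriv S) τ = (radialCoeff k b c (S τ) + ν * Real.exp (2 * τ)) * Real.sin (S τ)
  isBigO : S =O[atBot] fun τ => Real.exp (κ * τ)
  isBigO_deriv : deriv S =O[atBot] fun τ => Real.exp (κ * τ)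
  exists_ne_zero : ∃ τ, S τ ≠ 0

variable {k b c ν κ : ℝ}

theorem contDiffOn_radialForce {n : WithTop ℕ∞} :
    ContDiffOn ℝ n (fun s => radialCoeff k b c s * Real.sin s) {s | 1 + Real.cos s ≠ 0} := by
  have hcos : ContDiff ℝ n fun s => 1 + Real.cos s := contDiff_const.add Real.contDiff_cos
  refine ContDiffOn.mul (((ContDiffOn.sub ?_ contDiffOn_const).add contDiffOn_const).sub
    (contDiff_const.mul Real.contDiff_cos).contDiffOn) Real.contDiff_sin.contDiffOn
  exact (contDiffOn_const.div (hcos.pow 2).contDiffOn fun s hs => pow_ne_zero 2 hs).neg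

theorem hasDerivAt_radialForce_zero :
    HasDerivAt (fun s => radialCoeff k b c s * Real.sin s) (-(k ^ 2 + b * k) - c ^ 2 / 4) 0 := by
  have hdiff : DifferentiableAt ℝ (radialCoeff k b c) 0 := by
    unfold radialCoeff
    fun_prop (disch := norm_num)
  refine (hdiff.hasDerivAt.fun_mul (Real.hasDerivAt_sin 0)).congr_deriv ?_
  norm_num [radialCoeff]
  ring

/-- The profile equation as an autonomous system for `(tan (S / 2), S', ν e^{2τ})`. -/
noncomputable def profileField (k b c : ℝ) (q : ℝ × ℝ × ℝ) : ℝ × ℝ × ℝ :=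
  ((1 + q.1 ^ 2) * q.2.1 / 2,
    (-(c ^ 2 * (1 + q.1 ^ 2) ^ 2 / 4) - k * b + 2 * k ^ 2
      - 3 * k ^ 2 * ((1 - q.1 ^ 2) / (1 + q.1 ^ 2)) + q.2.2) * (2 * q.1 / (1 + q.1 ^ 2)),
    2 * q.2.2)

theorem contDiff_profileField {n : WithTop ℕ∞} : ContDiff ℝ n (profileField k b c) := by
  have hne (q : ℝ × ℝ × ℝ) : 1 + q.1 ^ 2 ≠ 0 := by positivity
  unfold profileField
  fun_prop (disch := exact hne _)

theorem cos_two_mul_arctan (y : ℝ) : Real.cos (2 * Real.arctan y) = (1 - y ^ 2) / (1 + y ^ 2) := by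
  have : 1 + y ^ 2 ≠ 0 := by positivity
  rw [Real.cos_two_mul, Real.cos_sq_arctan]
  field_simp
  ring

theorem sin_two_mul_arctan (y : ℝ) : Real.sin (2 * Real.arctan y) = 2 * y / (1 + y ^ 2) := by
  have : 1 + y ^ 2 ≠ 0 := by positivity
  rw [Real.sin_two_mul, ← Real.tan_mul_cos (Real.cos_arctan_pos y).ne', Real.tan_arctan, mul_assoc,
    mul_assoc, ← sq, Real.cos_sq_arctan]
  field_simp

theorem profileField_tan {s p e : ℝ} (hs : s ∈ Ioo (-Real.pi) Real.pi) :
    profileField k b c (Real.tan (s / 2), p, e) =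
      (p / (2 * Real.cos (s / 2) ^ 2), (radialCoeff k b c s + e) * Real.sin s, 2 * e) := by
  obtain ⟨y, rfl⟩ : ∃ y, s = 2 * Real.arctan y :=
    ⟨Real.tan (s / 2), by rw [Real.arctan_tan] <;> linarith [hs.1, hs.2]⟩
  have hy : 1 + y ^ 2 ≠ 0 := by positivity
  rw [mul_div_cancel_left₀ _ two_ne_zero, Real.tan_arctan, Real.cos_sq_arctan, sin_two_mul_arctan,
    radialCoeff, cos_two_mul_arctan, profileField]
  have hsum : 1 + (1 - y ^ 2) / (1 + y ^ 2) = 2 / (1 + y ^ 2) := by field_simp; ring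
  rw [hsum]
  refine Prod.ext ?_ (Prod.ext ?_ rfl)
  · field_simp
  · field_simp
    ring

/-- A Lyapunov function for `profileField`: the potential `c² / (1 + cos S)` of the centrifugal term
keeps `S` away from `±π`. -/
noncomputable def profileEnergy (k b c : ℝ) (q : ℝ × ℝ × ℝ) : ℝ :=
  q.2.1 ^ 2 + c ^ 2 * (1 + q.1 ^ 2) + (|k * b| + 5 * k ^ 2) ^ 2 + q.2.2 ^ 2

theorem contDiff_profileEnergy {n : WithTop ℕ∞} : ContDiff ℝ n (profileEnergy k b c) := by
  unfold profileEnergy; fun_prop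

theorem profileEnergy_nonneg (q : ℝ × ℝ × ℝ) : 0 ≤ profileEnergy k b c q := by
  unfold profileEnergy; positivity

theorem isBounded_profileEnergy_le (hc : c ≠ 0) (M : ℝ) :
    Bornology.IsBounded {q | profileEnergy k b c q ≤ M} := by
  refine ((Metric.isBounded_closedBall (x := (0 : ℝ)) (r := √(M / c ^ 2))).prod
    ((Metric.isBounded_closedBall (x := (0 : ℝ)) (r := √M)).prod
      (Metric.isBounded_closedBall (x := (0 : ℝ)) (r := √M)))).subset fun q hq => ?_
  have hq : q.2.1 ^ 2 + c ^ 2 * (1 + q.1 ^ 2) + (|k * b| + 5 * k ^ 2) ^ 2 + q.2.2 ^ 2 ≤ M := hq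
  have hc2 : 0 < c ^ 2 := by positivity
  simp only [mem_prod, mem_closedBall_zero_iff, Real.norm_eq_abs]
  refine ⟨Real.abs_le_sqrt ((le_div_iff₀ hc2).2 ?_), Real.abs_le_sqrt ?_, Real.abs_le_sqrt ?_⟩ <;>
    nlinarith [mul_nonneg hc2.le (sq_nonneg q.1), sq_nonneg q.2.1, sq_nonneg q.2.2,
      sq_nonneg (|k * b| + 5 * k ^ 2)]

theorem fderiv_profileEnergy (q v : ℝ × ℝ × ℝ) : fderiv ℝ (profileEnergy k b c) q v =
    2 * q.2.1 * v.2.1 + c ^ 2 * (2 * q.1 * v.1) + 2 * q.2.2 * v.2.2 := by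
  have h₁ : HasFDerivAt (fun q : ℝ × ℝ × ℝ => q.1) (ContinuousLinearMap.fst ℝ ℝ (ℝ × ℝ)) q :=
    hasFDerivAt_fst
  have h₂ := (hasFDerivAt_snd (𝕜 := ℝ) (p := q)).fst
  have h₃ := (hasFDerivAt_snd (𝕜 := ℝ) (p := q)).snd
  have := ((((h₂.pow 2).add (((h₁.pow 2).const_add 1).const_mul (c ^ 2))).add_const
    ((|k * b| + 5 * k ^ 2) ^ 2)).add (h₃.pow 2)).fderiv
  change fderiv ℝ (profileEnergy k b c) q = _ at this
  rw [this]
  simp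

theorem abs_fderiv_profileEnergy_le (q : ℝ × ℝ × ℝ) :
    |fderiv ℝ (profileEnergy k b c) q (profileField k b c q)| ≤ 5 * profileEnergy k b c q := by
  obtain ⟨y, p, e⟩ := q
  set K := |k * b| + 5 * k ^ 2
  have hy : 0 < 1 + y ^ 2 := by positivity
  set g := (1 - y ^ 2) / (1 + y ^ 2) with hg
  have hg1 : |g| ≤ 1 := by
    rw [hg, abs_div, abs_of_pos hy, div_le_one hy]
    exact abs_le.2 ⟨by linarith, by nlinarith⟩
  set r := 2 * y / (1 + y ^ 2) with hr
  have hr1 : |r| ≤ 1 := by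
    rw [hr, abs_div, abs_of_pos hy, div_le_one hy]
    exact abs_le.2 ⟨by nlinarith [sq_nonneg (y + 1)], by nlinarith [sq_nonneg (y - 1)]⟩
  have hcancel : fderiv ℝ (profileEnergy k b c) (y, p, e) (profileField k b c (y, p, e)) =
      2 * (p * r * (-(k * b) + 2 * k ^ 2 - 3 * k ^ 2 * g + e)) + 4 * e ^ 2 := by
    rw [fderiv_profileEnergy, profileField]
    simp only [← hg, ← hr]
    have : r * (1 + y ^ 2) = 2 * y := div_mul_cancel₀ _ hy.ne'
    linear_combination (-(c ^ 2 * p * (1 + y ^ 2) / 2)) * this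
  have hcoef : |-(k * b) + 2 * k ^ 2 - 3 * k ^ 2 * g + e| ≤ K + |e| := by
    have hkg := mul_le_mul_of_nonneg_left hg1 (by positivity : 0 ≤ 3 * k ^ 2)
    rw [← abs_of_nonneg (by positivity : 0 ≤ 3 * k ^ 2), ← abs_mul,
      abs_of_nonneg (by positivity : 0 ≤ 3 * k ^ 2)] at hkg
    refine (abs_add_le _ _).trans (add_le_add_left (abs_le.2 ⟨?_, ?_⟩) _) <;>
      nlinarith [abs_le.1 hkg, neg_abs_le (k * b), le_abs_self (k * b), sq_nonneg k]
  have hprod : |p * r * (-(k * b) + 2 * k ^ 2 - 3 * k ^ 2 * g + e)| ≤ |p| * (K + |e|) := by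
    rw [abs_mul, abs_mul]
    exact mul_le_mul (mul_le_of_le_one_right (abs_nonneg p) hr1) hcoef (abs_nonneg _) (abs_nonneg p)
  rw [hcancel]
  calc _ ≤ 2 * (|p| * (K + |e|)) + 4 * e ^ 2 := by
        refine (abs_add_le _ _).trans (add_le_add ?_ (abs_of_nonneg (by positivity)).le)
        rw [abs_mul, abs_two]
        gcongr
    _ ≤ 5 * (p ^ 2 + K ^ 2 + e ^ 2) := by
        nlinarith [sq_nonneg (|p| - K), sq_nonneg (|p| - |e|), sq_abs p, sq_abs e, sq_nonneg K]
    _ ≤ 5 * profileEnergy k b c (y, p, e) := by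
        simp only [profileEnergy]
        nlinarith [mul_nonneg (sq_nonneg c) hy.le]

theorem exists_integralCurve_profileField (hc : c ≠ 0) (q : ℝ × ℝ × ℝ) : ∃ γ : ℝ → ℝ × ℝ × ℝ,
    γ 0 = q ∧ ∀ t, HasDerivAt γ (profileField k b c (γ t)) t :=
  exists_forall_hasDerivAt_of_abs_fderiv_le contDiff_profileField contDiff_profileEnergy
    profileEnergy_nonneg (by norm_num) (isBounded_profileEnergy_le hc) abs_fderiv_profileEnergy_le q

theorem hasDerivAt_triple {γ : ℝ → ℝ × ℝ × ℝ} {v : ℝ × ℝ × ℝ} {t : ℝ} (h : HasDerivAt γ v t) :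
    HasDerivAt (fun t => (γ t).1) v.1 t ∧ HasDerivAt (fun t => (γ t).2.1) v.2.1 t ∧
      HasDerivAt (fun t => (γ t).2.2) v.2.2 t :=
  ⟨h.hasFDerivAt.fst.hasDerivAt.congr_deriv (by simp),
    h.hasFDerivAt.snd.fst.hasDerivAt.congr_deriv (by simp),
    h.hasFDerivAt.snd.snd.hasDerivAt.congr_deriv (by simp)⟩

theorem hasDerivAt_two_mul_arctan_of_profileField {γ : ℝ → ℝ × ℝ × ℝ}
    (hγ : ∀ t, HasDerivAt γ (profileField k b c (γ t)) t) (t : ℝ) :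
    HasDerivAt (fun t => 2 * Real.arctan (γ t).1) (γ t).2.1 t := by
  have hy : 1 + (γ t).1 ^ 2 ≠ 0 := by positivity
  refine ((hasDerivAt_triple (hγ t)).1.arctan.const_mul 2).congr_deriv ?_
  simp only [profileField]
  field_simp

theorem snd_snd_eq_of_profileField {γ : ℝ → ℝ × ℝ × ℝ}
    (hγ : ∀ t, HasDerivAt γ (profileField k b c (γ t)) t) {t₀ : ℝ}
    (h : (γ t₀).2.2 = ν * Real.exp (2 * t₀)) (t : ℝ) : (γ t).2.2 = ν * Real.exp (2 * t) := by
  have hconst (s : ℝ) : HasDerivAt (fun s => (γ s).2.2 * Real.exp (-2 * s)) 0 s :=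
    ((hasDerivAt_triple (hγ s)).2.2.fun_mul ((hasDerivAt_id' s).const_mul (-2)).exp).congr_deriv (by
      simp only [profileField]; ring)
  have heq := is_const_of_deriv_eq_zero (fun s => (hconst s).differentiableAt)
    (fun s => (hconst s).deriv) t t₀
  rw [h, mul_assoc, ← Real.exp_add, neg_mul, neg_mul, add_neg_cancel, Real.exp_zero, mul_one] at heq
  rw [← heq, mul_assoc, ← Real.exp_add, neg_add_cancel, Real.exp_zero, mul_one]

theorem hasDerivAt_profile_curve {S P : ℝ → ℝ} {τ : ℝ} (hS : HasDerivAt S (P τ) τ)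
    (hP : HasDerivAt P ((radialCoeff k b c (S τ) + ν * Real.exp (2 * τ)) * Real.sin (S τ)) τ)
    (hτ : S τ ∈ Ioo (-Real.pi) Real.pi) :
    HasDerivAt (fun τ => (Real.tan (S τ / 2), P τ, ν * Real.exp (2 * τ)))
      (profileField k b c (Real.tan (S τ / 2), P τ, ν * Real.exp (2 * τ))) τ := by
  have hcos : Real.cos (S τ / 2) ≠ 0 :=
    (Real.cos_pos_of_mem_Ioo ⟨by linarith [hτ.1], by linarith [hτ.2]⟩).ne'
  rw [profileField_tan hτ]
  refine HasDerivAt.prodMk ?_ (hP.prodMk ?_)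
  · exact ((Real.hasDerivAt_tan hcos).comp τ (hS.div_const 2)).congr_deriv
      (div_mul_div_comm _ _ _ _ |>.trans (by rw [one_mul, mul_comm]))
  · exact ((((hasDerivAt_id' τ).const_mul 2).exp).const_mul ν).congr_deriv (by ring)

theorem isProfile_two_mul_arctan {γ : ℝ → ℝ × ℝ × ℝ}
    (hγ : ∀ t, HasDerivAt γ (profileField k b c (γ t)) t) {t₀ : ℝ}
    (hν : (γ t₀).2.2 = ν * Real.exp (2 * t₀)) (hne : (γ t₀).1 ≠ 0)
    (hS : (fun τ => 2 * Real.arctan (γ τ).1) =O[atBot] fun τ => Real.exp (κ * τ))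
    (hP : (fun τ => (γ τ).2.1) =O[atBot] fun τ => Real.exp (κ * τ)) :
    IsProfile k b c ν κ fun τ => 2 * Real.arctan (γ τ).1 where
  contDiff :=
    contDiff_const.mul (contDiff_infty_of_forall_hasDerivAt contDiff_profileField hγ).fst.arctan
  one_add_cos_pos τ := by
    rw [Real.cos_two_mul]
    linarith [pow_pos (Real.cos_arctan_pos (γ τ).1) 2]
  deriv_deriv τ := by
    have hmem : 2 * Real.arctan (γ τ).1 ∈ Ioo (-Real.pi) Real.pi :=
      ⟨by linarith [Real.neg_pi_div_two_lt_arctan (γ τ).1],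
        by linarith [Real.arctan_lt_pi_div_two (γ τ).1]⟩
    have hfield :=
      profileField_tan (k := k) (b := b) (c := c) (p := (γ τ).2.1) (e := (γ τ).2.2) hmem
    rw [mul_div_cancel_left₀ _ two_ne_zero, Real.tan_arctan] at hfield
    rw [deriv_eq (hasDerivAt_two_mul_arctan_of_profileField hγ),
      (hasDerivAt_triple (hγ τ)).2.1.deriv, hfield, snd_snd_eq_of_profileField hγ hν]
  isBigO := hS
  isBigO_deriv := by rwa [deriv_eq (hasDerivAt_two_mul_arctan_of_profileField hγ)]
  exists_ne_zero := ⟨t₀, by simpa using hne⟩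

theorem exists_isProfile (hc : c ≠ 0) (hκ : 0 < κ) (hκ2 : κ ^ 2 = -(k ^ 2 + b * k) - c ^ 2 / 4)
    (ν : ℝ) : ∃ S, IsProfile k b c ν κ S := by
  have hpi := Real.pi_gt_three
  have hdom : Icc 0 2 ⊆ {s | 1 + Real.cos s ≠ 0} := fun s hs => by
    have := Real.cos_lt_cos_of_nonneg_of_le_pi hs.1 le_rfl (by linarith [hs.2] : s < Real.pi)
    rw [Real.cos_pi] at this
    exact (by linarith : 0 < 1 + Real.cos s).ne'
  obtain ⟨T, hT, C, S, P, hSP⟩ := exists_decaying_solution_near_atBot hκ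
    (isOpen_ne_fun (by fun_prop) continuous_const) hdom (contDiffOn_radialForce (k := k) (b := b))
    (by simp) (hasDerivAt_radialForce_zero.deriv.trans hκ2.symm) ν
  have hrange (τ : ℝ) (hτ : τ < T) : 0 < S τ ∧ S τ < Real.pi := by
    obtain ⟨-, -, hpos, hle, -⟩ := hSP τ hτ
    have := Real.exp_le_one_iff.2 (mul_nonpos_of_nonneg_of_nonpos hκ.le (hτ.le.trans hT))
    exact ⟨hpos, by linarith⟩
  obtain ⟨γ, hγ, heq⟩ := exists_forall_hasDerivAt_eqOn_Iio contDiff_profileField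
    (exists_integralCurve_profileField hc) fun τ hτ => hasDerivAt_profile_curve (hSP τ hτ).1
      ((hSP τ hτ).2.1.congr_deriv (add_mul _ _ _).symm)
      ⟨by linarith [(hrange τ hτ).1], (hrange τ hτ).2⟩
  have harctan (τ : ℝ) (hτ : τ < T) : 2 * Real.arctan (γ τ).1 = S τ := by
    rw [heq hτ, Real.arctan_tan] <;> linarith [(hrange τ hτ).1, (hrange τ hτ).2]
  refine ⟨_, isProfile_two_mul_arctan hγ (t₀ := T - 1) (congrArg (·.2.2) (heq (sub_one_lt T))) ?_
    (.of_bound 2 ?_) (.of_bound C ?_)⟩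
  · rw [heq (sub_one_lt T)]
    refine (Real.tan_pos_of_pos_of_lt_pi_div_two ?_ ?_).ne' <;>
      linarith [(hrange _ (sub_one_lt T)).1, (hrange _ (sub_one_lt T)).2]
  · filter_upwards [Iio_mem_atBot T] with τ hτ
    rw [harctan τ hτ, Real.norm_of_nonneg (hrange τ hτ).1.le,
      Real.norm_of_nonneg (Real.exp_pos _).le]
    exact (hSP τ hτ).2.2.2.1
  · filter_upwards [Iio_mem_atBot T] with τ hτ
    rw [heq hτ, Real.norm_of_nonneg (Real.exp_pos _).le]
    exact (hSP τ hτ).2.2.2.2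

end Profile

section PhasePotential

variable {k b c ν κ : ℝ} {S : ℝ → ℝ}

/-- The azimuthal phase `β` of the wave with profile `S`, in the variable `τ = log a`. -/
noncomputable def phase (c : ℝ) (S : ℝ → ℝ) (τ : ℝ) : ℝ :=
  ∫ ρ in (0 : ℝ)..τ, -(c / (1 + Real.cos (S ρ)))

/-- The nonlinear part `∫₀ᵃ (2k/a')(1 - cos s(a')) da'` of `φ`, in the variable `τ = log a`. -/
noncomputable def potential (k : ℝ) (S : ℝ → ℝ) (τ : ℝ) : ℝ :=
  ∫ ρ in Iic τ, 2 * k * (1 - Real.cos (S ρ))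

theorem contDiff_of_hasDerivAt {f f' : ℝ → ℝ} (hf : ∀ τ, HasDerivAt f (f' τ) τ)
    (hf' : ContDiff ℝ (⊤ : ℕ∞) f') : ContDiff ℝ (⊤ : ℕ∞) f :=
  contDiff_infty_iff_deriv.2 ⟨fun τ => (hf τ).differentiableAt, by rwa [deriv_eq hf]⟩

theorem exists_forall_le_norm_le_mul_of_isBigO {E : Type*} [NormedAddCommGroup E] {f : ℝ → E}
    {g : ℝ → ℝ} (hf : Continuous f) (hg : Continuous g) (hpos : ∀ τ, 0 < g τ) (h : f =O[atBot] g)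
    (T : ℝ) : ∃ C, 0 ≤ C ∧ ∀ τ ≤ T, ‖f τ‖ ≤ C * g τ := by
  obtain ⟨C, hC⟩ := h.bound
  obtain ⟨T₀, hT₀⟩ := eventually_atBot.1 hC
  have hquot : Continuous fun τ => ‖f τ‖ / g τ := hf.norm.div hg fun τ => (hpos τ).ne'
  obtain ⟨D, hD⟩ :=
    (isCompact_Icc (a := T₀) (b := T)).exists_bound_of_continuousOn hquot.continuousOn
  refine ⟨max (max C D) 0, le_max_right _ _, fun τ hτ => ?_⟩
  rcases le_total τ T₀ with hle | hle
  · refine (hT₀ τ hle).trans ?_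
    rw [Real.norm_of_nonneg (hpos τ).le]
    exact mul_le_mul_of_nonneg_right ((le_max_left _ _).trans (le_max_left _ _)) (hpos τ).le
  · have := hD τ ⟨hle, hτ⟩
    rw [Real.norm_of_nonneg (div_nonneg (norm_nonneg _) (hpos τ).le), div_le_iff₀ (hpos τ)] at this
    exact this.trans
      (mul_le_mul_of_nonneg_right ((le_max_right _ _).trans (le_max_left _ _)) (hpos τ).le)

theorem abs_one_sub_cos_le (s : ℝ) : |1 - Real.cos s| ≤ |s| := by
  simpa [abs_sub_comm] using Real.abs_cos_sub_cos_le s 0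

theorem integral_div_eq_potential (k : ℝ) (S : ℝ → ℝ) {a : ℝ} (ha : 0 < a) :
    ∫ x in (0 : ℝ)..a, 2 * k / x * (1 - Real.cos (S (Real.log x)))
      = potential k S (Real.log a) := by
  have himage : Real.exp '' Iic (Real.log a) = Ioc 0 a := by
    simp [Real.exp_log ha]
  rw [intervalIntegral.integral_of_le ha.le, ← himage, integral_image_eq_integral_abs_deriv_smul
    measurableSet_Iic (fun x _ => (Real.hasDerivAt_exp x).hasDerivWithinAt)
    Real.exp_injective.injOn, potential]
  refine setIntegral_congr_fun measurableSet_Iic fun x _ => ?_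
  have := Real.exp_ne_zero x
  simp only [Real.log_exp, Real.abs_exp, smul_eq_mul]
  field_simp

namespace IsProfile

variable (h : IsProfile k b c ν κ S)
include h

theorem contDiff_phase_integrand :
    ContDiff ℝ (⊤ : ℕ∞) fun ρ => -(c / (1 + Real.cos (S ρ))) :=
  (contDiff_const.div (contDiff_const.add h.contDiff.cos) fun ρ => (h.one_add_cos_pos ρ).ne').neg

theorem hasDerivAt_phase (τ : ℝ) : HasDerivAt (phase c S) (-(c / (1 + Real.cos (S τ)))) τ :=
  h.contDiff_phase_integrand.continuous.integral_hasStrictDerivAt 0 τ |>.hasDerivAt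

theorem contDiff_phase : ContDiff ℝ (⊤ : ℕ∞) (phase c S) :=
  contDiff_of_hasDerivAt h.hasDerivAt_phase h.contDiff_phase_integrand

theorem contDiff_deriv : ContDiff ℝ (⊤ : ℕ∞) (deriv S) :=
  (contDiff_infty_iff_deriv.1 h.contDiff).2

theorem hasDerivAt (τ : ℝ) : HasDerivAt S (deriv S τ) τ :=
  (h.contDiff.differentiable (by simp) τ).hasDerivAt

theorem exists_abs_potential_integrand_le (T : ℝ) :
    ∃ K, ∀ ρ ≤ T, |2 * k * (1 - Real.cos (S ρ))| ≤ K * Real.exp (κ * ρ) := by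
  obtain ⟨C, -, hC⟩ := exists_forall_le_norm_le_mul_of_isBigO h.contDiff.continuous (by fun_prop)
    (fun τ => Real.exp_pos (κ * τ)) h.isBigO T
  refine ⟨|2 * k| * C, fun ρ hρ => ?_⟩
  rw [abs_mul, mul_assoc]
  exact mul_le_mul_of_nonneg_left ((abs_one_sub_cos_le _).trans (hC ρ hρ)) (abs_nonneg _)

theorem continuous_potential_integrand : Continuous fun ρ => 2 * k * (1 - Real.cos (S ρ)) :=
  continuous_const.mul (continuous_const.sub (Real.continuous_cos.comp h.contDiff.continuous))

omit h in
theorem potential_eq_duhamel :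
    potential k S = duhamel 0 fun ρ => 2 * k * (1 - Real.cos (S ρ)) := by
  funext τ
  simp [potential, duhamel]

theorem hasDerivAt_potential (hκ : 0 < κ) (τ : ℝ) :
    HasDerivAt (potential k S) (2 * k * (1 - Real.cos (S τ))) τ := by
  obtain ⟨K, hK⟩ := h.exists_abs_potential_integrand_le 0
  have := hasDerivAt_duhamel (γ := 0) (by simpa using hκ) h.continuous_potential_integrand hK τ
  rw [← potential_eq_duhamel] at this
  exact this.congr_deriv (by ring)

theorem contDiff_potential (hκ : 0 < κ) : ContDiff ℝ (⊤ : ℕ∞) (potential k S) :=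
  contDiff_of_hasDerivAt (h.hasDerivAt_potential hκ)
    (contDiff_const.mul (contDiff_const.sub h.contDiff.cos))

theorem isBigO_potential (hκ : 0 < κ) :
    potential k S =O[atBot] fun τ => Real.exp (κ * τ) := by
  obtain ⟨K, hK⟩ := h.exists_abs_potential_integrand_le 0
  refine .of_bound (K / (0 + κ)) ?_
  filter_upwards [eventually_le_atBot 0] with τ hτ
  rw [Real.norm_of_nonneg (Real.exp_pos _).le, potential_eq_duhamel]
  exact abs_duhamel_le (by simpa using hκ) hK hτ

end IsProfile

end PhasePotential

section IntegrationByParts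

variable {E F G H : Type*} [NormedAddCommGroup E] [NormedSpace ℝ E] [MeasurableSpace E]
  [BorelSpace E] {μ : Measure E} [NormedAddCommGroup F]

theorem locallyIntegrable_comp_continuousLinearEquiv [FiniteDimensional ℝ E] [μ.IsAddHaarMeasure]
    {f : E → F} (hf : LocallyIntegrable f μ) (L : E ≃L[ℝ] E) :
    LocallyIntegrable (fun x => f (L x)) μ := by
  refine (locallyIntegrable_map_homeomorph L.toHomeomorph).1 ?_
  have : (μ.map L).IsAddHaarMeasure := L.isAddHaarMeasure_map μ
  change LocallyIntegrable f (μ.map L)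
  rw [Measure.isAddLeftInvariant_eq_smul (μ.map L) μ]
  intro x
  obtain ⟨U, hU, hfU⟩ := hf x
  refine ⟨U, hU, ?_⟩
  rw [IntegrableOn, Measure.restrict_smul]
  exact hfU.smul_measure_nnreal

theorem locallyIntegrable_mul_prod {X Y : Type*} [TopologicalSpace X] [MeasurableSpace X]
    [TopologicalSpace Y] [MeasurableSpace Y] {μ : Measure X} {ν : Measure Y} [SFinite μ] [SFinite ν]
    {f : X → ℝ} {g : Y → ℝ} (hf : LocallyIntegrable f μ) (hg : LocallyIntegrable g ν) :
    LocallyIntegrable (fun z : X × Y => f z.1 * g z.2) (μ.prod ν) := by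
  rintro ⟨x, y⟩
  obtain ⟨U, hU, hfU⟩ := hf x
  obtain ⟨V, hV, hgV⟩ := hg y
  refine ⟨U ×ˢ V, prod_mem_nhds hU hV, ?_⟩
  rw [IntegrableOn, ← Measure.prod_restrict]
  exact Integrable.mul_prod hfU hgV

variable [NormedSpace ℝ F] [NormedAddCommGroup G] [NormedSpace ℝ G] [NormedAddCommGroup H]
  [NormedSpace ℝ H] [FiniteDimensional ℝ E]

theorem integral_eq_zero_of_hasDerivAt_lines [CompleteSpace F] [μ.IsAddHaarMeasure] {v : E}
    {g g' : E → F} (hg : Integrable g μ) (hg' : Integrable g' μ)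
    (hline : ∀ᵐ x ∂μ, ∃ s : Set ℝ, s.Countable ∧ (Continuous fun r : ℝ => g (x + r • v)) ∧
      ∀ r ∉ s, HasDerivAt (fun r : ℝ => g (x + r • v)) (g' (x + r • v)) r) :
    ∫ x, g' x ∂μ = 0 := by
  set ι : Measure ℝ := volume.restrict (Ioc 0 1)
  have hshear : MeasurePreserving (fun z : ℝ × E => (z.1, z.2 + z.1 • v)) (ι.prod μ) (ι.prod μ) :=
    (MeasurePreserving.id ι).skew_product (by fun_prop)
      (ae_of_all _ fun r => map_add_right_eq_self μ (r • v))
  have hint : Integrable (fun z : ℝ × E => g' (z.2 + z.1 • v)) (ι.prod μ) :=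
    hshear.integrable_comp_of_integrable (hg'.comp_snd ι)
  have hinner : ∀ᵐ x ∂μ, ∫ r, g' (x + r • v) ∂ι = g (x + v) - g x := by
    filter_upwards [hline, hint.swap.prod_right_ae] with x ⟨s, hs, hcont, hderiv⟩ hx
    have := MeasureTheory.integral_eq_of_hasDerivAt_off_countable (a := 0) (b := 1) _ _ hs
      hcont.continuousOn (fun r hr => hderiv r hr.2)
      ((intervalIntegrable_iff_integrableOn_Ioc_of_le zero_le_one).2 hx)
    simpa [intervalIntegral.integral_of_le zero_le_one] using this
  calc ∫ x, g' x ∂μ = ∫ _ : ℝ, ∫ x, g' x ∂μ ∂ι := by simp [ι]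
    _ = ∫ r, ∫ x, g' (x + r • v) ∂μ ∂ι := by simp only [integral_add_right_eq_self]
    _ = ∫ x, ∫ r, g' (x + r • v) ∂ι ∂μ := integral_integral_swap hint
    _ = ∫ x, (g (x + v) - g x) ∂μ := integral_congr_ae hinner
    _ = 0 := by rw [integral_sub (hg.comp_add_right v) hg, integral_add_right_eq_self, sub_self]

theorem integrable_bilin_of_hasCompactSupport {B : F × G → H} (hB : IsBoundedBilinearMap ℝ B)
    {w : E → F} (hw : LocallyIntegrable w μ) {χ : E → G} (hχ : Continuous χ)
    (hsupp : HasCompactSupport χ) :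
    Integrable (fun x => B (w x, χ x)) μ := by
  obtain ⟨C, -, hC⟩ := hB.bound
  have hdom : Integrable (fun x => C * ‖‖χ x‖ • w x‖) μ :=
    (hw.integrable_smul_left_of_hasCompactSupport hχ.norm hsupp.norm).norm.const_mul C
  refine hdom.mono' (hB.continuous.comp_aestronglyMeasurable
    (hw.aestronglyMeasurable.prodMk hχ.aestronglyMeasurable)) (ae_of_all _ fun x => ?_)
  refine (hC _ _).trans_eq ?_
  rw [norm_smul, norm_norm]
  ring

theorem integral_bilin_fderiv_eq_neg [CompleteSpace H] [μ.IsAddHaarMeasure] {v : E} {B : F × G → H}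
    (hB : IsBoundedBilinearMap ℝ B) {w w' : E → F} (hw : LocallyIntegrable w μ)
    (hw' : LocallyIntegrable w' μ)
    (hline : ∀ᵐ x ∂μ, ∃ s : Set ℝ, s.Countable ∧ (Continuous fun r : ℝ => w (x + r • v)) ∧
      ∀ r ∉ s, HasDerivAt (fun r : ℝ => w (x + r • v)) (w' (x + r • v)) r)
    {ψ : E → G} (hψ : ContDiff ℝ 1 ψ) (hsupp : HasCompactSupport ψ) :
    ∫ x, B (w x, fderiv ℝ ψ x v) ∂μ = -∫ x, B (w' x, ψ x) ∂μ := by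
  have hψ' : Continuous fun x => fderiv ℝ ψ x v :=
    (hψ.continuous_fderiv one_ne_zero).clm_apply continuous_const
  have hwψ' := integrable_bilin_of_hasCompactSupport hB hw hψ' (hsupp.fderiv_apply ℝ v)
  have hw'ψ := integrable_bilin_of_hasCompactSupport hB hw' hψ.continuous hsupp
  have hzero := integral_eq_zero_of_hasDerivAt_lines (v := v)
    (integrable_bilin_of_hasCompactSupport hB hw hψ.continuous hsupp) (hwψ'.add hw'ψ) <| by
      filter_upwards [hline] with x ⟨s, hs, hcont, hderiv⟩
      have hψline : ∀ r : ℝ, HasDerivAt (fun r : ℝ => ψ (x + r • v)) (fderiv ℝ ψ (x + r • v) v) r :=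
        fun r => ((hψ.differentiable one_ne_zero _).hasFDerivAt.comp_hasDerivAt r
          (((hasDerivAt_id r).smul_const v).const_add x)).congr_deriv (by simp)
      refine ⟨s, hs, hB.continuous.comp (hcont.prodMk (hψ.continuous.comp (by fun_prop))),
        fun r hr => ?_⟩
      exact (((hB.hasFDerivAt _).comp_hasDerivAt r ((hderiv r hr).prodMk (hψline r)))).congr_deriv
        (by simp)
  rw [integral_add' hwψ' hw'ψ] at hzero
  exact eq_neg_of_add_eq_zero_left hzero

end IntegrationByParts

section NullGrowth

/-- The null coordinate `ξ_σ = x + σ y` on `ℝ × ℝ²`, for a sign `σ = ±1`: in the coordinates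
`(t, ξ₁, ξ₋₁)` the operator `∂ₓₓ - ∂_yy` factors as `∂₁ ∂₋₁` and the cross is `ξ₁ ξ₋₁ = 0`. -/
noncomputable def nullCoord (σ : ℝ) : ℝ × ℝ × ℝ →L[ℝ] ℝ :=
  (.fst ℝ ℝ ℝ + σ • .snd ℝ ℝ ℝ) ∘L .snd ℝ ℝ (ℝ × ℝ)

/-- The null direction `∂ₓ + σ ∂_y`; for `σ = ±1` it is twice the coordinate field of `ξ_σ`. -/
def nullDir (σ : ℝ) : ℝ × ℝ × ℝ := (0, 1, σ)

/-- The complement of the cross `{|x| = |y|}`. -/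
def offCross : Set (ℝ × ℝ × ℝ) := {p | |p.2.1| ≠ |p.2.2|}

variable {σ α β α' β' : ℝ} {p : ℝ × ℝ × ℝ}

theorem nullCoord_apply (σ : ℝ) (p : ℝ × ℝ × ℝ) : nullCoord σ p = p.2.1 + σ * p.2.2 := by
  simp [nullCoord]

theorem nullCoord_nullDir (hσ : σ ^ 2 = 1) : nullCoord σ (nullDir σ) = 2 := by
  rw [nullCoord_apply, nullDir]
  linear_combination hσ

theorem nullCoord_neg_nullDir (hσ : σ ^ 2 = 1) : nullCoord (-σ) (nullDir σ) = 0 := by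
  rw [nullCoord_apply, nullDir]
  linear_combination -hσ

theorem nullCoord_mul_nullCoord_neg (hσ : σ ^ 2 = 1) (p : ℝ × ℝ × ℝ) :
    nullCoord σ p * nullCoord (-σ) p = p.2.1 ^ 2 - p.2.2 ^ 2 := by
  rw [nullCoord_apply, nullCoord_apply]
  linear_combination -p.2.2 ^ 2 * hσ

theorem mem_offCross_iff (hσ : σ ^ 2 = 1) :
    p ∈ offCross ↔ nullCoord σ p ≠ 0 ∧ nullCoord (-σ) p ≠ 0 := by
  rw [← mul_ne_zero_iff, nullCoord_mul_nullCoord_neg hσ, sub_ne_zero, Ne, sq_eq_sq_iff_abs_eq_abs]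
  rfl

theorem isOpen_offCross : IsOpen offCross :=
  isOpen_ne_fun (by fun_prop) (by fun_prop)

instance isAddHaarMeasure_volume_spacetime :
    (volume : Measure (ℝ × ℝ × ℝ)).IsAddHaarMeasure :=
  Measure.prod.instIsAddHaarMeasure volume volume

theorem ae_nullCoord_ne_zero (σ : ℝ) : ∀ᵐ p : ℝ × ℝ × ℝ, nullCoord σ p ≠ 0 := by
  have hker : (nullCoord σ).toLinearMap.ker ≠ ⊤ := fun h => by
    have : ((0, 1, 0) : ℝ × ℝ × ℝ) ∈ (nullCoord σ).toLinearMap.ker := h ▸ Submodule.mem_top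
    simp [nullCoord_apply] at this
  exact compl_mem_ae_iff.2 (Measure.addHaar_submodule volume _ hker)

theorem ae_mem_offCross : ∀ᵐ p : ℝ × ℝ × ℝ, p ∈ offCross := by
  filter_upwards [ae_nullCoord_ne_zero 1, ae_nullCoord_ne_zero (-1)] with p h₁ h₂
  exact (mem_offCross_iff (one_pow 2)).2 ⟨h₁, h₂⟩

theorem locallyIntegrable_abs_rpow (hα : -1 < α) : LocallyIntegrable fun x : ℝ => |x| ^ α :=
  locallyIntegrable_of_norm_le_rpow (C := 1) (α := -α) (by simp) (by simpa using by linarith)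
    (ae_of_all _ fun x => by simp [abs_of_nonneg (Real.rpow_nonneg (abs_nonneg x) α)])
    (measurable_abs.pow_const α).aestronglyMeasurable

theorem locallyIntegrable_nullCoord_rpow (hσ : σ ^ 2 = 1) (hα : -1 < α) (hβ : -1 < β) :
    LocallyIntegrable fun p : ℝ × ℝ × ℝ => |nullCoord σ p| ^ α * |nullCoord (-σ) p| ^ β := by
  have hone : LocallyIntegrable fun _ : ℝ => (1 : ℝ) := locallyIntegrable_const 1
  have hprod : LocallyIntegrable (fun p : ℝ × ℝ × ℝ => 1 * (|p.2.1| ^ α * |p.2.2| ^ β)) volume :=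
    locallyIntegrable_mul_prod hone
    (locallyIntegrable_mul_prod (locallyIntegrable_abs_rpow hα) (locallyIntegrable_abs_rpow hβ))
  let L : (ℝ × ℝ × ℝ) ≃L[ℝ] (ℝ × ℝ × ℝ) := .equivOfInverse
    ((ContinuousLinearMap.fst ℝ ℝ (ℝ × ℝ)).prod ((nullCoord σ).prod (nullCoord (-σ))))
    ((ContinuousLinearMap.fst ℝ ℝ (ℝ × ℝ)).prod
      (((1 / 2 : ℝ) • nullCoord 1).prod ((σ / 2) • nullCoord (-1))))
    (fun p => by
      ext
      · simp
      · simp [nullCoord_apply]; ring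
      · simp [nullCoord_apply]; linear_combination p.2.2 * hσ)
    (fun p => by
      ext
      · simp
      · simp [nullCoord_apply]; linear_combination (p.2.1 - p.2.2) / 2 * hσ
      · simp [nullCoord_apply]; linear_combination -(p.2.1 - p.2.2) / 2 * hσ)
  exact (locallyIntegrable_comp_continuousLinearEquiv hprod L).congr
    (ae_of_all _ fun p => by simp [L])

variable {E F G : Type*} [NormedAddCommGroup E] [NormedAddCommGroup F] [NormedAddCommGroup G]

/-- `f` is continuous off the cross and `O(|ξ_σ|^α |ξ_{-σ}|^β)` there, locally uniformly in
`(x, y)` and uniformly in `t`. -/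
structure HasNullGrowth (σ α β : ℝ) (f : ℝ × ℝ × ℝ → E) : Prop where
  continuousOn : ContinuousOn f offCross
  bound : ∀ M : ℝ, ∃ C, ∀ p ∈ offCross, |nullCoord σ p| ≤ M → |nullCoord (-σ) p| ≤ M →
    ‖f p‖ ≤ C * (|nullCoord σ p| ^ α * |nullCoord (-σ) p| ^ β)

theorem rpow_le_rpow_mul_rpow_sub {x M : ℝ} (hx : 0 < x) (hxM : x ≤ M) (hα : α' ≤ α) :
    x ^ α ≤ M ^ (α - α') * x ^ α' := by
  rw [show x ^ α = x ^ (α - α') * x ^ α' by rw [← Real.rpow_add hx, sub_add_cancel]]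
  gcongr

theorem exists_abs_log_le_rpow {ε : ℝ} (hε : 0 < ε) (M : ℝ) :
    ∃ C, ∀ x : ℝ, x ≠ 0 → |x| ≤ M → |Real.log x| ≤ C * |x| ^ (-ε) := by
  refine ⟨(M ^ (ε - -ε) + 1) / ε, fun x hx hxM => ?_⟩
  have hpos := abs_pos.2 hx
  have hupper : Real.log |x| ≤ |x| ^ ε / ε := Real.log_le_rpow_div hpos.le hε
  have hlower : -Real.log |x| ≤ |x| ^ (-ε) / ε := by
    rw [← Real.log_inv, Real.rpow_neg hpos.le, ← Real.inv_rpow hpos.le]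
    exact Real.log_le_rpow_div (inv_nonneg.2 hpos.le) hε
  have hcompare := rpow_le_rpow_mul_rpow_sub hpos hxM (by linarith : -ε ≤ ε)
  have hnonneg := Real.rpow_nonneg hpos.le (-ε)
  have hM := Real.rpow_nonneg (hpos.le.trans hxM) (ε - -ε)
  rw [← Real.log_abs, abs_le', div_mul_eq_mul_div, le_div_iff₀ hε, le_div_iff₀ hε]
  rw [le_div_iff₀ hε] at hupper hlower
  constructor <;> nlinarith

namespace HasNullGrowth

variable {f g : ℝ × ℝ × ℝ → E}

theorem exists_nonneg_bound (hf : HasNullGrowth σ α β f) (M : ℝ) :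
    ∃ C, 0 ≤ C ∧ ∀ p ∈ offCross, |nullCoord σ p| ≤ M → |nullCoord (-σ) p| ≤ M →
      ‖f p‖ ≤ C * (|nullCoord σ p| ^ α * |nullCoord (-σ) p| ^ β) := by
  obtain ⟨C, hC⟩ := hf.bound M
  refine ⟨max C 0, le_max_right _ _, fun p hp h₁ h₂ => (hC p hp h₁ h₂).trans ?_⟩
  gcongr
  exact le_max_left _ _

theorem swap (hf : HasNullGrowth σ α β f) : HasNullGrowth (-σ) β α f := by
  refine ⟨hf.continuousOn, fun M => ?_⟩
  obtain ⟨C, hC⟩ := hf.bound M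
  refine ⟨C, fun p hp h₁ h₂ => ?_⟩
  rw [neg_neg] at h₂ ⊢
  rw [mul_comm (_ ^ β)]
  exact hC p hp h₂ h₁

theorem mono (hf : HasNullGrowth σ α β f) (hσ : σ ^ 2 = 1) (hα : α' ≤ α) (hβ : β' ≤ β) :
    HasNullGrowth σ α' β' f := by
  refine ⟨hf.continuousOn, fun M => ?_⟩
  obtain ⟨C, hC0, hC⟩ := hf.exists_nonneg_bound M
  refine ⟨C * (M ^ (α - α') * M ^ (β - β')), fun p hp h₁ h₂ => (hC p hp h₁ h₂).trans ?_⟩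
  obtain ⟨hξ, hη⟩ := (mem_offCross_iff hσ).1 hp
  have hM : 0 ≤ M := (abs_nonneg _).trans h₁
  calc C * (|nullCoord σ p| ^ α * |nullCoord (-σ) p| ^ β)
      ≤ C * ((M ^ (α - α') * |nullCoord σ p| ^ α') * (M ^ (β - β') * |nullCoord (-σ) p| ^ β')) := by
        gcongr
        · exact rpow_le_rpow_mul_rpow_sub (abs_pos.2 hξ) h₁ hα
        · exact rpow_le_rpow_mul_rpow_sub (abs_pos.2 hη) h₂ hβ
    _ = _ := by ring

theorem add (hf : HasNullGrowth σ α β f) (hg : HasNullGrowth σ α β g) :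
    HasNullGrowth σ α β fun p => f p + g p := by
  refine ⟨hf.continuousOn.add hg.continuousOn, fun M => ?_⟩
  obtain ⟨C, hC⟩ := hf.bound M
  obtain ⟨D, hD⟩ := hg.bound M
  refine ⟨C + D, fun p hp h₁ h₂ => (norm_add_le _ _).trans ?_⟩
  rw [add_mul]
  exact add_le_add (hC p hp h₁ h₂) (hD p hp h₁ h₂)

theorem congr (hf : HasNullGrowth σ α β f)
    (h : EqOn g f offCross) : HasNullGrowth σ α β g := by
  refine ⟨hf.continuousOn.congr h, fun M => ?_⟩
  obtain ⟨C, hC⟩ := hf.bound M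
  exact ⟨C, fun p hp h₁ h₂ => h hp ▸ hC p hp h₁ h₂⟩

theorem continuousAt (hf : HasNullGrowth σ α β f) (hσ : σ ^ 2 = 1) (hα : 0 < α)
    (hp : nullCoord σ p = 0) (hβ : nullCoord (-σ) p ≠ 0 ∨ 0 ≤ β)
    (hzero : ∀ᶠ q in nhds p, q ∉ offCross → f q = 0) : ContinuousAt f p := by
  have hcoord : ∀ τ, ContinuousAt (fun q => |nullCoord τ q|) p := fun τ =>
    (nullCoord τ).continuous.abs.continuousAt
  obtain ⟨C, hC0, hC⟩ :=
    hf.exists_nonneg_bound (|nullCoord σ p| + |nullCoord (-σ) p| + 1)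
  have hmajorant : ContinuousAt
      (fun q => C * (|nullCoord σ q| ^ α * |nullCoord (-σ) q| ^ β)) p :=
    continuousAt_const.mul (((hcoord σ).rpow_const (.inr hα.le)).mul
      ((hcoord (-σ)).rpow_const (hβ.imp_left abs_ne_zero.2)))
  have hp_off : p ∉ offCross := fun h => ((mem_offCross_iff hσ).1 h).1 hp
  rw [ContinuousAt, hzero.self_of_nhds hp_off]
  refine squeeze_zero_norm' ?_ (by
    simpa [ContinuousAt, hp, Real.zero_rpow hα.ne'] using hmajorant)
  have hlt : ∀ τ, |nullCoord τ p| < |nullCoord σ p| + |nullCoord (-σ) p| + 1 → ∀ᶠ q in nhds p,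
      |nullCoord τ q| ≤ |nullCoord σ p| + |nullCoord (-σ) p| + 1 := fun τ h =>
    ((hcoord τ).eventually_lt continuousAt_const h).mono fun q hq => hq.le
  filter_upwards [hzero, hlt σ (by linarith [abs_nonneg (nullCoord (-σ) p)]),
    hlt (-σ) (by linarith [abs_nonneg (nullCoord σ p)])] with q hq h₁ h₂
  by_cases hmem : q ∈ offCross
  · exact hC q hmem h₁ h₂
  · rw [hq hmem, norm_zero]
    positivity

variable [NormedSpace ℝ E] [NormedSpace ℝ F] [NormedSpace ℝ G]

theorem bilin (hσ : σ ^ 2 = 1) {B : E × F → G} (hB : IsBoundedBilinearMap ℝ B)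
    (hf : HasNullGrowth σ α β f) {g : ℝ × ℝ × ℝ → F} (hg : HasNullGrowth σ α' β' g) :
    HasNullGrowth σ (α + α') (β + β') fun p => B (f p, g p) := by
  refine ⟨hB.continuous.comp_continuousOn (hf.continuousOn.prodMk hg.continuousOn), fun M => ?_⟩
  obtain ⟨K, hK0, hK⟩ := hB.bound
  obtain ⟨C, hC0, hC⟩ := hf.exists_nonneg_bound M
  obtain ⟨D, -, hD⟩ := hg.exists_nonneg_bound M
  refine ⟨K * C * D, fun p hp h₁ h₂ => ?_⟩
  obtain ⟨hξ, hη⟩ := (mem_offCross_iff hσ).1 hp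
  rw [Real.rpow_add (abs_pos.2 hξ), Real.rpow_add (abs_pos.2 hη)]
  calc ‖B (f p, g p)‖ ≤ K * ‖f p‖ * ‖g p‖ := hK _ _
    _ ≤ K * (C * (|nullCoord σ p| ^ α * |nullCoord (-σ) p| ^ β))
        * (D * (|nullCoord σ p| ^ α' * |nullCoord (-σ) p| ^ β')) := by
        gcongr
        exacts [hC p hp h₁ h₂, hD p hp h₁ h₂]
    _ = _ := by ring

theorem const_smul (r : ℝ) (hf : HasNullGrowth σ α β f) :
    HasNullGrowth σ α β fun p => r • f p := by
  refine ⟨hf.continuousOn.const_smul r, fun M => ?_⟩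
  obtain ⟨C, hC⟩ := hf.bound M
  refine ⟨‖r‖ * C, fun p hp h₁ h₂ => ?_⟩
  rw [norm_smul, mul_assoc]
  exact mul_le_mul_of_nonneg_left (hC p hp h₁ h₂) (norm_nonneg r)

omit [NormedSpace ℝ E] in
theorem locallyIntegrable (hf : HasNullGrowth σ α β f) (hσ : σ ^ 2 = 1) (hα : -1 < α)
    (hβ : -1 < β) : LocallyIntegrable f := by
  have hmeas : AEStronglyMeasurable f volume := by
    have := hf.continuousOn.aestronglyMeasurable (μ := volume) isOpen_offCross.measurableSet
    rwa [Measure.restrict_eq_self_of_ae_mem ae_mem_offCross] at this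
  refine locallyIntegrable_iff.2 fun K hK => ?_
  obtain ⟨M₁, hM₁⟩ := hK.exists_bound_of_continuousOn (nullCoord σ).continuous.continuousOn
  obtain ⟨M₂, hM₂⟩ := hK.exists_bound_of_continuousOn (nullCoord (-σ)).continuous.continuousOn
  obtain ⟨C, hC⟩ := hf.bound (max M₁ M₂)
  have hdom :=
    (locallyIntegrable_iff.1 (locallyIntegrable_nullCoord_rpow hσ hα hβ) K hK).const_mul C
  refine hdom.mono' hmeas.restrict ((ae_restrict_iff' hK.measurableSet).2 ?_)
  filter_upwards [ae_mem_offCross] with p hp hpK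
  exact hC p hp ((hM₁ p hpK).trans (le_max_left _ _)) ((hM₂ p hpK).trans (le_max_right _ _))

end HasNullGrowth

theorem hasNullGrowth_const (σ : ℝ) (v : E) : HasNullGrowth σ 0 0 fun _ => v :=
  ⟨continuousOn_const, fun _ => ⟨‖v‖, fun _ _ _ _ => by simp⟩⟩

theorem hasNullGrowth_log (hσ : σ ^ 2 = 1) {ε : ℝ} (hε : 0 < ε) :
    HasNullGrowth σ (-ε) 0 fun p => Real.log (nullCoord σ p) := by
  refine ⟨(nullCoord σ).continuous.continuousOn.log fun p hp => ((mem_offCross_iff hσ).1 hp).1,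
    fun M => ?_⟩
  obtain ⟨C, hC⟩ := exists_abs_log_le_rpow hε M
  exact ⟨C, fun p hp h₁ _ => by
    simpa using hC _ ((mem_offCross_iff hσ).1 hp).1 h₁⟩

theorem hasNullGrowth_inv (hσ : σ ^ 2 = 1) :
    HasNullGrowth σ (-1) 0 fun p => (nullCoord σ p)⁻¹ :=
  ⟨(nullCoord σ).continuous.continuousOn.inv₀ fun p hp => ((mem_offCross_iff hσ).1 hp).1,
    fun _ => ⟨1, fun p _ _ _ => by simp [Real.rpow_neg_one]⟩⟩

end NullGrowth

section CrossRegular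

variable {E F G : Type*} [NormedAddCommGroup E] [NormedSpace ℝ E] [NormedAddCommGroup F]
  [NormedSpace ℝ F] [NormedAddCommGroup G] [NormedSpace ℝ G]
  {σ α β α' β' δ : ℝ} {f : ℝ × ℝ × ℝ → E} {p : ℝ × ℝ × ℝ}

/-- The derivative `∂_σ = ∂ₓ + σ ∂_y` along the null direction `nullDir σ`. -/
noncomputable def nullDeriv (σ : ℝ) (f : ℝ × ℝ × ℝ → E) (p : ℝ × ℝ × ℝ) : E :=
  fderiv ℝ f p (nullDir σ)

theorem nullDeriv_bilin {B : E × F → G} (hB : IsBoundedBilinearMap ℝ B) {g : ℝ × ℝ × ℝ → F}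
    (hf : DifferentiableAt ℝ f p) (hg : DifferentiableAt ℝ g p) :
    nullDeriv σ (fun q => B (f q, g q)) p
      = B (f p, nullDeriv σ g p) + B (nullDeriv σ f p, g p) := by
  have : HasFDerivAt (fun q => B (f q, g q)) _ p :=
    (hB.hasFDerivAt (f p, g p)).comp p (hf.hasFDerivAt.prodMk hg.hasFDerivAt)
  simp [nullDeriv, this.fderiv]

theorem fderiv_apply_eq_zero_of_line {v : ℝ × ℝ × ℝ} (h : ∀ r : ℝ, f (p + r • v) = 0) :
    fderiv ℝ f p v = 0 := by
  by_cases hf : DifferentiableAt ℝ f p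
  · rw [← hf.lineDeriv_eq_fderiv, lineDeriv]
    simp [h]
  · simp [fderiv_zero_of_not_differentiableAt hf]

theorem hasDerivAt_fderiv_line {v : ℝ × ℝ × ℝ} {r : ℝ}
    (hf : DifferentiableAt ℝ f (p + r • v)) :
    HasDerivAt (fun r : ℝ => f (p + r • v)) (fderiv ℝ f (p + r • v) v) r :=
  (hf.hasFDerivAt.comp_hasDerivAt r
    (((hasDerivAt_id r).smul_const v).const_add p)).congr_deriv (by simp)

theorem integral_bilin_nullDeriv_eq_neg [CompleteSpace G] {B : E × F → G}
    (hB : IsBoundedBilinearMap ℝ B) (hσ : σ ^ 2 = 1) (hα : 0 < α) (hβ : -1 < β) (hα' : -1 < α')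
    (hβ' : -1 < β') (hf : HasNullGrowth σ α β f) (hf' : HasNullGrowth σ α' β' (nullDeriv σ f))
    (hzero : ∀ p, nullCoord σ p = 0 → f p = 0) (hd : ∀ p ∈ offCross, DifferentiableAt ℝ f p)
    {ψ : ℝ × ℝ × ℝ → F} (hψ : ContDiff ℝ 1 ψ) (hsupp : HasCompactSupport ψ) :
    ∫ p, B (f p, nullDeriv σ ψ p) = -∫ p, B (nullDeriv σ f p, ψ p) := by
  refine integral_bilin_fderiv_eq_neg hB (hf.locallyIntegrable hσ (by linarith) hβ)
    (hf'.locallyIntegrable hσ hα' hβ') ?_ hψ hsupp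
  filter_upwards [ae_nullCoord_ne_zero (-σ)] with p hp
  have hξ : ∀ r : ℝ, nullCoord σ (p + r • nullDir σ) = nullCoord σ p + r * 2 := fun r => by
    simp [nullCoord_nullDir hσ]
  have hη : ∀ r : ℝ, nullCoord (-σ) (p + r • nullDir σ) = nullCoord (-σ) p := fun r => by
    simp [nullCoord_neg_nullDir hσ]
  refine ⟨{-nullCoord σ p / 2}, countable_singleton _, continuous_iff_continuousAt.2 fun r => ?_,
    fun r hr => hasDerivAt_fderiv_line (hd _ ((mem_offCross_iff hσ).2 ⟨?_, ?_⟩))⟩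
  · refine ContinuousAt.comp (g := f) ?_ (by fun_prop)
    by_cases hr : nullCoord σ (p + r • nullDir σ) = 0
    · refine hf.continuousAt hσ hα hr (.inl ((hη r).trans_ne hp)) ?_
      filter_upwards [(nullCoord (-σ)).continuous.continuousAt.eventually_ne ((hη r).trans_ne hp)]
        with q hq hqoff
      rw [mem_offCross_iff hσ, not_and_not_right] at hqoff
      exact hzero q (not_imp_comm.1 hqoff hq)
    · exact (hd _ ((mem_offCross_iff hσ).2 ⟨hr, (hη r).trans_ne hp⟩)).continuousAt
  · rw [hξ]
    contrapose! hr
    rw [mem_singleton_iff]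
    linarith
  · rwa [hη]

theorem integral_bilin_time_deriv_eq_neg [CompleteSpace G] {B : E × F → G}
    (hB : IsBoundedBilinearMap ℝ B) (hf : LocallyIntegrable f)
    (hf' : LocallyIntegrable fun p => fderiv ℝ f p et)
    (hd : ∀ p ∈ offCross, DifferentiableAt ℝ f p)
    {ψ : ℝ × ℝ × ℝ → F} (hψ : ContDiff ℝ 1 ψ) (hsupp : HasCompactSupport ψ) :
    ∫ p, B (f p, fderiv ℝ ψ p et) = -∫ p, B (fderiv ℝ f p et, ψ p) := by
  refine integral_bilin_fderiv_eq_neg hB hf hf' ?_ hψ hsupp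
  filter_upwards [ae_mem_offCross] with p hp
  have hderiv : ∀ r : ℝ, HasDerivAt (fun r : ℝ => f (p + r • et)) _ r := fun r =>
    hasDerivAt_fderiv_line (hd _ (by simpa [offCross, et] using hp))
  exact ⟨∅, countable_empty, continuous_iff_continuousAt.2 fun r => (hderiv r).continuousAt,
    fun r _ => hderiv r⟩

theorem integral_log_nullCoord_mul_nullDeriv (hσ : σ ^ 2 = 1) {χ : ℝ × ℝ × ℝ → ℝ}
    (hχ : ContDiff ℝ 1 χ) (hsupp : HasCompactSupport χ) :
    ∫ p, Real.log (nullCoord (-σ) p) * nullDeriv σ χ p = 0 := by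
  have hσ' : (-σ) ^ 2 = 1 := by rwa [neg_sq]
  have := integral_bilin_fderiv_eq_neg (μ := volume) (v := nullDir σ)
    (isBoundedBilinearMap_mul (𝕜 := ℝ) (A := ℝ))
    ((hasNullGrowth_log hσ' one_half_pos).locallyIntegrable hσ' (by norm_num) (by norm_num))
    (locallyIntegrable_zero) (ae_of_all _ fun p => ⟨∅, countable_empty, ?_, fun r _ => ?_⟩)
    hχ hsupp
  · simpa [nullDeriv] using this
  · simp [nullCoord_neg_nullDir hσ, continuous_const]
  · simp [nullCoord_neg_nullDir hσ, hasDerivAt_const]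

/-- `g` vanishes on the cross, is smooth off it, and, with its first derivatives and its wave
operator `∂_σ ∂_{-σ} g`, has the growth that formal differentiation of `|ξ₁ ξ₋₁|^δ` predicts.  Both
`u - e₀` and the bounded part of `φ` have this regularity with `δ = κ / 2`. -/
structure CrossRegular (δ : ℝ) (g : ℝ × ℝ × ℝ → E) : Prop where
  contDiffAt : ∀ p ∈ offCross, ContDiffAt ℝ (⊤ : ℕ∞) g p
  eq_zero : ∀ p ∉ offCross, g p = 0
  growth : ∀ σ : ℝ, σ ^ 2 = 1 → HasNullGrowth σ δ δ g
  growth_time : ∀ σ : ℝ, σ ^ 2 = 1 → HasNullGrowth σ δ δ fun p => fderiv ℝ g p et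
  growth_nullDeriv : ∀ σ : ℝ, σ ^ 2 = 1 → HasNullGrowth σ (δ - 1) δ (nullDeriv σ g)
  growth_wave : ∀ σ : ℝ, σ ^ 2 = 1 →
    HasNullGrowth σ (δ - 1) (δ - 1) (nullDeriv σ (nullDeriv (-σ) g))

theorem contDiffAt_nullDeriv (hf : ContDiffAt ℝ (⊤ : ℕ∞) f p) :
    ContDiffAt ℝ (⊤ : ℕ∞) (nullDeriv σ f) p :=
  (hf.fderiv_right (m := (⊤ : ℕ∞)) le_rfl).clm_apply contDiffAt_const

theorem contDiff_nullDeriv (hf : ContDiff ℝ (⊤ : ℕ∞) f) :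
    ContDiff ℝ (⊤ : ℕ∞) (nullDeriv σ f) :=
  contDiff_iff_contDiffAt.2 fun _ => contDiffAt_nullDeriv hf.contDiffAt

theorem fderiv_fderiv_apply (hf : ContDiffAt ℝ (⊤ : ℕ∞) f p) (v w : ℝ × ℝ × ℝ) :
    fderiv ℝ (fun q => fderiv ℝ f q w) p v = fderiv ℝ (fderiv ℝ f) p v w := by
  have hd : DifferentiableAt ℝ (fderiv ℝ f) p :=
    (hf.fderiv_right (m := (⊤ : ℕ∞)) le_rfl).differentiableAt (by simp)
  rw [fderiv_clm_apply hd (differentiableAt_const _)]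
  simp

theorem isSymmSndFDerivAt_of_contDiffAt_top (hf : ContDiffAt ℝ (⊤ : ℕ∞) f p) :
    IsSymmSndFDerivAt ℝ f p := by
  refine hf.isSymmSndFDerivAt ?_
  rw [minSmoothness_of_isRCLikeNormedField]
  exact WithTop.coe_le_coe.2 (le_top : (2 : ℕ∞) ≤ ⊤)

theorem nullDeriv_comm (hf : ContDiffAt ℝ (⊤ : ℕ∞) f p) (σ τ : ℝ) :
    nullDeriv σ (nullDeriv τ f) p = nullDeriv τ (nullDeriv σ f) p :=
  (fderiv_fderiv_apply hf _ _).trans <|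
    ((isSymmSndFDerivAt_of_contDiffAt_top hf).eq _ _).trans (fderiv_fderiv_apply hf _ _).symm

theorem integral_log_nullCoord_mul_wave (hσ : σ ^ 2 = 1) {ρ : ℝ × ℝ × ℝ → ℝ}
    (hρ : ContDiff ℝ (⊤ : ℕ∞) ρ) (hsupp : HasCompactSupport ρ) :
    ∫ p, Real.log (nullCoord σ p) * nullDeriv 1 (nullDeriv (-1) ρ) p = 0 := by
  have hcomm : nullDeriv 1 (nullDeriv (-1) ρ) = nullDeriv (-σ) (nullDeriv σ ρ) := by
    rcases sq_eq_one_iff.1 hσ with rfl | rfl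
    · exact funext fun p => nullDeriv_comm hρ.contDiffAt _ _
    · rw [neg_neg]
  have := integral_log_nullCoord_mul_nullDeriv (σ := -σ) (by rwa [neg_sq])
    ((contDiff_nullDeriv (σ := σ) hρ).of_le (by simp)) (hsupp.fderiv_apply ℝ _)
  simpa only [neg_neg, hcomm] using this

theorem fderiv_fderiv_ex_sub_ey (hf : ContDiffAt ℝ (⊤ : ℕ∞) f p) :
    fderiv ℝ (fun q => fderiv ℝ f q ex) p ex - fderiv ℝ (fun q => fderiv ℝ f q ey) p ey
      = nullDeriv 1 (nullDeriv (-1) f) p := by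
  have hdir : ∀ σ : ℝ, nullDir σ = ex + σ • ey := fun σ => by simp [nullDir, ex, ey]
  rw [show nullDeriv 1 (nullDeriv (-1) f) p = _ from fderiv_fderiv_apply hf _ _,
    fderiv_fderiv_apply hf, fderiv_fderiv_apply hf, hdir, hdir]
  simp only [map_add, map_neg, _root_.add_apply, one_smul, neg_smul,
    (isSymmSndFDerivAt_of_contDiffAt_top hf).eq ey ex]
  abel

namespace CrossRegular

variable (hf : CrossRegular δ f)
include hf

theorem differentiableAt (hp : p ∈ offCross) : DifferentiableAt ℝ f p :=
  (hf.contDiffAt p hp).differentiableAt (by simp)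

theorem continuous (hδ : 0 < δ) : Continuous f := by
  refine continuous_iff_continuousAt.2 fun p => ?_
  by_cases hp : p ∈ offCross
  · exact (hf.differentiableAt hp).continuousAt
  · have hzero := Eventually.of_forall (f := nhds p) hf.eq_zero
    have h1 : (1 : ℝ) ^ 2 = 1 := one_pow 2
    rw [mem_offCross_iff h1, not_and_or, not_not, not_not] at hp
    rcases hp with hp | hp
    · exact (hf.growth 1 h1).continuousAt h1 hδ hp (.inr hδ.le) hzero
    · exact (hf.growth (-1) (by norm_num)).continuousAt (by norm_num) hδ hp (.inr hδ.le) hzero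

theorem nullDeriv_neg_eq_zero (hσ : σ ^ 2 = 1) (hp : nullCoord σ p = 0) :
    nullDeriv (-σ) f p = 0 := by
  refine fderiv_apply_eq_zero_of_line fun r => hf.eq_zero _ fun h => ?_
  have := nullCoord_neg_nullDir (σ := -σ) (by rwa [neg_sq])
  rw [neg_neg] at this
  exact ((mem_offCross_iff hσ).1 h).1 (by simp [hp, this])

theorem integral_bilin_wave_eq [CompleteSpace G] {B : E × F → G} (hB : IsBoundedBilinearMap ℝ B)
    (hδ : 0 < δ) (hσ : σ ^ 2 = 1) {ρ : ℝ × ℝ × ℝ → F} (hρ : ContDiff ℝ (⊤ : ℕ∞) ρ)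
    (hsupp : HasCompactSupport ρ) :
    ∫ p, B (f p, nullDeriv σ (nullDeriv (-σ) ρ) p)
      = ∫ p, B (nullDeriv (-σ) (nullDeriv σ f) p, ρ p) := by
  have hσ' : (-σ) ^ 2 = 1 := by rwa [neg_sq]
  have hρ' : ContDiff ℝ 1 (nullDeriv (-σ) ρ) :=
    (contDiff_nullDeriv hρ).of_le (by simp)
  have hwave := hf.growth_wave (-σ) hσ'
  have hzero : ∀ p, nullCoord (-σ) p = 0 → nullDeriv σ f p = 0 := fun p hp => by
    simpa only [neg_neg] using hf.nullDeriv_neg_eq_zero hσ' hp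
  rw [neg_neg] at hwave
  rw [integral_bilin_nullDeriv_eq_neg hB hσ hδ (by linarith) (by linarith) (by linarith)
      (hf.growth σ hσ) (hf.growth_nullDeriv σ hσ)
      (fun p hp => hf.eq_zero p fun h => ((mem_offCross_iff hσ).1 h).1 hp)
      (fun p => hf.differentiableAt) hρ' (hsupp.fderiv_apply ℝ _),
    integral_bilin_nullDeriv_eq_neg hB hσ' hδ (by linarith) (by linarith) (by linarith)
      (hf.growth_nullDeriv σ hσ).swap hwave hzero
      (fun p hp => (contDiffAt_nullDeriv (hf.contDiffAt p hp)).differentiableAt (by simp))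
      (hρ.of_le (by simp)) hsupp, neg_neg]

end CrossRegular

end CrossRegular

section WeakSolution

theorem isBoundedBilinearMap_dot3 :
    IsBoundedBilinearMap ℝ fun z : (Fin 3 → ℝ) × (Fin 3 → ℝ) => dot3 z.1 z.2 where
  add_left v w z := by simp only [dot3, Pi.add_apply]; ring
  smul_left r v w := by simp only [dot3, Pi.smul_apply, smul_eq_mul]; ring
  add_right v w z := by simp only [dot3, Pi.add_apply]; ring
  smul_right r v w := by simp only [dot3, Pi.smul_apply, smul_eq_mul]; ring
  bound := by
    refine ⟨3, by norm_num, fun v w => ?_⟩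
    have hmul : ∀ i, |v i * w i| ≤ ‖v‖ * ‖w‖ := fun i => by
      rw [abs_mul]
      gcongr
      exacts [norm_le_pi_norm v i, norm_le_pi_norm w i]
    rw [dot3, Real.norm_eq_abs]
    refine (abs_add_three _ _ _).trans ?_
    linarith [hmul 0, hmul 1, hmul 2]

theorem isBoundedBilinearMap_cross3 :
    IsBoundedBilinearMap ℝ fun z : (Fin 3 → ℝ) × (Fin 3 → ℝ) => cross3 z.1 z.2 where
  add_left v w z := by ext i; fin_cases i <;> simp [cross3] <;> ring
  smul_left r v w := by ext i; fin_cases i <;> simp [cross3] <;> ring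
  add_right v w z := by ext i; fin_cases i <;> simp [cross3] <;> ring
  smul_right r v w := by ext i; fin_cases i <;> simp [cross3] <;> ring
  bound := by
    refine ⟨2, two_pos, fun v w => (pi_norm_le_iff_of_nonneg (by positivity)).2 fun i => ?_⟩
    have hmul : ∀ i j, |v i * w j| ≤ ‖v‖ * ‖w‖ := fun i j => by
      rw [abs_mul]
      gcongr
      exacts [norm_le_pi_norm v i, norm_le_pi_norm w j]
    have hsub : ∀ i j l m, |v i * w j - v l * w m| ≤ 2 * ‖v‖ * ‖w‖ := fun i j l m => by
      linarith [abs_sub (v i * w j) (v l * w m), hmul i j, hmul l m]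
    fin_cases i <;> exact hsub _ _ _ _

/-- The Ishimori system at `p` in null coordinates, with the time derivative weighted by `ω`.
The weight `1` gives the system itself; other weights arise from conformal changes of the null
coordinates. -/
def IsNullIshimoriAt (ω : ℝ) (u : ℝ × ℝ × ℝ → Fin 3 → ℝ) (φ : ℝ × ℝ × ℝ → ℝ)
    (p : ℝ × ℝ × ℝ) : Prop :=
  ω • fderiv ℝ u p et = cross3 (u p) (nullDeriv 1 (nullDeriv (-1) u) p) + (1 / 2 : ℝ) •
      (nullDeriv (-1) φ p • nullDeriv 1 u p - nullDeriv 1 φ p • nullDeriv (-1) u p) ∧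
    nullDeriv 1 (nullDeriv (-1) φ) p = dot3 (u p) (cross3 (nullDeriv 1 u p) (nullDeriv (-1) u p))

/-- A solution `(u, φ)` of the Ishimori system off the cross such that `u - e₀` is `CrossRegular`
and so is `φ`, up to the sign and the null logarithms `A σ * log ξ_σ`. -/
structure IsCrossSolution (δ : ℝ) (A : ℝ → ℝ) (F : ℝ × ℝ × ℝ → ℝ)
    (u : ℝ × ℝ × ℝ → Fin 3 → ℝ) (φ : ℝ × ℝ × ℝ → ℝ) : Prop where
  spin : CrossRegular δ fun p => u p - e0
  regular_part : CrossRegular δ F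
  potential_eq : ∀ p ∈ offCross, φ p = A 1 * Real.log (nullCoord 1 p)
    + A (-1) * Real.log (nullCoord (-1) p) - F p
  isNullIshimoriAt : ∀ p ∈ offCross, IsNullIshimoriAt 1 u φ p

variable {δ σ : ℝ} {A : ℝ → ℝ} {F φ : ℝ × ℝ × ℝ → ℝ} {u : ℝ × ℝ × ℝ → Fin 3 → ℝ} {p : ℝ × ℝ × ℝ}

theorem eventuallyEq_nhds_offCross {E : Type*} {f g : ℝ × ℝ × ℝ → E} (hp : p ∈ offCross)
    (h : EqOn f g offCross) : f =ᶠ[nhds p] g :=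
  h.eventuallyEq_of_mem (isOpen_offCross.mem_nhds hp)

theorem nullDeriv_eq_pdV_add (σ : ℝ) (u : ℝ × ℝ × ℝ → Fin 3 → ℝ) (p : ℝ × ℝ × ℝ) :
    nullDeriv σ u p = pdV ex u p + σ • pdV ey u p := by
  rw [nullDeriv, pdV, pdV, ← map_smul, ← map_add]
  simp [nullDir, ex, ey]

theorem pdV_ex_eq (u : ℝ × ℝ × ℝ → Fin 3 → ℝ) :
    pdV ex u = fun p => (1 / 2 : ℝ) • (nullDeriv 1 u p + nullDeriv (-1) u p) := by
  ext p i
  simp [nullDeriv_eq_pdV_add]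
  ring

theorem pdV_ey_eq (u : ℝ × ℝ × ℝ → Fin 3 → ℝ) :
    pdV ey u = fun p => (1 / 2 : ℝ) • (nullDeriv 1 u p + (-1 : ℝ) • nullDeriv (-1) u p) := by
  ext p i
  simp [nullDeriv_eq_pdV_add]
  ring

theorem cross3_nullDeriv (u : ℝ × ℝ × ℝ → Fin 3 → ℝ) (p : ℝ × ℝ × ℝ) :
    cross3 (nullDeriv 1 u p) (nullDeriv (-1) u p)
      = (-2 : ℝ) • cross3 (pdV ex u p) (pdV ey u p) := by
  ext i
  simp only [nullDeriv_eq_pdV_add]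
  fin_cases i <;> simp [cross3] <;> ring

theorem contDiffAt_log_nullCoord (hσ : σ ^ 2 = 1) (hp : p ∈ offCross) :
    ContDiffAt ℝ (⊤ : ℕ∞) (fun q => Real.log (nullCoord σ q)) p :=
  (nullCoord σ).contDiff.contDiffAt.log ((mem_offCross_iff hσ).1 hp).1

theorem nullDeriv_comp_nullCoord {g : ℝ → ℝ} {g' : ℝ} (hg : HasDerivAt g g' (nullCoord σ p))
    (τ : ℝ) : nullDeriv τ (fun q => g (nullCoord σ q)) p = g' * nullCoord σ (nullDir τ) := by
  have := hg.comp_hasFDerivAt p (nullCoord σ).hasFDerivAt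
  rw [Function.comp_def] at this
  simpa [nullDeriv] using DFunLike.congr_fun this.fderiv (nullDir τ)

section Linear

variable {E : Type*} [NormedAddCommGroup E] [NormedSpace ℝ E] {f g : ℝ × ℝ × ℝ → E}

theorem nullDeriv_congr (hp : p ∈ offCross) (h : EqOn f g offCross) :
    nullDeriv σ f p = nullDeriv σ g p := by
  rw [nullDeriv, (eventuallyEq_nhds_offCross hp h).fderiv_eq, nullDeriv]

theorem nullDeriv_add (hf : DifferentiableAt ℝ f p) (hg : DifferentiableAt ℝ g p) :
    nullDeriv σ (fun q => f q + g q) p = nullDeriv σ f p + nullDeriv σ g p := by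
  rw [nullDeriv, fderiv_fun_add hf hg]
  rfl

theorem nullDeriv_sub (hf : DifferentiableAt ℝ f p) (hg : DifferentiableAt ℝ g p) :
    nullDeriv σ (fun q => f q - g q) p = nullDeriv σ f p - nullDeriv σ g p := by
  rw [nullDeriv, fderiv_fun_sub hf hg]
  rfl

theorem nullDeriv_const_smul (hf : DifferentiableAt ℝ f p) (r : ℝ) :
    nullDeriv σ (fun q => r • f q) p = r • nullDeriv σ f p := by
  rw [nullDeriv, fderiv_fun_const_smul hf]
  rfl

theorem nullDeriv_sub_const (σ : ℝ) (f : ℝ × ℝ × ℝ → E) (v : E) :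
    nullDeriv σ (fun p => f p - v) = nullDeriv σ f := by
  ext1 p
  simp only [nullDeriv, fderiv_sub_const]

end Linear

/-- The flux whose divergence form `½ ∑_σ ∂_σ w_σ` is the right-hand side of the spin equation. -/
noncomputable def nullFlux (σ : ℝ) (u : ℝ × ℝ × ℝ → Fin 3 → ℝ) (φ : ℝ × ℝ × ℝ → ℝ)
    (p : ℝ × ℝ × ℝ) : Fin 3 → ℝ :=
  cross3 (u p) (nullDeriv (-σ) u p) + -σ • φ p • nullDeriv (-σ) u p

namespace IsCrossSolution

variable (h : IsCrossSolution δ A F u φ)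
include h

theorem contDiffAt_spin (hp : p ∈ offCross) : ContDiffAt ℝ (⊤ : ℕ∞) u p := by
  simpa using (h.spin.contDiffAt p hp).add (contDiffAt_const (c := e0))

theorem potential_eq_log_add (hσ : σ ^ 2 = 1) (hp : p ∈ offCross) :
    φ p = A σ * Real.log (nullCoord σ p) + A (-σ) * Real.log (nullCoord (-σ) p) - F p := by
  rw [h.potential_eq p hp]
  rcases sq_eq_one_iff.1 hσ with rfl | rfl
  · rfl
  · rw [neg_neg, add_comm (A 1 * _)]

theorem contDiffAt_potential (hp : p ∈ offCross) : ContDiffAt ℝ (⊤ : ℕ∞) φ p := by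
  refine ContDiffAt.congr_of_eventuallyEq ?_ (eventuallyEq_nhds_offCross hp h.potential_eq)
  have hlog := fun σ hσ => contDiffAt_log_nullCoord (σ := σ) hσ hp
  exact ((contDiffAt_const.mul (hlog 1 (by norm_num))).add
    (contDiffAt_const.mul (hlog (-1) (by norm_num)))).sub (h.regular_part.contDiffAt p hp)

theorem nullDeriv_potential (hσ : σ ^ 2 = 1) (hp : p ∈ offCross) :
    nullDeriv σ φ p = 2 * A σ * (nullCoord σ p)⁻¹ - nullDeriv σ F p := by
  have hσ' : (-σ) ^ 2 = 1 := by rwa [neg_sq]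
  have hd : ∀ τ : ℝ, τ ^ 2 = 1 →
      DifferentiableAt ℝ (fun q => A τ • Real.log (nullCoord τ q)) p := fun τ hτ =>
    ((contDiffAt_log_nullCoord hτ hp).differentiableAt (by simp)).fun_const_smul _
  have hlog : ∀ τ : ℝ, τ ^ 2 = 1 → nullDeriv σ (fun q => A τ • Real.log (nullCoord τ q)) p
      = A τ * ((nullCoord τ p)⁻¹ * nullCoord τ (nullDir σ)) := fun τ hτ => by
    rw [nullDeriv_const_smul ((contDiffAt_log_nullCoord hτ hp).differentiableAt (by simp)),
      nullDeriv_comp_nullCoord (Real.hasDerivAt_log ((mem_offCross_iff hτ).1 hp).1), smul_eq_mul]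
  rw [nullDeriv_congr hp fun q => h.potential_eq_log_add hσ]
  simp only [← smul_eq_mul (A _)]
  rw [nullDeriv_sub ((hd σ hσ).fun_add (hd _ hσ')) (h.regular_part.differentiableAt hp),
    nullDeriv_add (hd σ hσ) (hd _ hσ'), hlog σ hσ, hlog _ hσ', nullCoord_nullDir hσ,
    nullCoord_neg_nullDir hσ]
  ring

theorem nullDeriv_nullDeriv_regular_part (hp : p ∈ offCross) :
    nullDeriv (-1) (nullDeriv 1 F) p
      = -dot3 (u p) (cross3 (nullDeriv 1 u p) (nullDeriv (-1) u p)) := by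
  have h1 : (1 : ℝ) ^ 2 = 1 := one_pow 2
  have hinv := hasDerivAt_inv ((mem_offCross_iff h1).1 hp).1
  have hdinv : DifferentiableAt ℝ (fun q => (nullCoord 1 q)⁻¹) p :=
    (hinv.comp_hasFDerivAt p (nullCoord 1).hasFDerivAt).differentiableAt
  have hF : DifferentiableAt ℝ (nullDeriv 1 F) p :=
    (contDiffAt_nullDeriv (h.regular_part.contDiffAt p hp)).differentiableAt (by simp)
  have hzero : nullCoord 1 (nullDir (-1)) = 0 := by
    simpa using nullCoord_neg_nullDir (σ := -1) (by norm_num)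
  have hderiv : nullDeriv (-1) (nullDeriv 1 φ) p = -nullDeriv (-1) (nullDeriv 1 F) p := by
    rw [nullDeriv_congr hp fun q => h.nullDeriv_potential h1]
    simp only [← smul_eq_mul (2 * A 1)]
    rw [nullDeriv_sub (hdinv.fun_const_smul _) hF, nullDeriv_const_smul hdinv,
      nullDeriv_comp_nullCoord hinv, hzero, mul_zero, smul_zero, zero_sub]
  rw [← (h.isNullIshimoriAt p hp).2, ← neg_eq_iff_eq_neg, ← hderiv,
    nullDeriv_comm (h.contDiffAt_potential hp)]

theorem nullDeriv_nullFlux (hp : p ∈ offCross) (σ : ℝ) :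
    nullDeriv σ (nullFlux σ u φ) p
      = cross3 (u p) (nullDeriv σ (nullDeriv (-σ) u) p)
        + cross3 (nullDeriv σ u p) (nullDeriv (-σ) u p)
        + -σ • (φ p • nullDeriv σ (nullDeriv (-σ) u) p
          + nullDeriv σ φ p • nullDeriv (-σ) u p) := by
  have hu := h.contDiffAt_spin hp
  have hdu := hu.differentiableAt (by simp)
  have hdφ := (h.contDiffAt_potential hp).differentiableAt (by simp)
  have hdv := (contDiffAt_nullDeriv (σ := -σ) hu).differentiableAt (by simp)
  have hsmul := isBoundedBilinearMap_smul (𝕜 := ℝ) (A := ℝ) (E := Fin 3 → ℝ)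
  have hcross : DifferentiableAt ℝ (fun q => cross3 (u q) (nullDeriv (-σ) u q)) p :=
    (isBoundedBilinearMap_cross3.differentiableAt _).comp p (hdu.prodMk hdv)
  unfold nullFlux
  rw [nullDeriv_add hcross ((hdφ.fun_smul hdv).fun_const_smul _),
    nullDeriv_const_smul (hdφ.fun_smul hdv),
    nullDeriv_bilin isBoundedBilinearMap_cross3 hdu hdv, nullDeriv_bilin hsmul hdφ hdv]

theorem half_nullDeriv_nullFlux_add (hp : p ∈ offCross) :
    (1 / 2 : ℝ) • (nullDeriv 1 (nullFlux 1 u φ) p + nullDeriv (-1) (nullFlux (-1) u φ) p)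
      = fderiv ℝ u p et := by
  rw [← one_smul ℝ (fderiv ℝ u p et), (h.isNullIshimoriAt p hp).1, h.nullDeriv_nullFlux hp,
    h.nullDeriv_nullFlux hp, neg_neg, nullDeriv_comm (h.contDiffAt_spin hp) (-1) 1]
  ext i
  simp only [Pi.add_apply, Pi.sub_apply, Pi.smul_apply, smul_eq_mul]
  fin_cases i <;> simp [cross3] <;> ring

theorem growth_spin (hδ : 0 < δ) (hσ : σ ^ 2 = 1) : HasNullGrowth σ 0 0 u := by
  simpa using ((h.spin.growth σ hσ).mono hσ hδ.le hδ.le).add (hasNullGrowth_const σ e0)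

theorem growth_time (hδ : 0 < δ) (hσ : σ ^ 2 = 1) :
    HasNullGrowth σ 0 0 fun p => fderiv ℝ u p et := by
  simpa only [fderiv_sub_const] using (h.spin.growth_time σ hσ).mono hσ hδ.le hδ.le

theorem growth_nullDeriv (hσ : σ ^ 2 = 1) : HasNullGrowth σ (δ - 1) δ (nullDeriv σ u) := by
  simpa only [nullDeriv_sub_const] using h.spin.growth_nullDeriv σ hσ

theorem growth_nullDeriv_neg (hσ : σ ^ 2 = 1) :
    HasNullGrowth σ δ (δ - 1) (nullDeriv (-σ) u) := by
  simpa only [neg_neg] using (h.growth_nullDeriv (σ := -σ) (by rwa [neg_sq])).swap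

theorem growth_wave (hσ : σ ^ 2 = 1) :
    HasNullGrowth σ (δ - 1) (δ - 1) (nullDeriv σ (nullDeriv (-σ) u)) := by
  simpa only [nullDeriv_sub_const] using h.spin.growth_wave σ hσ

theorem growth_potential (hδ : 0 < δ) {ε : ℝ} (hε : 0 < ε) (hσ : σ ^ 2 = 1) :
    HasNullGrowth σ (-ε) (-ε) φ := by
  have hσ' : (-σ) ^ 2 = 1 := by rwa [neg_sq]
  have hlog : HasNullGrowth σ (-ε) 0 _ := hasNullGrowth_log hσ hε
  have hlog' := (hasNullGrowth_log hσ' hε).swap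
  rw [neg_neg] at hlog'
  refine (((hlog.const_smul (A σ)).mono hσ le_rfl (by linarith)).add
    (((hlog'.const_smul (A (-σ))).mono hσ (by linarith) le_rfl).add
      (((h.regular_part.growth σ hσ).const_smul (-1)).mono hσ (by linarith) (by linarith)))).congr
    fun p hp => ?_
  rw [h.potential_eq_log_add hσ hp]
  simp only [smul_eq_mul]
  ring

theorem growth_nullDeriv_potential (hδ : 0 < δ) (hσ : σ ^ 2 = 1) :
    HasNullGrowth σ (-1) 0 (nullDeriv σ φ) := by
  refine (((hasNullGrowth_inv hσ).const_smul (2 * A σ)).add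
    (((h.regular_part.growth_nullDeriv σ hσ).const_smul (-1)).mono hσ (by linarith) hδ.le)).congr
    fun p hp => ?_
  rw [h.nullDeriv_potential hσ hp]
  simp only [smul_eq_mul]
  ring

theorem growth_nullFlux (hδ : 0 < δ) (hσ : σ ^ 2 = 1) :
    HasNullGrowth σ (δ / 2) (δ / 2 - 1) (nullFlux σ u φ) := by
  have hv := h.growth_nullDeriv_neg hσ
  have hcross := (h.growth_spin hδ hσ).bilin hσ isBoundedBilinearMap_cross3 hv
  have hsmul := (h.growth_potential hδ (half_pos hδ) hσ).bilin hσ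
    (isBoundedBilinearMap_smul (𝕜 := ℝ) (A := ℝ)) hv
  exact (hcross.mono hσ (by linarith) (by linarith)).add
    ((hsmul.const_smul (-σ)).mono hσ (by linarith) (by linarith))

theorem growth_cross (hσ : σ ^ 2 = 1) :
    HasNullGrowth σ (2 * δ - 1) (2 * δ - 1) fun p =>
      cross3 (nullDeriv σ u p) (nullDeriv (-σ) u p) := by
  have := (h.growth_nullDeriv hσ).bilin hσ isBoundedBilinearMap_cross3 (h.growth_nullDeriv_neg hσ)
  exact this.mono hσ (by linarith) (by linarith)

theorem growth_nullDeriv_nullFlux (hδ : 0 < δ) (hσ : σ ^ 2 = 1) :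
    HasNullGrowth σ (δ / 2 - 1) (δ / 2 - 1) (nullDeriv σ (nullFlux σ u φ)) := by
  have hw := h.growth_wave hσ
  have hsmul := isBoundedBilinearMap_smul (𝕜 := ℝ) (A := ℝ) (E := Fin 3 → ℝ)
  have hcross := (h.growth_spin hδ hσ).bilin hσ isBoundedBilinearMap_cross3 hw
  have hφ := (h.growth_potential hδ (half_pos hδ) hσ).bilin hσ hsmul hw
  have hdφ := (h.growth_nullDeriv_potential hδ hσ).bilin hσ hsmul (h.growth_nullDeriv_neg hσ)
  refine HasNullGrowth.congr ?_ fun p hp => h.nullDeriv_nullFlux hp σ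
  exact ((hcross.mono hσ (by linarith) (by linarith)).add
    ((h.growth_cross hσ).mono hσ (by linarith) (by linarith))).add
    (((hφ.mono hσ (by linarith) (by linarith)).add
      (hdφ.mono hσ (by linarith) (by linarith))).const_smul (-σ))

theorem integral_nullFlux (hδ : 0 < δ) (hσ : σ ^ 2 = 1) {ψ : ℝ × ℝ × ℝ → Fin 3 → ℝ}
    (hψ : ContDiff ℝ 1 ψ) (hsupp : HasCompactSupport ψ) :
    ∫ p, dot3 (nullFlux σ u φ p) (nullDeriv σ ψ p)
      = -∫ p, dot3 (nullDeriv σ (nullFlux σ u φ) p) (ψ p) := by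
  refine integral_bilin_nullDeriv_eq_neg isBoundedBilinearMap_dot3 hσ (half_pos hδ) (by linarith)
    (by linarith) (by linarith) (h.growth_nullFlux hδ hσ) (h.growth_nullDeriv_nullFlux hδ hσ)
    (fun p hp => ?_) (fun p hp => ?_) hψ hsupp
  · have hv : nullDeriv (-σ) u p = 0 := by
      rw [← nullDeriv_sub_const (-σ) u e0, h.spin.nullDeriv_neg_eq_zero hσ hp]
    have hzero : cross3 (u p) 0 = 0 := by simp [cross3]
    simp [nullFlux, hv, hzero]
  · have hu := h.contDiffAt_spin hp
    have hv := contDiffAt_nullDeriv (σ := -σ) hu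
    have hdv := hv.differentiableAt (by simp)
    exact ((isBoundedBilinearMap_cross3.differentiableAt (u p, nullDeriv (-σ) u p)).comp p
      ((hu.differentiableAt (by simp)).prodMk hdv)).add
      ((((h.contDiffAt_potential hp).differentiableAt (by simp)).smul hdv).const_smul (-σ))

theorem integral_time_eq_neg (hδ : 0 < δ) {ψ : ℝ × ℝ × ℝ → Fin 3 → ℝ} (hψ : ContDiff ℝ 1 ψ)
    (hsupp : HasCompactSupport ψ) :
    ∫ p, dot3 (u p) (pdV et ψ p) = -(1 / 2 * (∫ p, dot3 (nullDeriv 1 (nullFlux 1 u φ) p) (ψ p))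
      + 1 / 2 * ∫ p, dot3 (nullDeriv (-1) (nullFlux (-1) u φ) p) (ψ p)) := by
  have hint : ∀ σ : ℝ, σ ^ 2 = 1 →
      Integrable fun p => dot3 (nullDeriv σ (nullFlux σ u φ) p) (ψ p) := fun σ hσ =>
    integrable_bilin_of_hasCompactSupport isBoundedBilinearMap_dot3
      ((h.growth_nullDeriv_nullFlux hδ hσ).locallyIntegrable hσ (by linarith) (by linarith))
      hψ.continuous hsupp
  have h1 : (1 : ℝ) ^ 2 = 1 := one_pow 2
  have hparts := integral_bilin_time_deriv_eq_neg isBoundedBilinearMap_dot3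
    ((h.growth_spin hδ h1).locallyIntegrable h1 (by norm_num) (by norm_num))
    ((h.growth_time hδ h1).locallyIntegrable h1 (by norm_num) (by norm_num))
    (fun p hp => (h.contDiffAt_spin hp).differentiableAt (by simp)) hψ hsupp
  refine hparts.trans (congrArg Neg.neg ?_)
  rw [← integral_const_mul, ← integral_const_mul,
    ← integral_add ((hint 1 h1).const_mul _) ((hint (-1) (by norm_num)).const_mul _)]
  refine integral_congr_ae ?_
  filter_upwards [ae_mem_offCross] with p hp
  rw [← h.half_nullDeriv_nullFlux_add hp]
  simp only [dot3, Pi.smul_apply, Pi.add_apply, smul_eq_mul]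
  ring

theorem integral_spin_eq_zero (hδ : 0 < δ) {ψ : ℝ × ℝ × ℝ → Fin 3 → ℝ}
    (hψ : ContDiff ℝ 1 ψ) (hsupp : HasCompactSupport ψ) :
    ∫ p, (dot3 (cross3 (u p) (pdV ey u p)) (pdV ey ψ p)
      - dot3 (cross3 (u p) (pdV ex u p)) (pdV ex ψ p) + dot3 (u p) (pdV et ψ p)
      - φ p * (dot3 (pdV ey u p) (pdV ex ψ p) - dot3 (pdV ex u p) (pdV ey ψ p))) = 0 := by
  have h1 : (1 : ℝ) ^ 2 = 1 := one_pow 2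
  have h2 : (-1 : ℝ) ^ 2 = 1 := by norm_num
  have hint {w : ℝ × ℝ × ℝ → Fin 3 → ℝ} (hw : LocallyIntegrable w) (v : ℝ × ℝ × ℝ) :
      Integrable fun p => dot3 (w p) (fderiv ℝ ψ p v) :=
    integrable_bilin_of_hasCompactSupport isBoundedBilinearMap_dot3 hw
      ((hψ.continuous_fderiv one_ne_zero).clm_apply continuous_const) (hsupp.fderiv_apply ℝ v)
  have hflux : ∀ σ : ℝ, σ ^ 2 = 1 → Integrable fun p =>
      (-1 / 2) * dot3 (nullFlux σ u φ p) (nullDeriv σ ψ p) := fun σ hσ =>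
    (hint ((h.growth_nullFlux hδ hσ).locallyIntegrable hσ (by linarith) (by linarith))
      (nullDir σ)).const_mul _
  have htime : Integrable fun p => dot3 (u p) (pdV et ψ p) :=
    hint ((h.growth_spin hδ h1).locallyIntegrable h1 (by norm_num) (by norm_num)) et
  calc
    _ = ∫ p, ((-1 / 2) * dot3 (nullFlux 1 u φ p) (nullDeriv 1 ψ p)
          + (-1 / 2) * dot3 (nullFlux (-1) u φ p) (nullDeriv (-1) ψ p)
          + dot3 (u p) (pdV et ψ p)) := by
      congr with p
      simp only [nullFlux, nullDeriv_eq_pdV_add, dot3, cross3, Pi.add_apply, Pi.smul_apply,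
        smul_eq_mul, Matrix.cons_val]
      ring
    _ = 0 := by
      rw [integral_add ((hflux 1 h1).fun_add (hflux (-1) h2)) htime,
        integral_add (hflux 1 h1) (hflux (-1) h2), integral_const_mul, integral_const_mul,
        h.integral_nullFlux hδ h1 hψ hsupp, h.integral_nullFlux hδ h2 hψ hsupp,
        h.integral_time_eq_neg hδ hψ hsupp]
      ring

theorem integral_potential_eq_zero (hδ : 0 < δ) {ρ : ℝ × ℝ × ℝ → ℝ}
    (hρ : ContDiff ℝ (⊤ : ℕ∞) ρ) (hsupp : HasCompactSupport ρ) :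
    ∫ p, ((pdR ex (pdR ex ρ) p - pdR ey (pdR ey ρ) p) * φ p
      + 2 * ρ p * dot3 (u p) (cross3 (pdV ex u p) (pdV ey u p))) = 0 := by
  have h1 : (1 : ℝ) ^ 2 = 1 := one_pow 2
  have h2 : (-1 : ℝ) ^ 2 = 1 := by norm_num
  have hmul := isBoundedBilinearMap_mul (𝕜 := ℝ) (A := ℝ)
  set W := nullDeriv 1 (nullDeriv (-1) ρ)
  have hint {w : ℝ × ℝ × ℝ → ℝ} (hw : LocallyIntegrable w) : Integrable fun p => w p * W p :=
    integrable_bilin_of_hasCompactSupport hmul hw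
      (contDiff_nullDeriv (contDiff_nullDeriv hρ)).continuous
      ((hsupp.fderiv_apply ℝ _).fderiv_apply ℝ _)
  have hlog : ∀ τ : ℝ, τ ^ 2 = 1 →
      Integrable fun p => A τ * (Real.log (nullCoord τ p) * W p) := fun τ hτ =>
    (hint ((hasNullGrowth_log hτ one_half_pos).locallyIntegrable hτ (by norm_num)
      (by norm_num))).const_mul _
  have hF : Integrable fun p => F p * W p :=
    hint ((h.regular_part.growth 1 h1).locallyIntegrable h1 (by linarith) (by linarith))
  have hwave : HasNullGrowth (-1) (δ - 1) (δ - 1) (nullDeriv (-1) (nullDeriv 1 F)) := by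
    simpa only [neg_neg] using h.regular_part.growth_wave (-1) h2
  have hwaveρ : Integrable fun p => nullDeriv (-1) (nullDeriv 1 F) p * ρ p :=
    integrable_bilin_of_hasCompactSupport hmul
      (hwave.locallyIntegrable h2 (by linarith) (by linarith)) hρ.continuous hsupp
  calc
    _ = ∫ p, (A 1 * (Real.log (nullCoord 1 p) * W p)
          + A (-1) * (Real.log (nullCoord (-1) p) * W p)
          + (nullDeriv (-1) (nullDeriv 1 F) p * ρ p - F p * W p)) := by
      refine integral_congr_ae ?_
      filter_upwards [ae_mem_offCross] with p hp
      rw [h.nullDeriv_nullDeriv_regular_part hp, h.potential_eq p hp, cross3_nullDeriv,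
        show pdR ex (pdR ex ρ) p - pdR ey (pdR ey ρ) p = W p from
          fderiv_fderiv_ex_sub_ey hρ.contDiffAt]
      simp only [dot3, Pi.smul_apply, smul_eq_mul]
      ring
    _ = 0 := by
      rw [integral_add ((hlog 1 h1).fun_add (hlog (-1) h2)) (hwaveρ.sub' hF),
        integral_add (hlog 1 h1) (hlog (-1) h2), integral_const_mul, integral_const_mul,
        integral_sub hwaveρ hF, h.regular_part.integral_bilin_wave_eq hmul hδ h1 hρ hsupp,
        integral_log_nullCoord_mul_wave h1 hρ hsupp, integral_log_nullCoord_mul_wave h2 hρ hsupp]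
      ring

theorem isWeakIshimori (hδ : 0 < δ) : IsWeakIshimori univ u φ := by
  have h1 : (1 : ℝ) ^ 2 = 1 := one_pow 2
  have hu := h.growth_spin hδ h1
  have hφ := h.growth_potential hδ (half_pos hδ) h1
  have hp := (h.growth_nullDeriv h1).mono h1 (α' := δ - 1) (β' := δ - 1) (by linarith)
    (by linarith)
  have hm := (h.growth_nullDeriv_neg h1).mono h1 (α' := δ - 1) (β' := δ - 1) (by linarith)
    (by linarith)
  have hx : HasNullGrowth 1 (δ - 1) (δ - 1) (pdV ex u) :=
    pdV_ex_eq u ▸ (hp.add hm).const_smul (1 / 2)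
  have hy : HasNullGrowth 1 (δ - 1) (δ - 1) (pdV ey u) :=
    pdV_ey_eq u ▸ (hp.add (hm.const_smul (-1))).const_smul (1 / 2)
  have hsmul := isBoundedBilinearMap_smul (𝕜 := ℝ) (A := ℝ) (E := Fin 3 → ℝ)
  have hcross : HasNullGrowth 1 (2 * δ - 1) (2 * δ - 1) fun p => cross3 (pdV ex u p) (pdV ey u p) :=
    ((h.growth_cross h1).const_smul (-1 / 2)).congr fun p _ => by
      simp only [cross3_nullDeriv, smul_smul]
      norm_num
  exact ⟨(hu.locallyIntegrable h1 (by linarith) (by linarith)).locallyIntegrableOn _,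
    (hx.locallyIntegrable h1 (by linarith) (by linarith)).locallyIntegrableOn _,
    (hy.locallyIntegrable h1 (by linarith) (by linarith)).locallyIntegrableOn _,
    ((h.growth_potential hδ one_half_pos h1).locallyIntegrable h1 (by norm_num)
      (by norm_num)).locallyIntegrableOn _,
    ((hφ.bilin h1 hsmul hx).locallyIntegrable h1 (by linarith) (by linarith)).locallyIntegrableOn _,
    ((hφ.bilin h1 hsmul hy).locallyIntegrable h1 (by linarith) (by linarith)).locallyIntegrableOn _,
    ((hu.bilin h1 isBoundedBilinearMap_dot3 hcross).locallyIntegrable h1 (by linarith)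
      (by linarith)).locallyIntegrableOn _,
    fun ψ hψ hsupp _ => h.integral_spin_eq_zero hδ (hψ.of_le (by simp)) hsupp,
    fun ρ hρ hsupp _ => h.integral_potential_eq_zero hδ hρ hsupp⟩

end IsCrossSolution

end WeakSolution

namespace IsCrossSolution

variable {δ : ℝ} {A : ℝ → ℝ} {F φ : ℝ × ℝ × ℝ → ℝ} {u : ℝ × ℝ × ℝ → Fin 3 → ℝ} {p : ℝ × ℝ × ℝ}
  (h : IsCrossSolution δ A F u φ)
include h

theorem pdV_et_eq (hp : p ∈ offCross) :
    pdV et u p = cross3 (u p) (pdV ex (pdV ex u) p - pdV ey (pdV ey u) p)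
      + pdR ex φ p • pdV ey u p - pdR ey φ p • pdV ex u p := by
  have hwave : pdV ex (pdV ex u) p - pdV ey (pdV ey u) p = nullDeriv 1 (nullDeriv (-1) u) p :=
    fderiv_fderiv_ex_sub_ey (h.contDiffAt_spin hp)
  have hφ : ∀ σ : ℝ, nullDeriv σ φ p = pdR ex φ p + σ * pdR ey φ p := fun σ => by
    rw [nullDeriv, pdR, pdR, ← smul_eq_mul, ← map_smul, ← map_add]
    simp [nullDir, ex, ey]
  rw [hwave, pdV, ← one_smul ℝ (fderiv ℝ u p et), (h.isNullIshimoriAt p hp).1, hφ, hφ,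
    nullDeriv_eq_pdV_add 1 u, nullDeriv_eq_pdV_add (-1) u]
  module

theorem pdR_ex_pdR_ex_sub (hp : p ∈ offCross) :
    pdR ex (pdR ex φ) p - pdR ey (pdR ey φ) p
      = -2 * dot3 (u p) (cross3 (pdV ex u p) (pdV ey u p)) := by
  have hwave : pdR ex (pdR ex φ) p - pdR ey (pdR ey φ) p = nullDeriv 1 (nullDeriv (-1) φ) p :=
    fderiv_fderiv_ex_sub_ey (h.contDiffAt_potential hp)
  rw [hwave, (h.isNullIshimoriAt p hp).2, cross3_nullDeriv]
  simp only [dot3, Pi.smul_apply, smul_eq_mul]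
  ring

end IsCrossSolution

section LogPolar

variable {E : Type*} [NormedAddCommGroup E] [NormedSpace ℝ E]
  {σ κ m n : ℝ} {γ : SignType → ℝ × ℝ × ℝ → E} {f : ℝ × ℝ × ℝ → E} {p : ℝ × ℝ × ℝ}

/-- The coordinates `(t, τ, α)` off the cross, where `τ = log a`. In them the null coordinates are
`τ + σ α = log |ξ_σ|`; the absolute values are implicit in `Real.log`. -/
noncomputable def logPolar (p : ℝ × ℝ × ℝ) : ℝ × ℝ × ℝ :=
  (p.1, 1 / 2 * (Real.log (nullCoord 1 p) + Real.log (nullCoord (-1) p)),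
    1 / 2 * (Real.log (nullCoord 1 p) - Real.log (nullCoord (-1) p)))

/-- The sign of `x² - y²`: `1` in the horizontal cone, `-1` in the vertical one, `0` on the
cross. -/
noncomputable def coneSign (p : ℝ × ℝ × ℝ) : SignType :=
  SignType.sign (p.2.1 ^ 2 - p.2.2 ^ 2)

/-- The function given by `γ ε` in the logarithmic coordinates of the cone of sign `ε`; the value
on the cross is governed by `γ 0`. -/
noncomputable def glue {X : Type*} (γ : SignType → ℝ × ℝ × ℝ → X) (p : ℝ × ℝ × ℝ) : X :=
  γ (coneSign p) (logPolar p)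

theorem logPolar_snd_fst (hσ : σ ^ 2 = 1) (p : ℝ × ℝ × ℝ) :
    (logPolar p).2.1 = 1 / 2 * (Real.log (nullCoord σ p) + Real.log (nullCoord (-σ) p)) := by
  rcases sq_eq_one_iff.1 hσ with rfl | rfl
  · rfl
  · rw [neg_neg, add_comm, logPolar]

theorem coneSign_eq_zero_iff : coneSign p = 0 ↔ p ∉ offCross := by
  rw [coneSign, sign_eq_zero_iff, sub_eq_zero, sq_eq_sq_iff_abs_eq_abs]
  exact not_not.symm

theorem exp_two_mul_logPolar (hp : p ∈ offCross) :
    Real.exp (2 * (logPolar p).2.1) = |p.2.1 ^ 2 - p.2.2 ^ 2| := by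
  have h := (mem_offCross_iff (one_pow 2)).1 hp
  rw [logPolar_snd_fst (one_pow 2), ← mul_assoc, mul_one_div_cancel two_ne_zero, one_mul,
    Real.exp_add, Real.exp_log_eq_abs h.1, Real.exp_log_eq_abs h.2, ← abs_mul,
    nullCoord_mul_nullCoord_neg (one_pow 2)]

theorem coneSign_mul_exp (hp : p ∈ offCross) :
    (coneSign p : ℝ) * Real.exp (2 * (logPolar p).2.1) = nullCoord 1 p * nullCoord (-1) p := by
  rw [exp_two_mul_logPolar hp, coneSign, sign_mul_abs, nullCoord_mul_nullCoord_neg (one_pow 2)]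

theorem glue_eventuallyEq {X : Type*} (γ : SignType → ℝ × ℝ × ℝ → X) (hp : p ∈ offCross) :
    glue γ =ᶠ[nhds p] γ (coneSign p) ∘ logPolar := by
  have hne : p.2.1 ^ 2 - p.2.2 ^ 2 ≠ 0 := sign_ne_zero.1 (coneSign_eq_zero_iff.not_left.2 hp)
  have hsign : ContinuousAt coneSign p := by
    unfold coneSign
    exact (continuousAt_sign_of_ne_zero hne).comp
      (f := fun p : ℝ × ℝ × ℝ => p.2.1 ^ 2 - p.2.2 ^ 2) (by fun_prop)
  filter_upwards [hsign.eventually_mem ((isOpen_discrete {coneSign p}).mem_nhds rfl)] with q hq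
  rw [glue, mem_singleton_iff.1 hq, Function.comp_apply]

theorem contDiffAt_logPolar (hp : p ∈ offCross) : ContDiffAt ℝ (⊤ : ℕ∞) logPolar p := by
  have hlog := fun σ hσ => contDiffAt_log_nullCoord (σ := σ) hσ hp
  have h1 := hlog 1 (by norm_num)
  have h2 := hlog (-1) (by norm_num)
  exact contDiffAt_fst.prodMk
    ((contDiffAt_const.mul (h1.add h2)).prodMk (contDiffAt_const.mul (h1.sub h2)))

theorem hasFDerivAt_logPolar (hp : p ∈ offCross) :
    HasFDerivAt logPolar ((ContinuousLinearMap.fst ℝ ℝ (ℝ × ℝ)).prod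
      (((1 / 2 : ℝ) •
        ((nullCoord 1 p)⁻¹ • nullCoord 1 + (nullCoord (-1) p)⁻¹ • nullCoord (-1))).prod
      ((1 / 2 : ℝ) •
        ((nullCoord 1 p)⁻¹ • nullCoord 1 - (nullCoord (-1) p)⁻¹ • nullCoord (-1))))) p := by
  have h := (mem_offCross_iff (one_pow 2)).1 hp
  have h1 := (nullCoord 1).hasFDerivAt.log h.1
  have h2 := (nullCoord (-1)).hasFDerivAt.log h.2
  exact hasFDerivAt_fst.prodMk
    (((h1.fun_add h2).const_mul _).prodMk ((h1.fun_sub h2).const_mul _))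

theorem fderiv_logPolar_nullDir (hσ : σ ^ 2 = 1) (hp : p ∈ offCross) :
    fderiv ℝ logPolar p (nullDir σ) = (nullCoord σ p)⁻¹ • nullDir σ := by
  rw [(hasFDerivAt_logPolar hp).fderiv]
  rcases sq_eq_one_iff.1 hσ with rfl | rfl <;> ext <;> simp [nullCoord_apply, nullDir] <;> ring

theorem fderiv_logPolar_et (hp : p ∈ offCross) : fderiv ℝ logPolar p et = et := by
  rw [(hasFDerivAt_logPolar hp).fderiv]
  ext <;> simp [nullCoord_apply, et]

theorem fderiv_comp_logPolar {g : ℝ × ℝ × ℝ → E} (hp : p ∈ offCross)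
    (hg : DifferentiableAt ℝ g (logPolar p)) (v : ℝ × ℝ × ℝ) :
    fderiv ℝ (g ∘ logPolar) p v = fderiv ℝ g (logPolar p) (fderiv ℝ logPolar p v) := by
  rw [fderiv_comp p hg ((contDiffAt_logPolar hp).differentiableAt (by simp))]
  rfl

theorem nullDeriv_comp_logPolar {g : ℝ × ℝ × ℝ → E} (hσ : σ ^ 2 = 1) (hp : p ∈ offCross)
    (hg : DifferentiableAt ℝ g (logPolar p)) :
    nullDeriv σ (g ∘ logPolar) p = (nullCoord σ p)⁻¹ • nullDeriv σ g (logPolar p) := by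
  rw [nullDeriv, fderiv_comp_logPolar hp hg, fderiv_logPolar_nullDir hσ hp, map_smul, nullDeriv]

theorem nullDeriv_nullDeriv_comp_logPolar {g : ℝ × ℝ × ℝ → E} (hσ : σ ^ 2 = 1)
    (hp : p ∈ offCross) (hg : ContDiff ℝ (⊤ : ℕ∞) g) :
    nullDeriv σ (nullDeriv (-σ) (g ∘ logPolar)) p
      = ((nullCoord σ p)⁻¹ * (nullCoord (-σ) p)⁻¹)
        • nullDeriv σ (nullDeriv (-σ) g) (logPolar p) := by
  have hσ' : (-σ) ^ 2 = 1 := by rwa [neg_sq]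
  have hinv := hasDerivAt_inv ((mem_offCross_iff hσ').1 hp).1
  have hdinv : DifferentiableAt ℝ (fun q => (nullCoord (-σ) q)⁻¹) p :=
    (hinv.comp_hasFDerivAt p (nullCoord (-σ)).hasFDerivAt).differentiableAt
  have hd : Differentiable ℝ (nullDeriv (-σ) g) := (contDiff_nullDeriv hg).differentiable (by simp)
  have hdcomp : DifferentiableAt ℝ (nullDeriv (-σ) g ∘ logPolar) p :=
    (hd _).comp p ((contDiffAt_logPolar hp).differentiableAt (by simp))
  refine (nullDeriv_congr hp fun q hq =>
    nullDeriv_comp_logPolar hσ' hq (hg.differentiable (by simp) _)).trans ?_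
  refine (nullDeriv_bilin isBoundedBilinearMap_smul hdinv hdcomp).trans ?_
  dsimp only
  rw [nullDeriv_comp_nullCoord hinv, nullCoord_neg_nullDir hσ, mul_zero, zero_smul, add_zero,
    nullDeriv_comp_logPolar hσ hp (hd _), smul_smul, mul_comm]

/-- `g` is `O(e^{κτ})` as `τ → -∞`, uniformly in `t` and `α`. -/
def HasConeBound (κ : ℝ) (g : ℝ × ℝ × ℝ → E) : Prop :=
  ∀ T : ℝ, ∃ C, ∀ p : ℝ × ℝ × ℝ, p.2.1 ≤ T → ‖g p‖ ≤ C * Real.exp (κ * p.2.1)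

/-- A smooth function of `(t, τ, α)` that decays like `a ^ κ = e^{κτ}` at the cross, together with
the derivatives that `CrossRegular` controls. -/
structure IsConeField (κ : ℝ) (g : ℝ × ℝ × ℝ → E) : Prop where
  contDiff : ContDiff ℝ (⊤ : ℕ∞) g
  bound : HasConeBound κ g
  bound_time : HasConeBound κ fun p => fderiv ℝ g p et
  bound_nullDeriv : ∀ σ : ℝ, σ ^ 2 = 1 → HasConeBound κ (nullDeriv σ g)
  bound_wave : ∀ σ : ℝ, σ ^ 2 = 1 → HasConeBound κ (nullDeriv σ (nullDeriv (-σ) g))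

theorem exp_mul_logPolar (κ : ℝ) (hσ : σ ^ 2 = 1) (hp : p ∈ offCross) :
    Real.exp (κ * (logPolar p).2.1)
      = |nullCoord σ p| ^ (κ / 2) * |nullCoord (-σ) p| ^ (κ / 2) := by
  have h := (mem_offCross_iff hσ).1 hp
  rw [logPolar_snd_fst hσ, Real.rpow_def_of_pos (abs_pos.2 h.1),
    Real.rpow_def_of_pos (abs_pos.2 h.2), ← Real.exp_add, Real.log_abs, Real.log_abs]
  ring_nf

theorem logPolar_le_log {M : ℝ} (hσ : σ ^ 2 = 1) (hp : p ∈ offCross) (h₁ : |nullCoord σ p| ≤ M)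
    (h₂ : |nullCoord (-σ) p| ≤ M) : (logPolar p).2.1 ≤ Real.log M := by
  have h := (mem_offCross_iff hσ).1 hp
  have h₁' := Real.log_le_log (abs_pos.2 h.1) h₁
  have h₂' := Real.log_le_log (abs_pos.2 h.2) h₂
  rw [Real.log_abs] at h₁' h₂'
  rw [logPolar_snd_fst hσ]
  linarith

omit [NormedSpace ℝ E] in
theorem hasNullGrowth_of_norm_le_glue (hσ : σ ^ 2 = 1) (hf : ContinuousOn f offCross)
    (hγ : ∀ ε ≠ 0, HasConeBound κ (γ ε))
    (hle : ∀ p ∈ offCross,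
      ‖f p‖ ≤ |nullCoord σ p| ^ m * |nullCoord (-σ) p| ^ n * ‖glue γ p‖) :
    HasNullGrowth σ (κ / 2 + m) (κ / 2 + n) f := by
  refine ⟨hf, fun M => ?_⟩
  obtain ⟨C₁, hC₁⟩ := hγ 1 (by decide) (Real.log M)
  obtain ⟨C₂, hC₂⟩ := hγ (-1) (by decide) (Real.log M)
  refine ⟨max C₁ C₂, fun p hp h₁ h₂ => (hle p hp).trans ?_⟩
  have hτ := logPolar_le_log hσ hp h₁ h₂
  have hglue : ‖glue γ p‖ ≤ max C₁ C₂ * Real.exp (κ * (logPolar p).2.1) := by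
    rcases hε : coneSign p with _ | _ | _
    · exact absurd hp (coneSign_eq_zero_iff.1 hε)
    · rw [glue, hε]
      exact (hC₂ _ hτ).trans (by gcongr; exact le_max_right _ _)
    · rw [glue, hε]
      exact (hC₁ _ hτ).trans (by gcongr; exact le_max_left _ _)
  have h := (mem_offCross_iff hσ).1 hp
  rw [Real.rpow_add (abs_pos.2 h.1), Real.rpow_add (abs_pos.2 h.2)]
  refine (mul_le_mul_of_nonneg_left hglue (by positivity)).trans_eq ?_
  rw [exp_mul_logPolar κ hσ hp]
  ring

theorem contDiffAt_glue (hγ : ContDiff ℝ (⊤ : ℕ∞) (γ (coneSign p))) (hp : p ∈ offCross) :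
    ContDiffAt ℝ (⊤ : ℕ∞) (glue γ) p :=
  (hγ.contDiffAt.comp p (contDiffAt_logPolar hp)).congr_of_eventuallyEq (glue_eventuallyEq γ hp)

theorem fderiv_glue_et (hγ : ContDiff ℝ (⊤ : ℕ∞) (γ (coneSign p))) (hp : p ∈ offCross) :
    fderiv ℝ (glue γ) p et = glue (fun ε q => fderiv ℝ (γ ε) q et) p := by
  rw [(glue_eventuallyEq γ hp).fderiv_eq,
    fderiv_comp_logPolar hp (hγ.differentiable (by simp) _), fderiv_logPolar_et hp, glue]

theorem nullDeriv_glue (hσ : σ ^ 2 = 1) (hγ : ContDiff ℝ (⊤ : ℕ∞) (γ (coneSign p)))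
    (hp : p ∈ offCross) :
    nullDeriv σ (glue γ) p = (nullCoord σ p)⁻¹ • glue (fun ε => nullDeriv σ (γ ε)) p := by
  rw [nullDeriv, (glue_eventuallyEq γ hp).fderiv_eq, ← nullDeriv,
    nullDeriv_comp_logPolar hσ hp (hγ.differentiable (by simp) _), glue]

theorem nullDeriv_nullDeriv_glue (hσ : σ ^ 2 = 1) (hγ : ContDiff ℝ (⊤ : ℕ∞) (γ (coneSign p)))
    (hp : p ∈ offCross) :
    nullDeriv σ (nullDeriv (-σ) (glue γ)) p = ((nullCoord σ p)⁻¹ * (nullCoord (-σ) p)⁻¹)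
      • glue (fun ε => nullDeriv σ (nullDeriv (-σ) (γ ε))) p := by
  have hderiv : nullDeriv (-σ) (glue γ) =ᶠ[nhds p] nullDeriv (-σ) (γ (coneSign p) ∘ logPolar) :=
    (glue_eventuallyEq γ hp).fderiv.fun_comp (· (nullDir (-σ)))
  rw [nullDeriv, hderiv.fderiv_eq, ← nullDeriv, nullDeriv_nullDeriv_comp_logPolar hσ hp hγ, glue]

theorem crossRegular_glue (h0 : γ 0 = 0) (hγ : ∀ ε ≠ 0, IsConeField κ (γ ε)) :
    CrossRegular (κ / 2) (glue γ) := by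
  have hsmooth : ∀ p ∈ offCross, ContDiff ℝ (⊤ : ℕ∞) (γ (coneSign p)) := fun p hp =>
    (hγ _ (coneSign_eq_zero_iff.not_left.2 hp)).contDiff
  have hcont : ∀ p ∈ offCross, ContDiffAt ℝ (⊤ : ℕ∞) (glue γ) p := fun p hp =>
    contDiffAt_glue (hsmooth p hp) hp
  have hcontDeriv : ∀ (τ : ℝ), ∀ p ∈ offCross, ContDiffAt ℝ (⊤ : ℕ∞) (nullDeriv τ (glue γ)) p :=
    fun τ p hp => contDiffAt_nullDeriv (hcont p hp)
  have hon {g : ℝ × ℝ × ℝ → E} (hg : ∀ p ∈ offCross, ContDiffAt ℝ (⊤ : ℕ∞) g p) :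
      ContinuousOn g offCross := fun p hp => (hg p hp).continuousAt.continuousWithinAt
  refine ⟨hcont, fun p hp => ?_, fun σ hσ => ?_, fun σ hσ => ?_, fun σ hσ => ?_, fun σ hσ => ?_⟩
  · rw [glue, coneSign_eq_zero_iff.2 hp, h0, Pi.zero_apply]
  · simpa using hasNullGrowth_of_norm_le_glue (m := 0) (n := 0) hσ (hon hcont)
      (fun ε hε => (hγ ε hε).bound) (by simp)
  · have htime : ContinuousOn (fun p => fderiv ℝ (glue γ) p et) offCross := hon fun p hp =>
      ((hcont p hp).fderiv_right (m := (⊤ : ℕ∞)) le_rfl).clm_apply contDiffAt_const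
    simpa using hasNullGrowth_of_norm_le_glue (m := 0) (n := 0) hσ htime
      (fun ε hε => (hγ ε hε).bound_time) fun p hp => by
        simp [fderiv_glue_et (hsmooth p hp) hp]
  · simpa [sub_eq_add_neg] using hasNullGrowth_of_norm_le_glue (m := -1) (n := 0) hσ
      (hon (hcontDeriv σ)) (fun ε hε => (hγ ε hε).bound_nullDeriv σ hσ) fun p hp => by
        simp [nullDeriv_glue hσ (hsmooth p hp) hp, norm_smul, Real.rpow_neg_one]
  · simpa [sub_eq_add_neg] using hasNullGrowth_of_norm_le_glue (m := -1) (n := -1) hσ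
      (hon fun p hp => contDiffAt_nullDeriv (hcontDeriv (-σ) p hp))
      (fun ε hε => (hγ ε hε).bound_wave σ hσ) fun p hp => by
        simp [nullDeriv_nullDeriv_glue hσ (hsmooth p hp) hp, norm_smul, Real.rpow_neg_one]

theorem isNullIshimoriAt_glue {U : SignType → ℝ × ℝ × ℝ → Fin 3 → ℝ}
    {Φ : SignType → ℝ × ℝ × ℝ → ℝ} (hU : ContDiff ℝ (⊤ : ℕ∞) (U (coneSign p)))
    (hΦ : ContDiff ℝ (⊤ : ℕ∞) (Φ (coneSign p))) (hp : p ∈ offCross)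
    (h : IsNullIshimoriAt (coneSign p * Real.exp (2 * (logPolar p).2.1)) (U (coneSign p))
      (Φ (coneSign p)) (logPolar p)) :
    IsNullIshimoriAt 1 (glue U) (glue Φ) p := by
  have h1 : (1 : ℝ) ^ 2 = 1 := one_pow 2
  have h2 : (-1 : ℝ) ^ 2 = 1 := by norm_num
  obtain ⟨hξ, hη⟩ := (mem_offCross_iff h1).1 hp
  rw [coneSign_mul_exp hp] at h
  obtain ⟨hspin, hpotential⟩ := h
  rw [IsNullIshimoriAt, fderiv_glue_et hU hp, nullDeriv_nullDeriv_glue h1 hU hp,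
    nullDeriv_nullDeriv_glue h1 hΦ hp, nullDeriv_glue h1 hU hp, nullDeriv_glue h2 hU hp,
    nullDeriv_glue h1 hΦ hp, nullDeriv_glue h2 hΦ hp]
  simp only [glue]
  constructor
  · rw [← inv_smul_smul₀ (mul_ne_zero hξ hη) (fderiv ℝ _ _ et), hspin,
      show cross3 _ (_ • _) = _ • cross3 _ _ from isBoundedBilinearMap_cross3.smul_right _ _ _]
    module
  · rw [hpotential]
    simp only [dot3, cross3, Pi.smul_apply, smul_eq_mul, Matrix.cons_val]
    ring

end LogPolar

section RotField

variable {κ k μ σ : ℝ} {B : ℝ → ℝ} {W : ℝ → Fin 3 → ℝ}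

/-- The rotation of `ℝ³` by the angle `θ` about the axis `e₀`. -/
noncomputable def rot (θ : ℝ) : (Fin 3 → ℝ) →ₗ[ℝ] (Fin 3 → ℝ) where
  toFun v := ![v 0, v 1 * Real.cos θ - v 2 * Real.sin θ, v 1 * Real.sin θ + v 2 * Real.cos θ]
  map_add' v w := by ext i; fin_cases i <;> simp <;> ring
  map_smul' r v := by ext i; fin_cases i <;> simp <;> ring

theorem rot_apply (θ : ℝ) (v : Fin 3 → ℝ) : rot θ v =
    ![v 0, v 1 * Real.cos θ - v 2 * Real.sin θ, v 1 * Real.sin θ + v 2 * Real.cos θ] :=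
  rfl

theorem rot_e0 (θ : ℝ) : rot θ e0 = e0 := by
  ext i
  fin_cases i <;> simp [rot_apply, e0]

theorem dot3_rot (θ : ℝ) (v w : Fin 3 → ℝ) : dot3 (rot θ v) (rot θ w) = dot3 v w := by
  simp only [dot3, rot_apply, Matrix.cons_val]
  linear_combination (v 1 * w 1 + v 2 * w 2) * Real.sin_sq_add_cos_sq θ

theorem cross3_rot (θ : ℝ) (v w : Fin 3 → ℝ) :
    cross3 (rot θ v) (rot θ w) = rot θ (cross3 v w) := by
  ext i
  fin_cases i
  · simp [cross3, rot_apply]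
    linear_combination (v 1 * w 2 - v 2 * w 1) * Real.sin_sq_add_cos_sq θ
  · simp [cross3, rot_apply]
    ring
  · simp [cross3, rot_apply]
    ring

theorem norm_rot_le (θ : ℝ) (v : Fin 3 → ℝ) : ‖rot θ v‖ ≤ 2 * ‖v‖ := by
  refine (pi_norm_le_iff_of_nonneg (by positivity)).2 fun i => ?_
  have hv := norm_le_pi_norm v
  have hmul : ∀ (i : Fin 3) (r : ℝ), |r| ≤ 1 → |v i * r| ≤ ‖v‖ := fun i r hr => by
    rw [abs_mul]
    exact (mul_le_of_le_one_right (abs_nonneg _) hr).trans (hv i)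
  have hcos := Real.abs_cos_le_one θ
  have hsin := Real.abs_sin_le_one θ
  fin_cases i
  · exact (hv 0).trans (by linarith [norm_nonneg v])
  · exact (abs_sub _ _).trans (by linarith [hmul 1 _ hcos, hmul 2 _ hsin])
  · exact (abs_add_le _ _).trans (by linarith [hmul 1 _ hsin, hmul 2 _ hcos])

theorem cross3_e0 (v : Fin 3 → ℝ) : cross3 e0 v = ![0, -v 2, v 1] := by
  ext i
  fin_cases i <;> simp [cross3, e0]

theorem hasDerivAt_rot {θ : ℝ → ℝ} {V : ℝ → Fin 3 → ℝ} {θ' r : ℝ} {V' : Fin 3 → ℝ}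
    (hθ : HasDerivAt θ θ' r) (hV : HasDerivAt V V' r) :
    HasDerivAt (fun r => rot (θ r) (V r)) (rot (θ r) (V' + θ' • cross3 e0 (V r))) r := by
  have hV' := hasDerivAt_pi.1 hV
  simp only [rot_apply, cross3_e0, Pi.add_apply, Pi.smul_apply, smul_eq_mul, Matrix.cons_val]
  refine hasDerivAt_pi.2 fun i => ?_
  fin_cases i
  · exact (hV' 0).congr_deriv (by simp)
  · exact (((hV' 1).fun_mul hθ.cos).fun_sub ((hV' 2).fun_mul hθ.sin)).congr_deriv
      (by simp only [Fin.mk_one, Matrix.cons_val]; ring)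
  · exact (((hV' 1).fun_mul hθ.sin).fun_add ((hV' 2).fun_mul hθ.cos)).congr_deriv
      (by simp only [Fin.reduceFinMk, Matrix.cons_val]; ring)

/-- The equivariant field of `(t, τ, α)` with phase `B` and profile `W`. -/
noncomputable def rotField (k μ : ℝ) (B : ℝ → ℝ) (W : ℝ → Fin 3 → ℝ) (p : ℝ × ℝ × ℝ) :
    Fin 3 → ℝ :=
  rot (B p.2.1 + k * p.2.2 + μ * p.1) (W p.2.1)

theorem contDiff_rotField {n : WithTop ℕ∞} (hB : ContDiff ℝ n B) (hW : ContDiff ℝ n W) :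
    ContDiff ℝ n (rotField k μ B W) := by
  have hW' : ∀ i, ContDiff ℝ n fun τ => W τ i := contDiff_pi.1 hW
  refine contDiff_pi.2 fun i => ?_
  simp only [rotField, rot_apply]
  fin_cases i <;> simp only [Fin.zero_eta, Fin.mk_one, Fin.reduceFinMk, Matrix.cons_val] <;>
    fun_prop

theorem fderiv_rotField (hB : ContDiff ℝ 1 B) (hW : ContDiff ℝ 1 W) (p v : ℝ × ℝ × ℝ) :
    fderiv ℝ (rotField k μ B W) p v = rot (B p.2.1 + k * p.2.2 + μ * p.1)
      (v.2.1 • deriv W p.2.1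
        + (v.2.1 * deriv B p.2.1 + k * v.2.2 + μ * v.1) • cross3 e0 (W p.2.1)) := by
  have hd := (contDiff_rotField (k := k) (μ := μ) hB hW).differentiable one_ne_zero p
  have hB' := (hB.differentiable one_ne_zero p.2.1).hasDerivAt
  have hW' := (hW.differentiable one_ne_zero p.2.1).hasDerivAt
  have hline (x y : ℝ) : HasDerivAt (fun r : ℝ => x + r * y) y 0 := by
    simpa using ((hasDerivAt_id (0 : ℝ)).mul_const y).const_add x
  have hτ : HasDerivAt (fun r : ℝ => p.2.1 + r * v.2.1) v.2.1 0 := hline _ _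
  have hrot := hasDerivAt_rot
    (((hB'.comp_of_eq 0 hτ (by simp)).fun_add ((hline p.2.2 v.2.2).const_mul k)).fun_add
      ((hline p.1 v.1).const_mul μ))
    (hW'.scomp_of_eq 0 hτ (by simp))
  rw [← hd.lineDeriv_eq_fderiv]
  refine HasDerivAt.deriv (hrot.congr_deriv ?_)
  simp [mul_comm]

theorem nullDeriv_rotField (hB : ContDiff ℝ 1 B) (hW : ContDiff ℝ 1 W) (σ : ℝ) :
    nullDeriv σ (rotField k μ B W)
      = rotField k μ B fun τ => deriv W τ + (deriv B τ + σ * k) • cross3 e0 (W τ) := by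
  ext1 p
  rw [nullDeriv, fderiv_rotField hB hW, rotField]
  simp [nullDir, mul_comm]

theorem fderiv_rotField_et (hB : ContDiff ℝ 1 B) (hW : ContDiff ℝ 1 W) :
    (fun p => fderiv ℝ (rotField k μ B W) p et) = rotField k μ B fun τ => μ • cross3 e0 (W τ) := by
  ext1 p
  rw [fderiv_rotField hB hW, rotField]
  simp [et]

theorem contDiff_cross3_e0 {n : WithTop ℕ∞} (hW : ContDiff ℝ n W) :
    ContDiff ℝ n fun τ => cross3 e0 (W τ) :=
  (isBoundedBilinearMap_cross3.isBoundedLinearMap_right e0).contDiff.comp hW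

theorem hasDerivAt_cross3_e0 {W' : Fin 3 → ℝ} {τ : ℝ} (hW : HasDerivAt W W' τ) :
    HasDerivAt (fun τ => cross3 e0 (W τ)) (cross3 e0 W') τ :=
  (isBoundedBilinearMap_cross3.isBoundedLinearMap_right e0).hasFDerivAt.comp_hasDerivAt τ hW

theorem nullDeriv_nullDeriv_rotField (hB : ContDiff ℝ 2 B) (hW : ContDiff ℝ 2 W) (σ : ℝ) :
    nullDeriv σ (nullDeriv (-σ) (rotField k μ B W)) = rotField k μ B fun τ =>
      deriv (deriv W) τ + deriv (deriv B) τ • cross3 e0 (W τ)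
        + (2 * deriv B τ) • cross3 e0 (deriv W τ)
        + (deriv B τ ^ 2 - σ ^ 2 * k ^ 2) • cross3 e0 (cross3 e0 (W τ)) := by
  have hB1 : ContDiff ℝ 1 B := hB.of_le one_le_two
  have hW1 : ContDiff ℝ 1 W := hW.of_le one_le_two
  have hB' : ContDiff ℝ 1 (deriv B) := hB.deriv'
  have hW' : ContDiff ℝ 1 (deriv W) := hW.deriv'
  have hfirst : ContDiff ℝ 1 fun τ => deriv W τ + (deriv B τ + -σ * k) • cross3 e0 (W τ) :=
    hW'.add ((hB'.add contDiff_const).smul (contDiff_cross3_e0 hW1))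
  have hderiv (τ : ℝ) : deriv (fun τ => deriv W τ + (deriv B τ + -σ * k) • cross3 e0 (W τ)) τ
      = deriv (deriv W) τ + ((deriv B τ + -σ * k) • cross3 e0 (deriv W τ)
        + deriv (deriv B) τ • cross3 e0 (W τ)) :=
    (((hW'.differentiable one_ne_zero τ).hasDerivAt).fun_add
      (((hB'.differentiable one_ne_zero τ).hasDerivAt.add_const _).fun_smul
        (hasDerivAt_cross3_e0 (hW1.differentiable one_ne_zero τ).hasDerivAt))).deriv
  rw [nullDeriv_rotField hB1 hW1, nullDeriv_rotField hB1 hfirst]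
  congr 1
  ext1 τ
  rw [hderiv, show cross3 e0 (_ + _) = cross3 e0 _ + cross3 e0 _ from
    isBoundedBilinearMap_cross3.add_right _ _ _, show cross3 e0 (_ • _) = _ • cross3 e0 _ from
    isBoundedBilinearMap_cross3.smul_right _ _ _]
  module

theorem hasConeBound_rotField (hW : Continuous W)
    (hWO : W =O[atBot] fun τ => Real.exp (κ * τ)) : HasConeBound κ (rotField k μ B W) := fun T => by
  obtain ⟨C, -, hC⟩ := exists_forall_le_norm_le_mul_of_isBigO hW (by fun_prop)
    (fun τ => Real.exp_pos (κ * τ)) hWO T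
  exact ⟨2 * C, fun p hp => (norm_rot_le _ _).trans (by linarith [hC _ hp])⟩

theorem isBigO_smul_cross3_e0 {g h : ℝ → ℝ} (hg : g =O[atBot] fun _ => (1 : ℝ))
    (hW : W =O[atBot] h) : (fun τ => g τ • cross3 e0 (W τ)) =O[atBot] h := by
  have hcross : (fun τ => cross3 e0 (W τ)) =O[atBot] W :=
    (isBoundedBilinearMap_cross3.isBoundedLinearMap_right e0).isBigO_comp _
  simpa using hg.smul (hcross.trans hW)

theorem isConeField_rotField (hB : ContDiff ℝ (⊤ : ℕ∞) B) (hW : ContDiff ℝ (⊤ : ℕ∞) W)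
    (hB' : deriv B =O[atBot] fun _ => (1 : ℝ)) (hB'' : deriv (deriv B) =O[atBot] fun _ => (1 : ℝ))
    (hWO : W =O[atBot] fun τ => Real.exp (κ * τ))
    (hW' : deriv W =O[atBot] fun τ => Real.exp (κ * τ))
    (hW'' : deriv (deriv W) =O[atBot] fun τ => Real.exp (κ * τ)) :
    IsConeField κ (rotField k μ B W) := by
  have hB1 := (contDiff_infty_iff_deriv.1 hB).2
  have hB2 := (contDiff_infty_iff_deriv.1 hB1).2
  have hW1 := (contDiff_infty_iff_deriv.1 hW).2
  have hW2 := (contDiff_infty_iff_deriv.1 hW1).2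
  have hconst (r : ℝ) : (fun _ => r) =O[atBot] fun _ : ℝ => (1 : ℝ) :=
    isBigO_const_const r one_ne_zero _
  have hsq : (fun τ => deriv B τ ^ 2) =O[atBot] fun _ => (1 : ℝ) := by simpa using hB'.pow 2
  have hJW : (fun τ => cross3 e0 (W τ)) =O[atBot] fun τ => Real.exp (κ * τ) := by
    simpa using isBigO_smul_cross3_e0 (hconst 1) hWO
  refine ⟨contDiff_rotField hB hW, hasConeBound_rotField hW.continuous hWO, ?_, fun σ _ => ?_,
    fun σ _ => ?_⟩
  · rw [fderiv_rotField_et (hB.of_le (by simp)) (hW.of_le (by simp))]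
    exact hasConeBound_rotField ((contDiff_cross3_e0 hW).continuous.const_smul μ)
      (isBigO_smul_cross3_e0 (hconst μ) hWO)
  · rw [nullDeriv_rotField (hB.of_le (by simp)) (hW.of_le (by simp))]
    exact hasConeBound_rotField
      (hW1.add ((hB1.add contDiff_const).smul (contDiff_cross3_e0 hW))).continuous
      (hW'.add (isBigO_smul_cross3_e0 (hB'.add (hconst _)) hWO))
  · rw [nullDeriv_nullDeriv_rotField (contDiff_infty.1 hB 2) (contDiff_infty.1 hW 2)]
    exact hasConeBound_rotField
      (((hW2.add (hB2.smul (contDiff_cross3_e0 hW))).add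
        ((contDiff_const.mul hB1).smul (contDiff_cross3_e0 hW1))).add
        (((hB1.pow 2).sub contDiff_const).smul
          (contDiff_cross3_e0 (contDiff_cross3_e0 hW)))).continuous
      (((hW''.add (isBigO_smul_cross3_e0 hB'' hWO)).add
        (isBigO_smul_cross3_e0 (hB'.const_mul_left 2) hW')).add
        (isBigO_smul_cross3_e0 (hsq.sub (hconst _)) hJW))

end RotField

section RadialField

variable {κ σ : ℝ} {f : ℝ → ℝ}

theorem fderiv_radial (hf : Differentiable ℝ f) (p v : ℝ × ℝ × ℝ) :
    fderiv ℝ (fun p : ℝ × ℝ × ℝ => f p.2.1) p v = deriv f p.2.1 * v.2.1 := by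
  have hτ : HasFDerivAt (fun q : ℝ × ℝ × ℝ => q.2.1)
      ((ContinuousLinearMap.fst ℝ ℝ ℝ).comp (ContinuousLinearMap.snd ℝ ℝ (ℝ × ℝ))) p :=
    ((ContinuousLinearMap.fst ℝ ℝ ℝ).comp (ContinuousLinearMap.snd ℝ ℝ (ℝ × ℝ))).hasFDerivAt
  have hcomp : HasFDerivAt (fun q : ℝ × ℝ × ℝ => f q.2.1) _ p :=
    (hf p.2.1).hasDerivAt.comp_hasFDerivAt p hτ
  rw [hcomp.fderiv]
  simp

theorem nullDeriv_radial (hf : Differentiable ℝ f) (σ : ℝ) :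
    nullDeriv σ (fun p => f p.2.1) = fun p => deriv f p.2.1 := by
  ext1 p
  rw [nullDeriv, fderiv_radial hf, nullDir, mul_one]

theorem nullDeriv_angle_add_radial (hf : Differentiable ℝ f) (c σ : ℝ) :
    nullDeriv σ (fun p => c * p.2.2 + f p.2.1) = fun p => c * σ + deriv f p.2.1 := by
  ext1 p
  have hangle : HasFDerivAt (fun q : ℝ × ℝ × ℝ => c * q.2.2)
      (c • (ContinuousLinearMap.snd ℝ ℝ ℝ).comp (ContinuousLinearMap.snd ℝ ℝ (ℝ × ℝ))) p :=
    (c • (ContinuousLinearMap.snd ℝ ℝ ℝ).comp (ContinuousLinearMap.snd ℝ ℝ (ℝ × ℝ))).hasFDerivAt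
  have hradial : DifferentiableAt ℝ (fun q : ℝ × ℝ × ℝ => f q.2.1) p :=
    (hf p.2.1).comp p differentiableAt_snd.fst
  refine (nullDeriv_add hangle.differentiableAt hradial).trans ?_
  rw [nullDeriv_radial hf, nullDeriv, hangle.fderiv]
  simp [nullDir]

theorem isConeField_radial (hf : ContDiff ℝ (⊤ : ℕ∞) f)
    (hfO : f =O[atBot] fun τ => Real.exp (κ * τ))
    (hf' : deriv f =O[atBot] fun τ => Real.exp (κ * τ))
    (hf'' : deriv (deriv f) =O[atBot] fun τ => Real.exp (κ * τ)) :
    IsConeField κ fun p => f p.2.1 := by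
  have hf1 := (contDiff_infty_iff_deriv.1 hf).2
  have hf2 := (contDiff_infty_iff_deriv.1 hf1).2
  have hbound {g : ℝ → ℝ} (hg : Continuous g) (h : g =O[atBot] fun τ => Real.exp (κ * τ)) :
      HasConeBound κ fun p : ℝ × ℝ × ℝ => g p.2.1 := fun T => by
    obtain ⟨C, -, hC⟩ := exists_forall_le_norm_le_mul_of_isBigO hg (by fun_prop)
      (fun τ => Real.exp_pos (κ * τ)) h T
    exact ⟨C, fun p hp => hC _ hp⟩
  refine ⟨hf.comp contDiff_snd.fst, hbound hf.continuous hfO, fun T => ⟨0, fun p _ => ?_⟩,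
    fun σ _ => ?_, fun σ _ => ?_⟩
  · simp [fderiv_radial (hf.differentiable (by simp)), et]
  · rw [nullDeriv_radial (hf.differentiable (by simp))]
    exact hbound hf1.continuous hf'
  · rw [nullDeriv_radial (hf.differentiable (by simp)),
      nullDeriv_radial (hf1.differentiable (by simp))]
    exact hbound hf2.continuous hf''

end RadialField

section ProfileWave

variable {k b c μ ν κ ω : ℝ} {S : ℝ → ℝ}

/-- The meridian of `S²` through `e₀`, by polar angle. -/
noncomputable def meridian (s : ℝ) : Fin 3 → ℝ := ![Real.cos s, Real.sin s, 0]

/-- The unit tangent of `meridian`. -/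
noncomputable def meridianTangent (s : ℝ) : Fin 3 → ℝ := ![-Real.sin s, Real.cos s, 0]

theorem hasDerivAt_meridian (s : ℝ) : HasDerivAt meridian (meridianTangent s) s := by
  refine hasDerivAt_pi.2 fun i => ?_
  fin_cases i
  exacts [Real.hasDerivAt_cos s, Real.hasDerivAt_sin s, hasDerivAt_const s 0]

theorem hasDerivAt_meridianTangent (s : ℝ) : HasDerivAt meridianTangent (-meridian s) s := by
  refine hasDerivAt_pi.2 fun i => ?_
  fin_cases i
  exacts [(Real.hasDerivAt_sin s).neg, Real.hasDerivAt_cos s,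
    (hasDerivAt_const s 0).congr_deriv neg_zero.symm]

theorem contDiff_meridian {n : WithTop ℕ∞} : ContDiff ℝ n meridian := by
  refine contDiff_pi.2 fun i => ?_
  fin_cases i
  exacts [Real.contDiff_cos, Real.contDiff_sin, contDiff_const]

theorem norm_meridian_le_one (s : ℝ) : ‖meridian s‖ ≤ 1 := by
  refine (pi_norm_le_iff_of_nonneg zero_le_one).2 fun i => ?_
  fin_cases i
  exacts [Real.abs_cos_le_one s, Real.abs_sin_le_one s, by simp [meridian]]

theorem norm_meridianTangent_le_one (s : ℝ) : ‖meridianTangent s‖ ≤ 1 := by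
  refine (pi_norm_le_iff_of_nonneg zero_le_one).2 fun i => ?_
  fin_cases i
  exacts [(abs_neg _).trans_le (Real.abs_sin_le_one s), Real.abs_cos_le_one s,
    by simp [meridianTangent]]

theorem norm_meridian_sub_e0_le (s : ℝ) : ‖meridian s - e0‖ ≤ |s| := by
  refine (pi_norm_le_iff_of_nonneg (abs_nonneg s)).2 fun i => ?_
  fin_cases i
  exacts [(abs_sub_comm _ _).trans_le (abs_one_sub_cos_le s),
    by simpa [meridian, e0] using Real.abs_sin_le_abs, by simp [meridian, e0]]

theorem spin_balance (k b c m p : ℝ) {s : ℝ} (hs : 1 + Real.cos s ≠ 0) :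
    m • cross3 e0 (meridian s) = cross3 (meridian s)
        (((radialCoeff k b c s + m) * Real.sin s) • meridianTangent s - p ^ 2 • meridian s
          + -(c * (p * Real.sin s) / (1 + Real.cos s) ^ 2) • cross3 e0 (meridian s)
          + (2 * -(c / (1 + Real.cos s))) • cross3 e0 (p • meridianTangent s)
          + ((-(c / (1 + Real.cos s))) ^ 2 - 1 ^ 2 * k ^ 2) • cross3 e0 (cross3 e0 (meridian s)))
      + (-c) • (p • meridianTangent s)
      + (c ^ 2 / (1 + Real.cos s) + k * (b - 2 * k * (1 - Real.cos s)))
        • cross3 e0 (meridian s) := by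
  have htrig := Real.sin_sq_add_cos_sq s
  ext i
  fin_cases i <;>
    simp only [cross3, e0, meridian, meridianTangent, radialCoeff, Pi.add_apply, Pi.sub_apply,
      Pi.smul_apply, smul_eq_mul, Fin.zero_eta, Fin.mk_one, Fin.reduceFinMk, Matrix.cons_val] <;>
    field_simp
  · linear_combination c * p * Real.sin s * htrig
  · linear_combination -c * p * Real.cos s * htrig
  · linear_combination -Real.sin s * ((1 + Real.cos s) ^ 2
      * (2 * k ^ 2 - 3 * k ^ 2 * Real.cos s - k * b + m) - c ^ 2) * htrig

theorem dot3_meridian_cross3 (s p x y : ℝ) :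
    dot3 (meridian s) (cross3 (p • meridianTangent s + x • cross3 e0 (meridian s))
      (p • meridianTangent s + y • cross3 e0 (meridian s))) = (y - x) * (p * Real.sin s) := by
  simp only [dot3, cross3, e0, meridian, meridianTangent, Pi.add_apply, Pi.smul_apply,
    smul_eq_mul, Matrix.cons_val]
  linear_combination (y - x) * (p * Real.sin s) * Real.sin_sq_add_cos_sq s

namespace IsProfile

variable (h : IsProfile k b c ν κ S)
include h

theorem tendsto (hκ : 0 < κ) : Tendsto S atBot (nhds 0) :=
  h.isBigO.trans_tendsto (Real.tendsto_exp_atBot.comp (tendsto_id.const_mul_atBot hκ))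

theorem tendsto_deriv (hκ : 0 < κ) : Tendsto (deriv S) atBot (nhds 0) :=
  h.isBigO_deriv.trans_tendsto (Real.tendsto_exp_atBot.comp (tendsto_id.const_mul_atBot hκ))

theorem isBigO_deriv_deriv (hκ : 0 < κ) :
    deriv (deriv S) =O[atBot] fun τ => Real.exp (κ * τ) := by
  have hforce : (fun τ => radialCoeff k b c (S τ) * Real.sin (S τ)) =O[atBot] S := by
    simpa [Function.comp_def] using
      (hasDerivAt_radialForce_zero (k := k) (b := b) (c := c)).isBigO_sub.comp_tendsto
        (h.tendsto hκ)
  have hsource : (fun τ => ν * Real.exp (2 * τ)) =O[atBot] fun _ => (1 : ℝ) :=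
    ((Real.tendsto_exp_atBot.comp (tendsto_id.const_mul_atBot two_pos)).const_mul ν).isBigO_one ℝ
  have hsin : (fun τ => Real.sin (S τ)) =O[atBot] S :=
    .of_bound 1 (.of_forall fun τ => by simpa using Real.abs_sin_le_abs)
  have hprod : (fun τ => ν * Real.exp (2 * τ) * Real.sin (S τ)) =O[atBot] S := by
    simpa using hsource.mul hsin
  refine ((hforce.add hprod).trans h.isBigO).congr_left fun τ => ?_
  rw [h.deriv_deriv]
  ring

theorem deriv_phase : deriv (phase c S) = fun τ => -(c / (1 + Real.cos (S τ))) :=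
  deriv_eq h.hasDerivAt_phase

theorem deriv_deriv_phase (τ : ℝ) : deriv (deriv (phase c S)) τ
    = -(c * (deriv S τ * Real.sin (S τ)) / (1 + Real.cos (S τ)) ^ 2) := by
  rw [h.deriv_phase]
  refine HasDerivAt.deriv (((hasDerivAt_const τ c).fun_div
    ((h.hasDerivAt τ).cos.const_add 1) (h.one_add_cos_pos τ).ne').fun_neg.congr_deriv ?_)
  ring

theorem isBigO_deriv_phase (hκ : 0 < κ) : deriv (phase c S) =O[atBot] fun _ => (1 : ℝ) := by
  rw [h.deriv_phase]
  have hcos : Tendsto (fun τ => 1 + Real.cos (S τ)) atBot (nhds (1 + Real.cos 0)) :=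
    ((Real.continuous_cos.tendsto 0).comp (h.tendsto hκ)).const_add 1
  exact (tendsto_const_nhds.div hcos (by simp)).neg.isBigO_one ℝ

theorem isBigO_deriv_deriv_phase (hκ : 0 < κ) :
    deriv (deriv (phase c S)) =O[atBot] fun _ => (1 : ℝ) := by
  rw [funext h.deriv_deriv_phase]
  have hcos : Tendsto (fun τ => 1 + Real.cos (S τ)) atBot (nhds (1 + Real.cos 0)) :=
    ((Real.continuous_cos.tendsto 0).comp (h.tendsto hκ)).const_add 1
  have hsin := (Real.continuous_sin.tendsto 0).comp (h.tendsto hκ)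
  exact ((((h.tendsto_deriv hκ).mul hsin).const_mul c).div (hcos.pow 2) (by simp)).neg.isBigO_one ℝ

theorem hasDerivAt_meridian_comp (τ : ℝ) : HasDerivAt (fun τ => meridian (S τ))
    (deriv S τ • meridianTangent (S τ)) τ :=
  (hasDerivAt_meridian (S τ)).scomp τ (h.hasDerivAt τ)

theorem deriv_meridian_comp :
    deriv (fun τ => meridian (S τ)) = fun τ => deriv S τ • meridianTangent (S τ) :=
  deriv_eq h.hasDerivAt_meridian_comp

theorem deriv_deriv_meridian_comp (τ : ℝ) : deriv (deriv fun τ => meridian (S τ)) τ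
    = deriv (deriv S) τ • meridianTangent (S τ) - deriv S τ ^ 2 • meridian (S τ) := by
  rw [h.deriv_meridian_comp]
  refine HasDerivAt.deriv (((h.contDiff_deriv.differentiable (by simp) τ).hasDerivAt.fun_smul
    ((hasDerivAt_meridianTangent (S τ)).scomp τ (h.hasDerivAt τ))).congr_deriv ?_)
  dsimp only [Function.comp_apply]
  module

theorem isConeField_spin_sub (hκ : 0 < κ) :
    IsConeField κ (rotField k μ (phase c S) fun τ => meridian (S τ) - e0) := by
  have hsub : deriv (fun τ => meridian (S τ) - e0) = deriv fun τ => meridian (S τ) := by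
    ext1 τ
    exact deriv_sub_const _
  have hbdd {V : ℝ → Fin 3 → ℝ} (hV : ∀ s, ‖V s‖ ≤ 1) :
      (fun τ => V (S τ)) =O[atBot] fun _ => (1 : ℝ) :=
    .of_bound 1 (.of_forall fun τ => by simpa using hV (S τ))
  have hone : deriv S =O[atBot] fun _ => (1 : ℝ) := (h.tendsto_deriv hκ).isBigO_one ℝ
  refine isConeField_rotField h.contDiff_phase
    ((contDiff_meridian.comp h.contDiff).sub contDiff_const) (h.isBigO_deriv_phase hκ)
    (h.isBigO_deriv_deriv_phase hκ) ?_ ?_ ?_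
  · exact (IsBigO.of_bound 1 (.of_forall fun τ => by
      simpa using norm_meridian_sub_e0_le (S τ))).trans h.isBigO
  · rw [hsub, h.deriv_meridian_comp]
    simpa using h.isBigO_deriv.smul (hbdd norm_meridianTangent_le_one)
  · rw [hsub, funext h.deriv_deriv_meridian_comp]
    have htangent := (h.isBigO_deriv_deriv hκ).smul (hbdd norm_meridianTangent_le_one)
    have hsq : (fun τ => deriv S τ ^ 2) =O[atBot] fun τ => Real.exp (κ * τ) := by
      simpa [sq] using h.isBigO_deriv.mul hone
    have hnormal := hsq.smul (hbdd norm_meridian_le_one)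
    simpa only [smul_eq_mul, mul_one] using htangent.sub hnormal

theorem isBigO_one_sub_cos : (fun τ => 1 - Real.cos (S τ)) =O[atBot] fun τ => Real.exp (κ * τ) :=
  (IsBigO.of_bound 1 (.of_forall fun τ => by
    simpa using abs_one_sub_cos_le (S τ))).trans h.isBigO

theorem deriv_potential (hκ : 0 < κ) :
    deriv (potential k S) = fun τ => 2 * k * (1 - Real.cos (S τ)) :=
  deriv_eq (h.hasDerivAt_potential hκ)

theorem deriv_deriv_potential (hκ : 0 < κ) (τ : ℝ) :
    deriv (deriv (potential k S)) τ = 2 * k * (Real.sin (S τ) * deriv S τ) := by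
  rw [h.deriv_potential hκ]
  exact ((((h.hasDerivAt τ).cos.const_sub 1).const_mul (2 * k)).congr_deriv (by ring)).deriv

theorem isConeField_potential (hκ : 0 < κ) :
    IsConeField κ fun p : ℝ × ℝ × ℝ => potential k S p.2.1 := by
  refine isConeField_radial (h.contDiff_potential hκ) (h.isBigO_potential hκ) ?_ ?_
  · rw [h.deriv_potential hκ]
    exact h.isBigO_one_sub_cos.const_mul_left _
  · rw [funext (h.deriv_deriv_potential hκ)]
    have hsin : (fun τ => Real.sin (S τ)) =O[atBot] fun _ => (1 : ℝ) :=
      .of_bound 1 (.of_forall fun τ => by simpa using Real.abs_sin_le_one (S τ))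
    simpa using (hsin.mul h.isBigO_deriv).const_mul_left (2 * k)

theorem isNullIshimoriAt (hκ : 0 < κ) {p : ℝ × ℝ × ℝ} (hω : ω * μ = ν * Real.exp (2 * p.2.1)) :
    IsNullIshimoriAt ω (rotField k μ (phase c S) fun τ => meridian (S τ))
      (fun p => c * p.2.2 + (b * p.2.1 - potential k S p.2.1)) p := by
  have hB := h.contDiff_phase
  have hW : ContDiff ℝ (⊤ : ℕ∞) fun τ => meridian (S τ) := contDiff_meridian.comp h.contDiff
  have hF : ∀ τ, HasDerivAt (fun τ => b * τ - potential k S τ)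
      (b - 2 * k * (1 - Real.cos (S τ))) τ := fun τ =>
    (((hasDerivAt_id' τ).const_mul b).congr_deriv (mul_one b)).fun_sub (h.hasDerivAt_potential hκ τ)
  have hF' : ∀ τ, HasDerivAt (fun τ => c * -1 + (b - 2 * k * (1 - Real.cos (S τ))))
      (-(2 * k * (Real.sin (S τ) * deriv S τ))) τ := fun τ =>
    ((((((h.hasDerivAt τ).cos.const_sub 1).const_mul (2 * k))).const_sub b).const_add _).congr_deriv
      (by ring)
  have hB1 : ContDiff ℝ 1 (phase c S) := hB.of_le (by simp)
  have hW1 : ContDiff ℝ 1 fun τ => meridian (S τ) := hW.of_le (by simp)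
  have hpos := (h.one_add_cos_pos p.2.1).ne'
  rw [IsNullIshimoriAt, congrFun (fderiv_rotField_et hB1 hW1) p,
    nullDeriv_nullDeriv_rotField (contDiff_infty.1 hB 2) (contDiff_infty.1 hW 2),
    nullDeriv_rotField hB1 hW1, nullDeriv_rotField hB1 hW1,
    nullDeriv_angle_add_radial fun τ => (hF τ).differentiableAt,
    nullDeriv_angle_add_radial fun τ => (hF τ).differentiableAt, deriv_eq hF,
    nullDeriv_radial fun τ => (hF' τ).differentiableAt, deriv_eq hF']
  simp only [rotField, h.deriv_deriv_phase, h.deriv_deriv_meridian_comp]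
  simp only [h.deriv_meridian_comp, h.deriv_phase, h.deriv_deriv, cross3_rot, dot3_rot,
    ← map_smul, ← map_sub, ← map_add]
  refine ⟨congrArg _ ?_, ?_⟩
  · rw [smul_smul, hω, spin_balance k b c _ _ hpos]
    module
  · rw [dot3_meridian_cross3]
    ring

end IsProfile
end ProfileWave

section ConeWave

variable {b c k κ μ : ℝ} {S : SignType → ℝ → ℝ} {p : ℝ × ℝ × ℝ}

theorem coneSign_eq_one_iff : coneSign p = 1 ↔ |p.2.2| < |p.2.1| := by
  rw [coneSign, sign_eq_one_iff, sub_pos, sq_lt_sq]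

theorem coneSign_eq_neg_one_iff : coneSign p = -1 ↔ |p.2.1| < |p.2.2| := by
  rw [coneSign, sign_eq_neg_one_iff, sub_neg, sq_lt_sq]

theorem log_aOf (hp : p ∈ offCross) : Real.log (aOf p.2.1 p.2.2) = (logPolar p).2.1 := by
  rw [aOf, Real.log_sqrt (abs_nonneg _), ← exp_two_mul_logPolar hp, Real.log_exp,
    mul_div_cancel_left₀ _ two_ne_zero]

theorem aOf_pos (hp : p ∈ offCross) : 0 < aOf p.2.1 p.2.2 :=
  Real.sqrt_pos.2 (exp_two_mul_logPolar hp ▸ Real.exp_pos _)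

theorem alphaOf_eq_logPolar (hp : p ∈ offCross) : alphaOf p.2.1 p.2.2 = (logPolar p).2.2 := by
  obtain ⟨h₁, h₂⟩ := (mem_offCross_iff (one_pow 2)).1 hp
  rw [logPolar, ← Real.log_abs (nullCoord 1 p), ← Real.log_abs (nullCoord (-1) p),
    ← Real.log_div (abs_ne_zero.2 h₁) (abs_ne_zero.2 h₂), alphaOf]
  simp [nullCoord_apply, sub_eq_add_neg]

/-- The spin whose polar angle is `S ε ∘ log` in the cone of sign `ε`. -/
noncomputable def waveSpin (k μ c : ℝ) (S : SignType → ℝ → ℝ) : ℝ × ℝ × ℝ → Fin 3 → ℝ :=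
  glue fun ε p =>
    if ε = 0 then e0 else rotField k μ (phase c (S ε)) (fun τ => meridian (S ε τ)) p

/-- The field `φ` that accompanies `waveSpin`. -/
noncomputable def wavePotential (k c b : ℝ) (S : SignType → ℝ → ℝ) : ℝ × ℝ × ℝ → ℝ :=
  glue fun ε p => if ε = 0 then 0 else c * p.2.2 + (b * p.2.1 - potential k (S ε) p.2.1)

/-- The part of `wavePotential` that remains bounded at the cross. -/
noncomputable def waveRegularPart (k : ℝ) (S : SignType → ℝ → ℝ) : ℝ × ℝ × ℝ → ℝ :=
  glue fun ε p => if ε = 0 then 0 else potential k (S ε) p.2.1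

theorem uDef_comp_log_eq_waveSpin (k μ c : ℝ) (S : SignType → ℝ → ℝ) :
    uDef μ k (S 1 ∘ Real.log) (phase c (S 1) ∘ Real.log) (S (-1) ∘ Real.log)
      (phase c (S (-1)) ∘ Real.log) = waveSpin k μ c S := by
  ext1 p
  rcases lt_trichotomy |p.2.1| |p.2.2| with h | h | h
  · have hp : p ∈ offCross := h.ne
    simp [uDef, waveSpin, glue, coneSign_eq_neg_one_iff.2 h, h, h.not_gt, log_aOf hp,
      alphaOf_eq_logPolar hp, rotField, rot_apply, meridian, logPolar]
  · simp [uDef, waveSpin, glue, coneSign_eq_zero_iff.2 (not_not.2 h), h, e0]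
  · have hp : p ∈ offCross := h.ne'
    simp [uDef, waveSpin, glue, coneSign_eq_one_iff.2 h, h, log_aOf hp,
      alphaOf_eq_logPolar hp, rotField, rot_apply, meridian, logPolar]

theorem φDef_comp_log_eq_wavePotential (k c b : ℝ) (S : SignType → ℝ → ℝ) :
    φDef k c b (S 1 ∘ Real.log) (S (-1) ∘ Real.log) = wavePotential k c b S := by
  ext1 p
  rcases lt_trichotomy |p.2.1| |p.2.2| with h | h | h
  · have hp : p ∈ offCross := h.ne
    simp [φDef, wavePotential, glue, coneSign_eq_neg_one_iff.2 h, h, h.not_gt, log_aOf hp,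
      alphaOf_eq_logPolar hp, integral_div_eq_potential k (S (-1)) (aOf_pos hp), add_sub_assoc]
  · simp [φDef, wavePotential, glue, coneSign_eq_zero_iff.2 (not_not.2 h), h]
  · have hp : p ∈ offCross := h.ne'
    simp [φDef, wavePotential, glue, coneSign_eq_one_iff.2 h, h, log_aOf hp,
      alphaOf_eq_logPolar hp, integral_div_eq_potential k (S 1) (aOf_pos hp), add_sub_assoc]

theorem dot3_waveSpin (k μ c : ℝ) (S : SignType → ℝ → ℝ) (p : ℝ × ℝ × ℝ) :
    dot3 (waveSpin k μ c S p) (waveSpin k μ c S p) = 1 := by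
  rw [waveSpin, glue]
  split_ifs
  · simp [dot3, e0]
  · rw [rotField, dot3_rot]
    simp [dot3, meridian, ← sq]

theorem wavePotential_eq (hp : p ∈ offCross) : wavePotential k c b S p
    = (b + 1 * c) / 2 * Real.log (nullCoord 1 p) + (b + -1 * c) / 2 * Real.log (nullCoord (-1) p)
      - waveRegularPart k S p := by
  have hε : coneSign p ≠ 0 := coneSign_eq_zero_iff.not_left.2 hp
  simp only [wavePotential, waveRegularPart, glue, if_neg hε, logPolar]
  ring

theorem crossRegular_waveSpin_sub (hκ : 0 < κ)
    (hS : ∀ ε : SignType, IsProfile k b c (ε * μ) κ (S ε)) :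
    CrossRegular (κ / 2) fun p => waveSpin k μ c S p - e0 := by
  have hglue : (fun p => waveSpin k μ c S p - e0) = glue fun ε => if ε = 0 then 0 else
      rotField k μ (phase c (S ε)) fun τ => meridian (S ε τ) - e0 := by
    ext1 p
    simp only [waveSpin, glue]
    split_ifs
    · exact sub_self _
    · simp only [rotField, map_sub, rot_e0]
  rw [hglue]
  refine crossRegular_glue (if_pos rfl) fun ε hε => ?_
  rw [if_neg hε]
  exact (hS ε).isConeField_spin_sub hκ

theorem crossRegular_waveRegularPart (hκ : 0 < κ)
    (hS : ∀ ε : SignType, IsProfile k b c (ε * μ) κ (S ε)) :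
    CrossRegular (κ / 2) (waveRegularPart k S) := by
  refine crossRegular_glue (funext fun _ => if_pos rfl) fun ε hε => ?_
  simpa only [if_neg hε] using (hS ε).isConeField_potential hκ

theorem isNullIshimoriAt_wave (hκ : 0 < κ) (hS : ∀ ε : SignType, IsProfile k b c (ε * μ) κ (S ε))
    (hp : p ∈ offCross) : IsNullIshimoriAt 1 (waveSpin k μ c S) (wavePotential k c b S) p := by
  have hε : coneSign p ≠ 0 := coneSign_eq_zero_iff.not_left.2 hp
  have hprofile := hS (coneSign p)
  have hpotential := hprofile.contDiff_potential hκ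
  refine isNullIshimoriAt_glue ?_ ?_ hp ?_ <;> simp only [if_neg hε]
  · exact contDiff_rotField hprofile.contDiff_phase (contDiff_meridian.comp hprofile.contDiff)
  · exact (contDiff_const.mul contDiff_snd.snd).add
      ((contDiff_const.mul contDiff_snd.fst).sub (hpotential.comp contDiff_snd.fst))
  · exact hprofile.isNullIshimoriAt hκ (by ring)

theorem isCrossSolution_wave (hκ : 0 < κ) (hS : ∀ ε : SignType, IsProfile k b c (ε * μ) κ (S ε)) :
    IsCrossSolution (κ / 2) (fun σ => (b + σ * c) / 2) (waveRegularPart k S) (waveSpin k μ c S)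
      (wavePotential k c b S) where
  spin := crossRegular_waveSpin_sub hκ hS
  regular_part := crossRegular_waveRegularPart hκ hS
  potential_eq _ hp := wavePotential_eq hp
  isNullIshimoriAt _ hp := isNullIshimoriAt_wave hκ hS hp

end ConeWave

theorem sqrt_dot3_self_le (v : Fin 3 → ℝ) : Real.sqrt (dot3 v v) ≤ 2 * ‖v‖ := by
  have hsq : ∀ i, v i * v i ≤ ‖v‖ * ‖v‖ := fun i =>
    (abs_mul_abs_self _).ge.trans (mul_self_le_mul_self (abs_nonneg _) (norm_le_pi_norm v i))
  refine Real.sqrt_le_iff.2 ⟨by positivity, ?_⟩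
  rw [dot3]
  nlinarith [hsq 0, hsq 1, hsq 2, norm_nonneg v]

theorem CrossRegular.exists_norm_le {E : Type*} [NormedAddCommGroup E] [NormedSpace ℝ E] {δ : ℝ}
    {f : ℝ × ℝ × ℝ → E} (hf : CrossRegular δ f) (M : ℝ) : ∃ C > 0, ∀ p : ℝ × ℝ × ℝ,
      |p.2.1| ≤ M → |p.2.2| ≤ M → ‖f p‖ ≤ C * |p.2.1 ^ 2 - p.2.2 ^ 2| ^ δ := by
  obtain ⟨C, hC0, hC⟩ := (hf.growth 1 (one_pow 2)).exists_nonneg_bound (M + M)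
  refine ⟨C + 1, by positivity, fun p hx hy => ?_⟩
  by_cases hp : p ∈ offCross
  · have hsum : |nullCoord 1 p| ≤ M + M := by
      rw [nullCoord_apply, one_mul]
      exact (abs_add_le _ _).trans (add_le_add hx hy)
    have hdiff : |nullCoord (-1) p| ≤ M + M := by
      rw [nullCoord_apply, neg_one_mul, ← sub_eq_add_neg]
      exact (abs_sub _ _).trans (add_le_add hx hy)
    rw [← nullCoord_mul_nullCoord_neg (one_pow 2), abs_mul,
      Real.mul_rpow (abs_nonneg _) (abs_nonneg _)]
    exact (hC p hp hsum hdiff).trans (by gcongr; linarith)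
  · rw [hf.eq_zero p hp, norm_zero]
    positivity

theorem contDiffOn_comp_log {f : ℝ → ℝ} (hf : ContDiff ℝ (⊤ : ℕ∞) f) :
    ContDiffOn ℝ (⊤ : ℕ∞) (f ∘ Real.log) (Ioi 0) :=
  hf.comp_contDiffOn (Real.contDiffOn_log.mono fun _ ha => (mem_Ioi.1 ha).ne')

namespace IsProfile

variable {k b c ν κ : ℝ} {S : ℝ → ℝ} (h : IsProfile k b c ν κ S)
include h

theorem tendsto_comp_log (hκ : 0 < κ) : Tendsto (S ∘ Real.log) (nhdsWithin 0 (Ioi 0)) (nhds 0) :=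
  (h.tendsto hκ).comp Real.tendsto_log_nhdsGT_zero

theorem isBigO_comp_log : (S ∘ Real.log) =O[nhdsWithin 0 (Ioi 0)] fun a => a ^ κ := by
  refine (h.isBigO.comp_tendsto Real.tendsto_log_nhdsGT_zero).congr' .rfl ?_
  filter_upwards [self_mem_nhdsWithin] with a ha
  rw [Function.comp_apply, Real.rpow_def_of_pos ha, mul_comm]

theorem exists_comp_log_ne_zero : ∃ a > 0, (S ∘ Real.log) a ≠ 0 := by
  obtain ⟨τ, hτ⟩ := h.exists_ne_zero
  exact ⟨Real.exp τ, Real.exp_pos τ, by simpa using hτ⟩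

end IsProfile

/-- Main Theorem 1: existence of nontrivial `(μ,k,c)`-equivariant standing waves of the
Ishimori system with target `S²` which are weak solutions, given `c² < −4(k² + bk)`;
the spin is continuous, Hölder `C^κ` up to the cross `{|x| = |y|}`, and `(u,φ)` is
smooth and solves the system pointwise off the cross. -/
theorem stmt12 (μ k c b : ℝ) (hμ : μ ≠ 0) (hk : k ≠ 0) (hc : c ≠ 0)
    (hb : c ^ 2 < -4 * (k ^ 2 + b * k)) :
    ∃ sh βh sv βv : ℝ → ℝ,
      ContDiffOn ℝ (⊤ : ℕ∞) sh (Ioi 0) ∧ ContDiffOn ℝ (⊤ : ℕ∞) βh (Ioi 0) ∧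
      ContDiffOn ℝ (⊤ : ℕ∞) sv (Ioi 0) ∧ ContDiffOn ℝ (⊤ : ℕ∞) βv (Ioi 0) ∧
      Tendsto sh (nhdsWithin 0 (Ioi 0)) (nhds 0) ∧
      Tendsto sv (nhdsWithin 0 (Ioi 0)) (nhds 0) ∧
      (∃ a > (0:ℝ), sh a ≠ 0) ∧ (∃ a > (0:ℝ), sv a ≠ 0) ∧
      sh =O[nhdsWithin 0 (Ioi 0)]
        (fun a : ℝ => a ^ (Real.sqrt (-(k ^ 2 + b * k) - c ^ 2 / 4))) ∧
      sv =O[nhdsWithin 0 (Ioi 0)]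
        (fun a : ℝ => a ^ (Real.sqrt (-(k ^ 2 + b * k) - c ^ 2 / 4))) ∧
      IsWeakIshimori univ (uDef μ k sh βh sv βv) (φDef k c b sh sv) ∧
      (∀ p : ℝ × ℝ × ℝ, dot3 (uDef μ k sh βh sv βv p) (uDef μ k sh βh sv βv p) = 1) ∧
      Continuous (uDef μ k sh βh sv βv) ∧
      (∀ M > (0:ℝ), ∃ C > (0:ℝ), ∀ t x y : ℝ, |x| ≤ M → |y| ≤ M →
        Real.sqrt (dot3 (uDef μ k sh βh sv βv (t, x, y) - e0)
            (uDef μ k sh βh sv βv (t, x, y) - e0))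
          ≤ C * |x ^ 2 - y ^ 2| ^ (Real.sqrt (-(k ^ 2 + b * k) - c ^ 2 / 4) / 2)) ∧
      (∀ t x y : ℝ, |x| ≠ |y| →
        ContDiffAt ℝ (⊤ : ℕ∞) (uDef μ k sh βh sv βv) (t, x, y) ∧
        ContDiffAt ℝ (⊤ : ℕ∞) (φDef k c b sh sv) (t, x, y) ∧
        pdV et (uDef μ k sh βh sv βv) (t, x, y)
          = cross3 (uDef μ k sh βh sv βv (t, x, y))
              (pdV ex (pdV ex (uDef μ k sh βh sv βv)) (t, x, y)
                - pdV ey (pdV ey (uDef μ k sh βh sv βv)) (t, x, y))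
            + pdR ex (φDef k c b sh sv) (t, x, y) • pdV ey (uDef μ k sh βh sv βv) (t, x, y)
            - pdR ey (φDef k c b sh sv) (t, x, y)
                • pdV ex (uDef μ k sh βh sv βv) (t, x, y) ∧
        pdR ex (pdR ex (φDef k c b sh sv)) (t, x, y)
            - pdR ey (pdR ey (φDef k c b sh sv)) (t, x, y)
          = -2 * dot3 (uDef μ k sh βh sv βv (t, x, y))
              (cross3 (pdV ex (uDef μ k sh βh sv βv) (t, x, y))
                (pdV ey (uDef μ k sh βh sv βv) (t, x, y)))) := by
  have hκ_sq_pos : 0 < -(k ^ 2 + b * k) - c ^ 2 / 4 := by linarith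
  set κ := Real.sqrt (-(k ^ 2 + b * k) - c ^ 2 / 4)
  have hκ : 0 < κ := Real.sqrt_pos.2 hκ_sq_pos
  choose S hS using fun ε : SignType =>
    exists_isProfile hc hκ (Real.sq_sqrt hκ_sq_pos.le) ((ε : ℝ) * μ)
  have hh := hS 1
  have hv := hS (-1)
  have hsol := isCrossSolution_wave hκ hS
  refine ⟨_, _, _, _, contDiffOn_comp_log hh.contDiff, contDiffOn_comp_log hh.contDiff_phase,
    contDiffOn_comp_log hv.contDiff, contDiffOn_comp_log hv.contDiff_phase,
    hh.tendsto_comp_log hκ, hv.tendsto_comp_log hκ, hh.exists_comp_log_ne_zero,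
    hv.exists_comp_log_ne_zero, hh.isBigO_comp_log, hv.isBigO_comp_log, ?_⟩
  rw [uDef_comp_log_eq_waveSpin, φDef_comp_log_eq_wavePotential]
  refine ⟨hsol.isWeakIshimori (half_pos hκ), dot3_waveSpin k μ c S,
    ((hsol.spin.continuous (half_pos hκ)).add continuous_const).congr fun _ => sub_add_cancel _ _,
    fun M _ => ?_, fun t x y hxy => ?_⟩
  · obtain ⟨C, hC0, hC⟩ := hsol.spin.exists_norm_le M
    exact ⟨2 * C, by positivity, fun t x y hx hy => (sqrt_dot3_self_le _).trans <| by
      linarith [hC (t, x, y) hx hy]⟩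
  · exact ⟨hsol.contDiffAt_spin hxy, hsol.contDiffAt_potential hxy, hsol.pdV_et_eq hxy,
      hsol.pdR_ex_pdR_ex_sub hxy⟩
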